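/- arXiv:1111.5458 — 4 statements merged into one kernel-verified Lean document; each statement's English description precedes it below -/
import Mathlib

section
/- If G is a finite simple graph with |V(G)| ≤ χ(G) + √(χ(G)), then χ(G) = ch^OL(G), i.e., the on-line choice number of G equals its chromatic number. -/
variable {V : Type} [Fintype V] [DecidableEq V]

/-- Approximations to on-line `f`-choosability of the subgraph of `G` induced on `S`:
`OnlineChoosableAux G n S f` says that the defining recursion certifies choosability
within `n` unfoldings. -/
def OnlineChoosableAux (G : SimpleGraph V) : ℕ → Finset V → (V → ℕ) → Prop
  | 0, _S, _f => False
  | n + 1, S, f =>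
      ((∀ u ∈ S, ∀ v ∈ S, ¬ G.Adj u v) ∧ ∀ v ∈ S, 1 ≤ f v) ∨
      ((∃ u ∈ S, ∃ v ∈ S, G.Adj u v) ∧
        ∀ U : Finset V, U ⊆ S → U.Nonempty →
          ∃ I : Finset V, I ⊆ U ∧ (∀ u ∈ I, ∀ v ∈ I, ¬ G.Adj u v) ∧
            OnlineChoosableAux G n (S \ I) (fun v => f v - if v ∈ U then 1 else 0))

/-- The subgraph of `G` induced on `S` is on-line `f`-choosable: the least fixed point of
the recursion “if edgeless then `f ≥ 1` everywhere, else for every nonempty `U ⊆ S`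
there is an independent `I ⊆ U` with `G - I` on-line `(f - δ_U)`-choosable”. -/
def OnlineChoosable (G : SimpleGraph V) (S : Finset V) (f : V → ℕ) : Prop :=
  ∃ n, OnlineChoosableAux G n S f

/-- The on-line choice number: least `k` such that `G` is on-line `k`-choosable. -/
noncomputable def onlineChoiceNumber (G : SimpleGraph V) : ℕ :=
  sInf {k | OnlineChoosable G Finset.univ (fun _ => k)}

/-- The chromatic number of `G` as a natural number. -/
noncomputable def chromNum (G : SimpleGraph V) : ℕ := sInf {n | G.Colorable n}

/-!
Fix a colouring with `k = χ(G)` colours; all its classes are nonempty, so only few vertices are in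
excess of one per class. Painter distinguishes the large classes, whose set of colours is `B`, from
the remaining singleton classes, and maintains two properties: the singletons satisfy a Hall-type
condition ensuring that they can be coloured one at a time with the tokens beyond the first `|B|`,
and every nonempty part `X` of a large class owns at least `(|X| - 1)(|S| - 1) + |B|` tokens, where
`S` is the set of uncoloured vertices. A vertex with as many tokens as there are uncoloured vertices
can be ignored, so a large class is dealt with as soon as its vertices outside Lister's set are all
that rich. If no class is, a single vertex is coloured: the lower bound on the tokens drops by
`|X| - 1`, which pays for the round unless `X` lies inside Lister's set, and then adjoining to `X` a
poor vertex of its class shows that `X` has a token to spare. The hypothesis `|V| ≤ k + √k` is what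
makes the bound hold at the start.
-/

section Game

open Finset

variable {α : Type*} [DecidableEq α] {G : SimpleGraph α} {S U X : Finset α} {f g : α → ℕ} {v : α}

/-- The token count `f - δ_U` left once every vertex of `U` has paid one token. The subtraction
is truncated: a vertex without tokens pays nothing. -/
def spendTokens (f : α → ℕ) (U : Finset α) : α → ℕ :=
  fun v => f v - if v ∈ U then 1 else 0

theorem spendTokens_of_mem (hv : v ∈ U) : spendTokens f U v = f v - 1 := by
  simp only [spendTokens, if_pos hv]

theorem spendTokens_of_notMem (hv : v ∉ U) : spendTokens f U v = f v := by
  simp only [spendTokens, if_neg hv, Nat.sub_zero]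

theorem le_spendTokens_add_one (f : α → ℕ) (U : Finset α) (v : α) :
    f v ≤ spendTokens f U v + 1 := by
  unfold spendTokens
  split_ifs <;> omega

theorem sum_le_sum_spendTokens_add_card (X U : Finset α) (f : α → ℕ) :
    ∑ x ∈ X, f x ≤ ∑ x ∈ X, spendTokens f U x + #{x ∈ X | x ∈ U} := by
  rw [card_filter, ← sum_add_distrib]
  exact sum_le_sum fun x _ => by unfold spendTokens; omega

theorem le_sum_spendTokens {p q b : ℕ} (hpq : p < q)
    (h : (#X - 1) * q + b + #{x ∈ X | x ∈ U} < ∑ x ∈ X, f x + #X) :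
    (#X - 1) * p + b ≤ ∑ x ∈ X, spendTokens f U x := by
  have hloss := sum_le_sum_spendTokens_add_card X U f
  have hmul : (#X - 1) * p + (#X - 1) ≤ (#X - 1) * q := Nat.mul_le_mul_left _ hpq
  omega

/-- Painter wins the on-line `f`-list colouring game on the uncoloured vertices `S` while colouring
at least one vertex in every round and never letting an uncoloured vertex run out of tokens. The
first condition makes the recursion well-founded, so that no bound on the number of rounds is
needed. -/
def PainterWins (G : SimpleGraph α) (S : Finset α) (f : α → ℕ) : Prop :=
  (∀ v ∈ S, 1 ≤ f v) ∧
    ∀ U, (hU : U ⊆ S) → U.Nonempty → ∃ I, ∃ (_ : I ⊆ U) (_ : I.Nonempty),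
        G.IsIndepSet (I : Set α) ∧ PainterWins G (S \ I) (spendTokens f U)
termination_by #S
decreasing_by exact card_lt_card (sdiff_ssubset (‹I ⊆ U›.trans hU) ‹I.Nonempty›)

theorem painterWins_iff : PainterWins G S f ↔
    (∀ v ∈ S, 1 ≤ f v) ∧ ∀ U ⊆ S, U.Nonempty →
      ∃ I ⊆ U, I.Nonempty ∧ G.IsIndepSet (I : Set α) ∧
        PainterWins G (S \ I) (spendTokens f U) := by
  rw [PainterWins]
  simp only [exists_prop]

theorem card_adj_sdiff_lt_spendTokens [DecidableRel G.Adj] {I : Finset α} {y : α} (hIS : I ⊆ S)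
    (hy : #{v ∈ S | G.Adj y v} < f y) (hI : y ∈ U → ∃ v ∈ I, G.Adj y v) :
    #{v ∈ S \ I | G.Adj y v} < spendTokens f U y := by
  have hsub : {v ∈ S \ I | G.Adj y v} ⊆ {v ∈ S | G.Adj y v} :=
    filter_subset_filter _ sdiff_subset
  by_cases hyU : y ∈ U
  · obtain ⟨v, hvI, hyv⟩ := hI hyU
    have hlt : #{v ∈ S \ I | G.Adj y v} < #{v ∈ S | G.Adj y v} :=
      card_lt_card <| (ssubset_iff_of_subset hsub).2
        ⟨v, mem_filter.2 ⟨hIS hvI, hyv⟩, by simp [hvI]⟩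
    rw [spendTokens_of_mem hyU]
    omega
  · rw [spendTokens_of_notMem hyU]
    exact (card_le_card hsub).trans_lt hy

namespace PainterWins

theorem mono (h : PainterWins G S f) (hfg : ∀ v ∈ S, f v ≤ g v) : PainterWins G S g := by
  induction S using Finset.strongInduction generalizing f g with
  | H S ih =>
    obtain ⟨hpos, hreply⟩ := painterWins_iff.1 h
    refine painterWins_iff.2 ⟨fun v hv => (hpos v hv).trans (hfg v hv), fun U hU hne => ?_⟩
    obtain ⟨I, hIU, hI, hindep, hwin⟩ := hreply U hU hne
    refine ⟨I, hIU, hI, hindep, ih _ (sdiff_ssubset (hIU.trans hU) hI) hwin fun v hv => ?_⟩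
    exact Nat.sub_le_sub_right (hfg v (mem_sdiff.1 hv).1) _

/-- Painter answers on `S` as before and colours `y` too whenever this is possible. A round in which
`y` pays a token without being coloured costs it an uncoloured neighbour. -/
theorem insert_of_card_adj_lt [DecidableRel G.Adj] {y : α} (h : PainterWins G S f)
    (hy : #{v ∈ S | G.Adj y v} < f y) : PainterWins G (insert y S) f := by
  induction S using Finset.strongInduction generalizing f with
  | H S ih =>
    by_cases hyS : y ∈ S
    · rwa [insert_eq_of_mem hyS]
    obtain ⟨hpos, hreply⟩ := painterWins_iff.1 h
    refine painterWins_iff.2 ⟨(forall_mem_insert _ _ _).2 ⟨by omega, hpos⟩, fun U hU hne => ?_⟩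
    have hspend (v) (hv : v ∈ S) : spendTokens f (U.erase y) v = spendTokens f U v := by
      simp only [spendTokens, mem_erase, ne_of_mem_of_not_mem hv hyS, ne_eq, not_false_eq_true,
        true_and]
    obtain hUy | hUy := (U.erase y).eq_empty_or_nonempty
    · obtain rfl : U = {y} := ((erase_eq_empty_iff U y).1 hUy).resolve_left hne.ne_empty
      refine ⟨{y}, Subset.rfl, hne, by simp, ?_⟩
      rw [insert_sdiff_of_mem _ (mem_singleton_self y),
        sdiff_eq_self_of_disjoint (disjoint_singleton_right.2 hyS)]
      exact h.mono fun v hv =>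
        (spendTokens_of_notMem (notMem_singleton.2 (ne_of_mem_of_not_mem hv hyS))).ge
    obtain ⟨I, hIU, hI, hindep, hwin⟩ := hreply _ (subset_insert_iff.1 hU) hUy
    have hIS : I ⊆ S := hIU.trans (subset_insert_iff.1 hU)
    have hyI : y ∉ I := fun hyI => hyS (hIS hyI)
    replace hwin : PainterWins G (S \ I) (spendTokens f U) :=
      hwin.mono fun v hv => (hspend v (mem_sdiff.1 hv).1).le
    by_cases hcolour : y ∈ U ∧ ∀ v ∈ I, ¬G.Adj y v
    · refine ⟨insert y I, insert_subset hcolour.1 (hIU.trans (erase_subset y U)),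
        insert_nonempty y I, ?_, ?_⟩
      · rw [coe_insert]
        exact hindep.insert_of_notMem hyI fun v hv =>
          ⟨hcolour.2 v hv, fun hvy => hcolour.2 v hv hvy.symm⟩
      · rwa [insert_sdiff_insert, sdiff_insert, erase_eq_of_notMem fun hy => hyS (mem_sdiff.1 hy).1]
    · refine ⟨I, hIU.trans (erase_subset y U), hI, hindep, ?_⟩
      rw [insert_sdiff_of_notMem _ hyI]
      refine ih _ (sdiff_ssubset hIS hI) hwin ?_
      exact card_adj_sdiff_lt_spendTokens hIS hy fun hyU => by simpa [hyU] using hcolour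

theorem union_of_card_le {R : Finset α} (h : PainterWins G S f)
    (hR : ∀ y ∈ R, #(S ∪ R) ≤ f y) : PainterWins G (S ∪ R) f := by
  classical
  induction R using Finset.induction_on with
  | empty => rwa [union_empty]
  | insert y R _ ih =>
    rw [union_insert] at hR ⊢
    by_cases hy : y ∈ S ∪ R
    · rw [insert_eq_of_mem hy] at hR ⊢
      exact ih fun z hz => hR z (mem_insert_of_mem hz)
    have hcard := card_insert_of_notMem hy
    refine (ih fun z hz => ?_).insert_of_card_adj_lt ?_
    · have := hR z (mem_insert_of_mem hz)
      omega
    · have := hR y (mem_insert_self y R)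
      have := card_filter_le (S ∪ R) (G.Adj y ·)
      omega

end PainterWins

end Game

section Invariant

open Finset

variable {α ι : Type*} [DecidableEq ι] {C : α → ι} {B : Finset ι} {S U X : Finset α} {f : α → ℕ}
  {v : α}

/-- The invariant behind Painter's strategy, for a colouring `C` of `G`, uncoloured vertices `S` and
remaining tokens `f`. Here `B` is the set of colours whose classes may still contain several
uncoloured vertices. By `card_poor_le`, the remaining classes satisfy Hall's condition after `#B`
tokens of each of their vertices are put aside. -/
structure PainterInvariant (C : α → ι) (B : Finset ι) (S : Finset α) (f : α → ℕ) : Prop where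
  injOn : Set.InjOn C {v | v ∈ S ∧ C v ∉ B}
  card_poor_le : ∀ t, #{v ∈ S | C v ∉ B ∧ f v ≤ #B + t} ≤ t
  le_sum : ∀ c ∈ B, ∀ X ⊆ S, X.Nonempty → (∀ x ∈ X, C x = c) →
    (#X - 1) * (#S - 1) + #B ≤ ∑ x ∈ X, f x

namespace PainterInvariant

theorem card_lt_of_notMem (h : PainterInvariant C B S f) (hv : v ∈ S) (hvB : C v ∉ B) :
    #B < f v := by
  by_contra! hlt
  have hpoor := (filter_nonempty_iff (p := fun v => C v ∉ B ∧ f v ≤ #B + 0)).2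
      ⟨v, hv, hvB, hlt⟩
  exact hpoor.card_pos.not_ge (h.card_poor_le 0)

theorem one_le (h : PainterInvariant C B S f) (hv : v ∈ S) : 1 ≤ f v := by
  by_cases hvB : C v ∈ B
  · have hle : #B ≤ f v := by simpa using h.le_sum _ hvB {v} (by simpa using hv)
    exact (card_pos.2 ⟨_, hvB⟩).trans_le hle
  · exact Nat.one_le_of_lt (h.card_lt_of_notMem hv hvB)

variable [DecidableEq α]

theorem filter_ne (h : PainterInvariant C B S f) {w : α} (hw : w ∈ S) (hwB : C w ∈ B)
    (U : Finset α) :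
    PainterInvariant C (B.erase (C w)) {v ∈ S | C v ≠ C w} (spendTokens f U) where
  injOn := h.injOn.mono fun v hv => by
    simp only [mem_filter, mem_erase, Set.mem_ofPred_eq] at hv ⊢
    tauto
  card_poor_le t := by
    refine (card_le_card fun v hv => ?_).trans (h.card_poor_le t)
    simp only [mem_filter, mem_erase, not_and] at hv ⊢
    refine ⟨hv.1.1, hv.2.1 hv.1.2, ?_⟩
    have := le_spendTokens_add_one f U v
    have := card_erase_add_one hwB
    omega
  le_sum c hc X hX hne hXc := by
    have hlt : #{v ∈ S | C v ≠ C w} < #S :=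
      card_lt_card (filter_ssubset.2 ⟨w, hw, by simp⟩)
    have hpos := hne.card_pos.trans_le (card_le_card hX)
    have hsum := h.le_sum c (mem_of_mem_erase hc) X (hX.trans (filter_subset _ S)) hne hXc
    have hXU := card_filter_le X (· ∈ U)
    have hB := card_erase_add_one hwB
    exact le_sum_spendTokens (q := #S - 1) (by omega) (by omega)

theorem card_poor_erase_le (h : PainterInvariant C B S f) (hv : v ∈ S)
    (hmin : ∀ u ∈ U, C u ∉ B → C v ∉ B ∧ f v ≤ f u) (t : ℕ) :
    #{u ∈ S.erase v | C u ∉ B ∧ spendTokens f U u ≤ #B + t} ≤ t := by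
  by_cases hvt : C v ∉ B ∧ f v ≤ #B + (t + 1)
  · have hmem : v ∈ {u ∈ S | C u ∉ B ∧ f u ≤ #B + (t + 1)} := mem_filter.2 ⟨hv, hvt⟩
    have hcard := card_erase_add_one hmem
    have hle := h.card_poor_le (t + 1)
    refine (card_le_card fun u hu => ?_).trans (Nat.succ_le_succ_iff.1 (hcard.trans_le hle))
    simp only [mem_filter, mem_erase] at hu ⊢
    have := le_spendTokens_add_one f U u
    exact ⟨hu.1.1, hu.1.2, hu.2.1, by omega⟩
  · refine (card_le_card fun u hu => ?_).trans (h.card_poor_le t)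
    simp only [mem_filter, mem_erase] at hu ⊢
    obtain ⟨⟨-, huS⟩, huB, hut⟩ := hu
    have huU : u ∉ U := fun huU => by
      have hvu := hmin u huU huB
      have := le_spendTokens_add_one f U u
      exact hvt ⟨hvu.1, by omega⟩
    exact ⟨huS, huB, (spendTokens_of_notMem (f := f) huU).ge.trans hut⟩

theorem le_sum_erase (h : PainterInvariant C B S f) (hv : v ∈ S)
    (hpoor : ∀ w ∈ U, C w ∈ B → ∃ y ∈ S, y ∉ U ∧ C y = C w ∧ f y < #S - 1) {c : ι} (hc : c ∈ B)
    (hX : X ⊆ S.erase v) (hne : X.Nonempty) (hXc : ∀ x ∈ X, C x = c) :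
    (#X - 1) * (#(S.erase v) - 1) + #B ≤ ∑ x ∈ X, spendTokens f U x := by
  have hXS : X ⊆ S := hX.trans (erase_subset v S)
  have hcard := card_erase_add_one hv
  have hX1 := hne.card_pos
  have hpos := hX1.trans_le (card_le_card hX)
  refine le_sum_spendTokens (q := #S - 1) (by omega) ?_
  by_cases hXU : X ⊆ U
  · obtain ⟨x, hx⟩ := hne
    obtain ⟨y, hyS, hyU, hyx, hfy⟩ := hpoor x (hXU hx) (hXc x hx ▸ hc)
    have hyX : y ∉ X := fun hyX => hyU (hXU hyX)
    have hsum := h.le_sum c hc (insert y X) (insert_subset hyS hXS) (insert_nonempty y X)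
      ((forall_mem_insert _ _ _).2 ⟨hyx.trans (hXc x hx), hXc⟩)
    rw [card_insert_of_notMem hyX, sum_insert hyX, Nat.add_sub_cancel] at hsum
    have hmul : (#X - 1) * (#S - 1) + (#S - 1) = #X * (#S - 1) := by
      rw [← Nat.succ_mul, Nat.succ_eq_add_one, Nat.sub_add_cancel hX1]
    have hXU := card_filter_le X (· ∈ U)
    omega
  · have hsum := h.le_sum c hc X hXS hne hXc
    have hlt : #{x ∈ X | x ∈ U} < #X :=
      card_lt_card (filter_ssubset.2 (not_subset.1 hXU))
    omega

theorem exists_erase (h : PainterInvariant C B S f) (hU : U ⊆ S) (hne : U.Nonempty)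
    (hpoor : ∀ w ∈ U, C w ∈ B → ∃ y ∈ S, y ∉ U ∧ C y = C w ∧ f y < #S - 1) :
    ∃ v ∈ U, PainterInvariant C B (S.erase v) (spendTokens f U) := by
  obtain ⟨v, hvU, hmin⟩ : ∃ v ∈ U, ∀ u ∈ U, C u ∉ B → C v ∉ B ∧ f v ≤ f u := by
    obtain hempty | hsmall := {u ∈ U | C u ∉ B}.eq_empty_or_nonempty
    · obtain ⟨v, hv⟩ := hne
      exact ⟨v, hv, fun u hu huB => (filter_eq_empty_iff.1 hempty hu huB).elim⟩
    · obtain ⟨v, hv, hmin⟩ := exists_min_image _ f hsmall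
      obtain ⟨hvU, hvB⟩ := mem_filter.1 hv
      exact ⟨v, hvU, fun u hu huB => ⟨hvB, hmin u (mem_filter.2 ⟨hu, huB⟩)⟩⟩
  exact ⟨v, hvU,
    { injOn := h.injOn.mono fun _ => And.imp_left mem_of_mem_erase
      card_poor_le := h.card_poor_erase_le (hU hvU) hmin
      le_sum := fun c hc X => h.le_sum_erase (hU hvU) hpoor hc }⟩

/-- If the rest of some large class met by `U` is rich, Painter colours the part of that class in
`U` and sets the rest aside. Otherwise every large class met by `U` has a poor vertex outside `U`,
so that colouring one poorest singleton, or any vertex if `U` meets no singleton, is safe. -/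
theorem painterWins {G : SimpleGraph α} {C : G.Coloring ι} (h : PainterInvariant C B S f) :
    PainterWins G S f := by
  induction S using Finset.strongInduction generalizing f B with
  | H S ih =>
    refine painterWins_iff.2 ⟨fun v hv => h.one_le hv, fun U hU hne => ?_⟩
    by_cases hrich : ∃ w ∈ U, C w ∈ B ∧ ∀ y ∈ S, y ∉ U → C y = C w → #S - 1 ≤ f y
    · obtain ⟨w, hwU, hwB, hrich⟩ := hrich
      have hwI : w ∈ {v ∈ U | C v = C w} := mem_filter.2 ⟨hwU, rfl⟩
      refine ⟨{v ∈ U | C v = C w}, filter_subset _ U, ⟨w, hwI⟩, ?_, ?_⟩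
      · intro u hu v hv _ huv
        exact C.valid huv ((mem_filter.1 hu).2.trans (mem_filter.1 hv).2.symm)
      have hsplit :
          S \ {v ∈ U | C v = C w} = {v ∈ S | C v ≠ C w} ∪ {v ∈ S \ U | C v = C w} := by
        ext v
        simp only [mem_sdiff, mem_filter, mem_union]
        tauto
      have hlt : #(S \ {v ∈ U | C v = C w}) < #S :=
        card_lt_card (sdiff_ssubset ((filter_subset _ U).trans hU) ⟨w, hwI⟩)
      rw [hsplit] at hlt ⊢
      refine (ih _ (filter_ssubset.2 ⟨w, hU hwU, by simp⟩)
        (h.filter_ne (hU hwU) hwB U)).union_of_card_le fun y hy => ?_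
      obtain ⟨hyS, hyC⟩ := mem_filter.1 hy
      obtain ⟨hyS, hyU⟩ := mem_sdiff.1 hyS
      have := hrich y hyS hyU hyC
      rw [spendTokens_of_notMem hyU]
      omega
    · push Not at hrich
      obtain ⟨v, hvU, hinv⟩ := h.exists_erase hU hne hrich
      refine ⟨{v}, singleton_subset_iff.2 hvU, singleton_nonempty v, by simp, ?_⟩
      rw [← erase_eq]
      exact ih _ (erase_ssubset (hU hvU)) hinv

end PainterInvariant

end Invariant

section InitialPosition

open Finset

variable {α ι : Type*} [Fintype α] [Fintype ι] [DecidableEq ι] {C : α → ι} {B : Finset ι}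

theorem card_fiber_add_card_add_card_le (hC : Function.Surjective C)
    (hB : ∀ b ∈ B, 2 ≤ #{v | C v = b}) {c : ι} (hc : c ∈ B) :
    #{v | C v = c} + #B + Fintype.card ι ≤ Fintype.card α + 2 := by
  have hfiber (b : ι) : 1 ≤ #{v | C v = b} :=
    let ⟨v, hv⟩ := hC b
    card_pos.2 ⟨v, mem_filter.2 ⟨mem_univ v, hv⟩⟩
  have hlarge : #(B.erase c) * 2 ≤ ∑ b ∈ B.erase c, #{v | C v = b} :=
    card_nsmul_le_sum _ _ _ fun b hb => hB b (mem_of_mem_erase hb)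
  have hsmall : #Bᶜ * 1 ≤ ∑ b ∈ Bᶜ, #{v | C v = b} :=
    card_nsmul_le_sum _ _ _ fun b _ => hfiber b
  have hsum : Fintype.card α =
      ∑ b ∈ B.erase c, #{v | C v = b} + #{v | C v = c} + ∑ b ∈ Bᶜ, #{v | C v = b} := by
    rw [sum_erase_add _ _ hc, sum_add_sum_compl, ← card_univ]
    exact card_eq_sum_card_fiberwise fun v _ => mem_univ (C v)
  have hcard := card_erase_add_one hc
  have hcompl := card_add_card_compl B
  omega

theorem mul_pred_add_lt_of_add_le {a b r k : ℕ} (ha : 1 ≤ a) (hab : a + b ≤ r)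
    (hr : r ^ 2 ≤ k) : a * (r - 1) + b < k := by
  calc
    a * (r - 1) + b < a * r + (r - a) * r :=
      add_lt_add_of_lt_of_le (Nat.mul_lt_mul_of_pos_left (by omega) ha)
        ((Nat.le_sub_of_add_le' hab).trans (Nat.le_mul_of_pos_right _ (by omega)))
    _ = r ^ 2 := by rw [← add_mul, add_tsub_cancel_of_le (by omega), sq]
    _ ≤ k := hr

theorem sub_one_mul_add_card_le_mul (hC : Function.Surjective C)
    (hcard : (Fintype.card α - Fintype.card ι) ^ 2 ≤ Fintype.card ι)
    (hB : ∀ b ∈ B, 2 ≤ #{v | C v = b}) {c : ι} (hc : c ∈ B) {X : Finset α} (hX : X.Nonempty)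
    (hXc : ∀ x ∈ X, C x = c) :
    (#X - 1) * (Fintype.card α - 1) + #B ≤ #X * Fintype.card ι := by
  set k := Fintype.card ι
  have hfiber := card_fiber_add_card_add_card_le hC hB hc
  have htwo := hB c hc
  have hBpos := card_pos.2 ⟨c, hc⟩
  have hXle : #X ≤ #{v | C v = c} :=
    card_le_card fun x hx => mem_filter.2 ⟨mem_univ x, hXc x hx⟩
  obtain ⟨r, hr⟩ : ∃ r, Fintype.card α = k + r :=
    Nat.exists_eq_add_of_le (Fintype.card_le_of_surjective C hC)
  rw [hr, Nat.add_sub_cancel_left] at hcard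
  have hclass : (#{v | C v = c} - 1) * (r - 1) + (#B - 1) < k :=
    mul_pred_add_lt_of_add_le (by omega) (by omega) hcard
  have hmul : (#X - 1) * (r - 1) ≤ (#{v | C v = c} - 1) * (r - 1) :=
    Nat.mul_le_mul_right _ (Nat.sub_le_sub_right hXle 1)
  calc
    (#X - 1) * (Fintype.card α - 1) + #B = (#X - 1) * k + ((#X - 1) * (r - 1) + #B) := by
      rw [hr, Nat.add_sub_assoc (by omega), mul_add, add_assoc]
    _ ≤ (#X - 1) * k + k := by omega
    _ = #X * k := by rw [← Nat.succ_mul, Nat.succ_eq_add_one, Nat.sub_add_cancel hX.card_pos]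

theorem PainterInvariant.of_surjective (hC : Function.Surjective C)
    (hcard : (Fintype.card α - Fintype.card ι) ^ 2 ≤ Fintype.card ι) :
    PainterInvariant C {c | 2 ≤ #{v | C v = c}} univ (fun _ => Fintype.card ι) := by
  set B : Finset ι := {c | 2 ≤ #{v | C v = c}}
  have hinj : Set.InjOn C {v | v ∈ univ ∧ C v ∉ B} := by
    rintro u ⟨-, hu⟩ v - huv
    by_contra hne
    refine hu (mem_filter.2 ⟨mem_univ _, one_lt_card.2 ⟨u, ?_, v, ?_, hne⟩⟩) <;> simp [huv]
  refine ⟨hinj, fun t => ?_, fun c hc X _ hX hXc => ?_⟩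
  · by_cases ht : Fintype.card ι ≤ #B + t
    · have hle : #{v | C v ∉ B ∧ Fintype.card ι ≤ #B + t} ≤ #Bᶜ :=
        card_le_card_of_injOn C (fun v hv => by simp_all) (hinj.mono fun v hv => by simp_all)
      have hcompl := card_add_card_compl B
      omega
    · simp [ht]
  · rw [sum_const, smul_eq_mul, card_univ]
    exact sub_one_mul_add_card_le_mul hC hcard (fun b hb => (mem_filter.1 hb).2) hc hX hXc

end InitialPosition

section OnlineChoosable

open Finset

variable {W : Type} [DecidableEq W] {G : SimpleGraph W} {S : Finset W} {f : W → ℕ}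

theorem PainterWins.onlineChoosableAux {n : ℕ} (h : PainterWins G S f) (hn : #S < n) :
    OnlineChoosableAux G n S f := by
  induction n generalizing S f with
  | zero => omega
  | succ n ih =>
    obtain ⟨hpos, hreply⟩ := painterWins_iff.1 h
    by_cases hedge : ∃ u ∈ S, ∃ v ∈ S, G.Adj u v
    · refine Or.inr ⟨hedge, fun U hU hne => ?_⟩
      obtain ⟨I, hIU, hI, hindep, hwin⟩ := hreply U hU hne
      have hlt : #(S \ I) < #S := card_lt_card (sdiff_ssubset (hIU.trans hU) hI)
      exact ⟨I, hIU, fun u hu v hv huv => hindep hu hv huv.ne huv, ih hwin (by omega)⟩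
    · push Not at hedge
      exact Or.inl ⟨hedge, hpos⟩

/-- Presenting everything but `v` in each round never costs `v` a token, nor lets it be coloured. -/
theorem OnlineChoosableAux.one_le {n : ℕ} (h : OnlineChoosableAux G n S f) {v : W} (hv : v ∈ S) :
    1 ≤ f v := by
  induction n generalizing S f with
  | zero => exact h.elim
  | succ n ih =>
    obtain ⟨-, hpos⟩ | ⟨⟨a, ha, b, hb, hab⟩, hreply⟩ := h
    · exact hpos v hv
    have hne : (S.erase v).Nonempty := by
      by_cases hav : a = v
      · exact ⟨b, mem_erase.2 ⟨fun hbv => hab.ne (hav.trans hbv.symm), hb⟩⟩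
      · exact ⟨a, mem_erase.2 ⟨hav, ha⟩⟩
    obtain ⟨I, hI, -, hwin⟩ := hreply (S.erase v) (erase_subset v S) hne
    simpa using ih hwin (mem_sdiff.2 ⟨hv, fun hvI => notMem_erase v S (hI hvI)⟩)

/-- Lister presents all uncoloured vertices in every round; colour each vertex by the number of
rounds that precede its removal. -/
theorem OnlineChoosableAux.exists_coloring {n : ℕ} (h : OnlineChoosableAux G n S f) :
    ∃ c : W → ℕ, (∀ v ∈ S, c v < f v) ∧ ∀ u ∈ S, ∀ v ∈ S, G.Adj u v → c u ≠ c v := by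
  induction n generalizing S f with
  | zero => exact h.elim
  | succ n ih =>
    have hone (v) (hv : v ∈ S) : 1 ≤ f v := h.one_le hv
    obtain ⟨hindep, -⟩ | ⟨⟨a, ha, -⟩, hreply⟩ := h
    · exact ⟨fun _ => 0, hone, fun u hu v hv huv => (hindep u hu v hv huv).elim⟩
    obtain ⟨I, -, hindep, hwin⟩ := hreply S Subset.rfl ⟨a, ha⟩
    obtain ⟨c, hcf, hc⟩ := ih hwin
    refine ⟨fun v => if v ∈ I then 0 else c v + 1, fun v hv => ?_, fun u hu v hv huv => ?_⟩
    · by_cases hvI : v ∈ I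
      · simpa only [if_pos hvI] using Nat.lt_of_succ_le (hone v hv)
      · have hlt := hcf v (mem_sdiff.2 ⟨hv, hvI⟩)
        simp only [if_pos hv, if_neg hvI] at hlt ⊢
        omega
    · by_cases huI : u ∈ I <;> by_cases hvI : v ∈ I
      · exact (hindep u huI v hvI huv).elim
      · simp [huI, hvI]
      · simp [huI, hvI]
      · simpa [huI, hvI] using hc u (mem_sdiff.2 ⟨hu, huI⟩) v (mem_sdiff.2 ⟨hv, hvI⟩) huv

theorem OnlineChoosable.colorable [Fintype W] {k : ℕ}
    (h : OnlineChoosable G univ fun _ => k) : G.Colorable k := by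
  obtain ⟨n, hn⟩ := h
  obtain ⟨c, hck, hc⟩ := hn.exists_coloring
  exact (SimpleGraph.colorable_iff_exists_bdd_nat_coloring k).2
    ⟨SimpleGraph.Coloring.mk c fun {u v} => hc u (mem_univ u) v (mem_univ v),
      fun v => hck v (mem_univ v)⟩

theorem onlineChoosable_of_surjective_coloring [Fintype W] {ι : Type*} [Fintype ι]
    (C : G.Coloring ι) (hC : Function.Surjective C)
    (hcard : (Fintype.card W - Fintype.card ι) ^ 2 ≤ Fintype.card ι) :
    OnlineChoosable G univ fun _ => Fintype.card ι := by
  classical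
  exact ⟨_, (PainterInvariant.of_surjective hC hcard).painterWins.onlineChoosableAux
    (Nat.lt_succ_self _)⟩

end OnlineChoosable

theorem coe_chromNum {W : Type} {G : SimpleGraph W} {n : ℕ} (h : G.Colorable n) :
    (chromNum G : ℕ∞) = G.chromaticNumber :=
  h.chromaticNumber_eq_sInf.symm

theorem sq_sub_le_of_le_add_sqrt {n k : ℕ} (h : (n : ℝ) ≤ k + √k) : (n - k) ^ 2 ≤ k := by
  obtain hnk | hkn := le_total n k
  · simp [Nat.sub_eq_zero_of_le hnk]
  · have hsqrt : ((n - k : ℕ) : ℝ) ≤ √k := by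
      rw [Nat.cast_sub hkn]
      linarith
    exact_mod_cast (Real.le_sqrt (Nat.cast_nonneg _) (Nat.cast_nonneg _)).1 hsqrt

/-- If `|V(G)| ≤ χ(G) + √(χ(G))`, then the on-line choice number of `G` equals its
chromatic number. -/
theorem online_chromatic_choosable_of_card_le_chrom_add_sqrt (G : SimpleGraph V)
    (h : (Fintype.card V : ℝ) ≤ (chromNum G : ℝ) + Real.sqrt (chromNum G)) :
    chromNum G = onlineChoiceNumber G := by
  have hcol : G.Colorable (chromNum G) :=
    Nat.sInf_mem (s := {n | G.Colorable n}) ⟨_, G.colorable_of_fintype⟩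
  obtain ⟨C⟩ := id hcol
  have hC : Function.Surjective C :=
    SimpleGraph.le_chromaticNumber_iff_forall_surjective.1 (coe_chromNum hcol).le C
  have honline : OnlineChoosable G Finset.univ fun _ => chromNum G := by
    simpa only [Fintype.card_fin] using onlineChoosable_of_surjective_coloring C hC
      (by simpa only [Fintype.card_fin] using sq_sub_le_of_le_add_sqrt h)
  have hmem : onlineChoiceNumber G ∈ {k | OnlineChoosable G Finset.univ fun _ => k} :=
    Nat.sInf_mem ⟨_, honline⟩
  exact le_antisymm (Nat.sInf_le (OnlineChoosable.colorable hmem)) (Nat.sInf_le honline)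
end

section
/- If G is a finite simple graph with independence number at most 3 and |V(G)| ≤ 2χ(G), then χ(G) = ch^OL(G), i.e., the on-line choice number of G equals its chromatic number. -/
variable {V : Type} [Fintype V] [DecidableEq V]

/-!
Give every vertex `χ` tokens; a vertex pays one token each time Lister presents it, and Painter
must colour it before it would have to pay without a token. Painter starts from the colour classes
of an optimal colouring. He keeps the classes still to be coloured as parts of size two or three,
and moves the vertices left over from the other classes to two lists along which the token counts
climb like a staircase: such vertices can be coloured one at a time, whatever Lister does.

Let `d` be the number of parts and `N` the number of remaining vertices. The invariant gives every
vertex of a part `d` tokens, every pair inside a part `N` tokens and every triple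
`N + d + |front list|` tokens. It holds at the start because `N ≤ 2χ`. Three situations force
Painter's hand: a part is presented completely, a pair of a triple is presented that holds only `N`
tokens, or a vertex is presented that holds only `d` tokens. He then colours the presented vertices
of that part, and the invariant provides the vertices left over with enough tokens for the lists.
If nothing is forced, a presented vertex on the front list is coloured, else two vertices of a
triple, else a vertex on the back list, else one vertex of a part. Tokens run out eventually, so
every play ends.

Conversely, a Lister who presents all uncoloured vertices in every round forces a proper colouring
with as many colours as there are rounds, so the on-line choice number is at least `χ`.
-/

/-! ### Painter's strategy -/

section Strategy

variable {α : Type*} {f : α → ℕ}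

/-- The entries of a list of vertices dominate a staircase: the `i`-th one, counting from one,
has at least `c + i` tokens. The vertices left over from broken-up parts are kept in such lists. -/
def IsStaircase (f : α → ℕ) : ℕ → List α → Prop
  | _, [] => True
  | c, a :: l => c < f a ∧ IsStaircase f (c + 1) l

theorem isStaircase_append {c : ℕ} {l m : List α} :
    IsStaircase f c (l ++ m) ↔ IsStaircase f c l ∧ IsStaircase f (c + l.length) m := by
  induction l generalizing c with
  | nil => simp [IsStaircase]
  | cons a l ih =>
    simp only [List.cons_append, IsStaircase, ih, List.length_cons, and_assoc,
      Nat.add_assoc, Nat.add_comm 1]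

theorem isStaircase_of_forall_le {c : ℕ} {l : List α} (h : ∀ a ∈ l, c + l.length ≤ f a) :
    IsStaircase f c l := by
  induction l generalizing c with
  | nil => trivial
  | cons a l ih =>
    simp only [List.forall_mem_cons, List.length_cons] at h
    exact ⟨by lia, ih fun b hb => by have := h.2 b hb; lia⟩

theorem IsStaircase.pos {c : ℕ} {l : List α} (h : IsStaircase f c l) {a : α} (ha : a ∈ l) :
    0 < f a := by
  induction l generalizing c with
  | nil => simp at ha
  | cons b l ih =>
    rcases List.mem_cons.1 ha with rfl | ha
    · exact Nat.zero_lt_of_lt h.1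
    · exact ih h.2 ha

/-- The token requirements on a part `P` of size two or three: at least `k` at every vertex, `N`
on every pair, and `T` on the whole of `P` when it is a triple. -/
structure IsRich (f : α → ℕ) (k N T : ℕ) (P : Finset α) : Prop where
  le_apply : ∀ v ∈ P, k ≤ f v
  le_add : ∀ u ∈ P, ∀ v ∈ P, u ≠ v → N ≤ f u + f v
  le_sum : P.card = 3 → T ≤ ∑ v ∈ P, f v

/-- The sum of `|P| - 1` over a family of nonempty parts `P`. -/
def excess (D : Multiset (Finset α)) : ℕ := (D.map fun P => P.card - 1).sum

/-- The data Painter maintains: two ordered lists of vertices that no longer need company, and a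
family of parts of size two or three. Overlaps are harmless, so disjointness is not imposed. -/
structure Position (α : Type*) where
  front : List α
  back : List α
  parts : Multiset (Finset α)

namespace Position

/-- The vertex `v` occurs in the position. -/
def Covers (p : Position α) (v : α) : Prop :=
  v ∈ p.front ∨ v ∈ p.back ∨ ∃ P ∈ p.parts, v ∈ P

/-- The number of vertices of the position, counted with multiplicity when no part is empty. -/
def order (p : Position α) : ℕ :=
  excess p.parts + p.parts.card + p.front.length + p.back.length

/-- Painter's invariant. A vertex of a part is tight if it has only `p.parts.card` tokens; the bound
on pairs puts the partner of a tight vertex above the staircase of `p.back`. The bound on triples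
puts the last vertex of a triple at the end of the staircase of `p.front` once two vertices with
only `p.order` tokens in total are coloured. -/
structure Safe (G : SimpleGraph α) (f : α → ℕ) (p : Position α) : Prop where
  front : IsStaircase f p.parts.card p.front
  back : IsStaircase f (excess p.parts + p.front.length) p.back
  card_mem : ∀ P ∈ p.parts, 2 ≤ P.card ∧ P.card ≤ 3
  indep : ∀ P ∈ p.parts, G.IsIndepSet (P : Set α)
  rich : ∀ P ∈ p.parts,
    IsRich f p.parts.card p.order (p.order + p.parts.card + p.front.length) P

theorem Safe.pos {G : SimpleGraph α} {p : Position α} (h : p.Safe G f) {v : α}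
    (hv : p.Covers v) : 0 < f v := by
  rcases hv with hv | hv | ⟨P, hP, hv⟩
  · exact h.front.pos hv
  · exact h.back.pos hv
  · exact (Multiset.card_pos_iff_exists_mem.2 ⟨P, hP⟩).trans_le ((h.rich P hP).le_apply v hv)

end Position

variable [DecidableEq α] {U : Finset α}

/-- The token function `f - δ_U` that remains after Lister has presented `U`. -/
def spend (f : α → ℕ) (U : Finset α) (v : α) : ℕ := f v - if v ∈ U then 1 else 0

theorem spend_of_mem {v : α} (hv : v ∈ U) : spend f U v = f v - 1 := by simp [spend, hv]

theorem spend_of_notMem {v : α} (hv : v ∉ U) : spend f U v = f v := by simp [spend, hv]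

theorem le_spend_add_one (f : α → ℕ) (U : Finset α) (v : α) : f v ≤ spend f U v + 1 := by
  unfold spend; split_ifs <;> lia

theorem sum_le_sum_spend_add_card_inter (f : α → ℕ) (U P : Finset α) :
    ∑ v ∈ P, f v ≤ ∑ v ∈ P, spend f U v + (P ∩ U).card := by
  rw [← Finset.filter_mem_eq_inter, Finset.card_filter, ← Finset.sum_add_distrib]
  exact Finset.sum_le_sum fun v _ => by unfold spend; lia

theorem sum_spend_lt_sum {S : Finset α} {v : α} (hvS : v ∈ S) (hvU : v ∈ U) (hv : 0 < f v) :
    ∑ u ∈ S, spend f U u < ∑ u ∈ S, f u :=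
  Finset.sum_lt_sum (fun _ _ => Nat.sub_le _ _) ⟨v, hvS, by rw [spend_of_mem hvU]; lia⟩

theorem IsStaircase.spend_of_lt {c c' : ℕ} {l : List α} (h : IsStaircase f c l) (hc : c' < c) :
    IsStaircase (spend f U) c' l := by
  induction l generalizing c c' with
  | nil => trivial
  | cons a l ih =>
    have := le_spend_add_one f U a
    exact ⟨by have := h.1; lia, ih h.2 (by lia)⟩

theorem IsStaircase.spend_of_forall_notMem {c c' : ℕ} {l : List α} (h : IsStaircase f c l)
    (hc : c' ≤ c) (hl : ∀ a ∈ l, a ∉ U) : IsStaircase (spend f U) c' l := by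
  induction l generalizing c c' with
  | nil => trivial
  | cons a l ih =>
    simp only [List.forall_mem_cons] at hl
    exact ⟨by rw [spend_of_notMem hl.1]; exact hc.trans_lt h.1, ih h.2 (by lia) hl.2⟩

theorem IsStaircase.exists_erase_spend {c : ℕ} {l : List α} (h : IsStaircase f c l)
    (hl : ∃ a ∈ l, a ∈ U) : ∃ a ∈ l, a ∈ U ∧ IsStaircase (spend f U) c (l.erase a) := by
  induction l generalizing c with
  | nil => simp at hl
  | cons b l ih =>
    by_cases hb : b ∈ U
    · refine ⟨b, List.mem_cons_self, hb, ?_⟩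
      rw [List.erase_cons_head]
      exact h.2.spend_of_lt (Nat.lt_succ_self c)
    · obtain ⟨a, hal, haU, ha⟩ := ih h.2 (by simpa [hb] using hl)
      have hba : b ≠ a := fun hba => hb (hba ▸ haU)
      refine ⟨a, List.mem_cons_of_mem _ hal, haU, ?_⟩
      rw [List.erase_cons_tail (by simpa using hba)]
      exact ⟨by rw [spend_of_notMem hb]; exact h.1, ha⟩

theorem IsRich.isRich_spend {k N T k' N' T' : ℕ} {P : Finset α} (h : IsRich f k N T P)
    (hk : k' ≤ k) (hN : N' < N) (hvertex : ∀ v ∈ P ∩ U, k' < f v)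
    (hpair : ∀ u ∈ P ∩ U, ∀ v ∈ P ∩ U, u ≠ v → N' + 2 ≤ f u + f v)
    (htriple : P.card = 3 → T' + (P ∩ U).card ≤ T) : IsRich (spend f U) k' N' T' P where
  le_apply v hv := by
    have := h.le_apply v hv
    by_cases hvU : v ∈ U
    · have := hvertex v (Finset.mem_inter.2 ⟨hv, hvU⟩)
      rw [spend_of_mem hvU]; lia
    · rw [spend_of_notMem hvU]; lia
  le_add u hu v hv huv := by
    have := h.le_add u hu v hv huv
    have := le_spend_add_one f U u
    have := le_spend_add_one f U v
    by_cases huU : u ∈ U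
    · by_cases hvU : v ∈ U
      · have := hpair u (Finset.mem_inter.2 ⟨hu, huU⟩) v (Finset.mem_inter.2 ⟨hv, hvU⟩) huv
        lia
      · rw [spend_of_notMem hvU]; lia
    · rw [spend_of_notMem huU]; lia
  le_sum hP := by
    have := h.le_sum hP
    have := htriple hP
    have := sum_le_sum_spend_add_card_inter f U P
    lia

theorem IsRich.isRich_sdiff_spend {k N T N' T' : ℕ} {P : Finset α} (h : IsRich f k N T P)
    (hN : N' ≤ N) (hP : (P \ U).card ≠ 3) : IsRich (spend f U) k N' T' (P \ U) := by
  have hspend : ∀ v ∈ P \ U, v ∈ P ∧ spend f U v = f v := fun v hv =>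
    ⟨Finset.sdiff_subset hv, spend_of_notMem (Finset.mem_sdiff.1 hv).2⟩
  refine ⟨fun v hv => ?_, fun u hu v hv huv => ?_, fun hcard => absurd hcard hP⟩
  · rw [(hspend v hv).2]
    exact h.le_apply v (hspend v hv).1
  · rw [(hspend u hu).2, (hspend v hv).2]
    exact hN.trans (h.le_add u (hspend u hu).1 v (hspend v hv).1 huv)

theorem card_inter_lt_of_not_subset {P : Finset α} (hP : ¬ P ⊆ U) : (P ∩ U).card < P.card :=
  Finset.card_lt_card <| Finset.inter_subset_left.ssubset_of_ne fun h =>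
    hP (Finset.inter_eq_left.1 h)

theorem excess_erase_add {D : Multiset (Finset α)} {P : Finset α} (hP : P ∈ D) :
    excess (D.erase P) + (P.card - 1) = excess D := by
  rw [excess, excess, ← Multiset.sum_map_erase hP, Nat.add_comm]

theorem mem_or_exists_mem_erase {D : Multiset (Finset α)} {v : α} (P : Finset α)
    (hv : ∃ Q ∈ D, v ∈ Q) : v ∈ P ∨ ∃ Q ∈ D.erase P, v ∈ Q := by
  obtain ⟨Q, hQ, hv⟩ := hv
  by_cases hQP : Q = P
  · exact Or.inl (hQP ▸ hv)
  · exact Or.inr ⟨Q, (Multiset.mem_erase_of_ne hQP).2 hQ, hv⟩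

namespace Position

/-- Painter has a reply to `U`: colouring an independent `I ⊆ U` leaves a safe position. -/
def Answerable (G : SimpleGraph α) (f : α → ℕ) (U : Finset α) (p : Position α) : Prop :=
  ∃ I ⊆ U, G.IsIndepSet (I : Set α) ∧
    ∃ q : Position α, q.Safe G (spend f U) ∧ ∀ v ∉ I, p.Covers v → q.Covers v

/-- None of the replies that Painter is forced to give is called for: no part is presented
entirely, no tight vertex is presented, and neither is a pair of some triple with only `p.order`
tokens. -/
structure Unforced (f : α → ℕ) (U : Finset α) (p : Position α) : Prop where
  not_subset : ∀ P ∈ p.parts, ¬ P ⊆ U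
  lt_apply : ∀ P ∈ p.parts, ∀ v ∈ P ∩ U, p.parts.card < f v
  lt_add : ∀ P ∈ p.parts, ∀ u ∈ P ∩ U, ∀ v ∈ P ∩ U, u ≠ v → p.order < f u + f v

variable {G : SimpleGraph α} {p : Position α} {P : Finset α}

/-- Painter colours `P ∩ U`, and the vertices of `P \ U` join the lists. -/
theorem Safe.answerable_of_erase (h : p.Safe G f) (hP : P ∈ p.parts) {q : Position α}
    (hparts : q.parts = p.parts.erase P) (hfront : IsStaircase (spend f U) q.parts.card q.front)
    (hback : IsStaircase (spend f U) (excess q.parts + q.front.length) q.back)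
    (hrich : ∀ Q ∈ p.parts, IsRich (spend f U) q.parts.card q.order
      (q.order + q.parts.card + q.front.length) Q)
    (hcovers : ∀ v, v ∈ p.front ∨ v ∈ p.back ∨ v ∈ P \ U → v ∈ q.front ∨ v ∈ q.back) :
    p.Answerable G f U := by
  have hmem : ∀ Q ∈ q.parts, Q ∈ p.parts := fun Q hQ => Multiset.mem_of_mem_erase (hparts ▸ hQ)
  refine ⟨P ∩ U, Finset.inter_subset_right,
    (h.indep P hP).mono (Finset.coe_subset.2 Finset.inter_subset_left), q,
    ⟨hfront, hback, fun Q hQ => h.card_mem Q (hmem Q hQ), fun Q hQ => h.indep Q (hmem Q hQ),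
      fun Q hQ => hrich Q (hmem Q hQ)⟩, fun v hvI hv => ?_⟩
  rcases hv with hv | hv | hv
  · exact (hcovers v (Or.inl hv)).imp_right Or.inl
  · exact (hcovers v (Or.inr (Or.inl hv))).imp_right Or.inl
  · rcases mem_or_exists_mem_erase P hv with hvP | hv
    · have hvU : v ∉ U := fun hvU => hvI (Finset.mem_inter.2 ⟨hvP, hvU⟩)
      exact (hcovers v (Or.inr (Or.inr (Finset.mem_sdiff.2 ⟨hvP, hvU⟩)))).imp_right Or.inl
    · exact Or.inr (Or.inr (hparts ▸ hv))

theorem Safe.answerable_of_append_back (h : p.Safe G f) (hP : P ∈ p.parts)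
    (hne : (P ∩ U).Nonempty) (hback : ∀ v ∈ P, v ∉ U → p.order ≤ f v + p.parts.card)
    (hrest : 2 ≤ (P ∩ U).card ∨ ∀ Q ∈ p.parts, ¬ Q ⊆ U ∧
      ∀ u ∈ Q ∩ U, ∀ v ∈ Q ∩ U, u ≠ v → p.order < f u + f v) :
    p.Answerable G f U := by
  let q : Position α := ⟨p.front, p.back ++ (P \ U).toList, p.parts.erase P⟩
  have hcard : (p.parts.erase P).card + 1 = p.parts.card := Multiset.card_erase_add_one hP
  have hexcess := excess_erase_add hP
  have hsplit : (P ∩ U).card + (P \ U).card = P.card := Finset.card_inter_add_card_sdiff P U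
  have hpos : 0 < (P ∩ U).card := hne.card_pos
  have htwo := (h.card_mem P hP).1
  have horder : q.order + (P ∩ U).card = p.order := by
    simp only [q, order, List.length_append, Finset.length_toList]; lia
  refine h.answerable_of_erase hP (q := q) rfl (h.front.spend_of_lt ?_)
    (isStaircase_append.2 ⟨h.back.spend_of_lt ?_, isStaircase_of_forall_le fun v hv => ?_⟩)
    (fun Q hQ => (h.rich Q hQ).isRich_spend ?_ ?_ (fun v hv => ?_) (fun u hu v hv huv => ?_)
      fun hQ3 => ?_) ?_
  · lia
  · simp only [q]; lia
  · obtain ⟨hvP, hvU⟩ := Finset.mem_sdiff.1 (Finset.mem_toList.1 hv)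
    have := hback v hvP hvU
    rw [spend_of_notMem hvU]
    simp only [q, order, Finset.length_toList] at *
    lia
  · lia
  · lia
  · have := (h.rich Q hQ).le_apply v (Finset.mem_of_mem_inter_left hv)
    simp only [q]; lia
  · have := (h.rich Q hQ).le_add u (Finset.mem_of_mem_inter_left hu) v
      (Finset.mem_of_mem_inter_left hv) huv
    rcases hrest with hrest | hrest
    · lia
    · have := (hrest Q hQ).2 u hu v hv huv
      lia
  · have hQU : (Q ∩ U).card ≤ (P ∩ U).card + 1 := by
      rcases hrest with hrest | hrest
      · have := Finset.card_le_card (Finset.inter_subset_left (s₁ := Q) (s₂ := U)); lia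
      · have := card_inter_lt_of_not_subset (hrest Q hQ).1; lia
    simp only [q] at *; lia
  · simp only [q, List.mem_append, Finset.mem_toList]
    tauto

theorem Safe.answerable_of_insert_front (h : p.Safe G f) (hP : P ∈ p.parts)
    (hne : (P ∩ U).Nonempty) {w : α} (hw : P \ U = {w}) {A : List α} (hA : A.Perm (w :: p.front))
    (hfront : IsStaircase (spend f U) (p.parts.erase P).card A)
    (hmax : ∀ Q ∈ p.parts, Q.card = 3 → (Q ∩ U).card ≤ (P ∩ U).card)
    (hrest : 2 ≤ (P ∩ U).card ∨ (∀ a ∈ p.back, a ∉ U) ∧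
      ∀ Q ∈ p.parts, ∀ u ∈ Q ∩ U, ∀ v ∈ Q ∩ U, u ≠ v → p.order < f u + f v) :
    p.Answerable G f U := by
  let q : Position α := ⟨A, p.back, p.parts.erase P⟩
  have hcard : (p.parts.erase P).card + 1 = p.parts.card := Multiset.card_erase_add_one hP
  have hexcess := excess_erase_add hP
  have hlength : A.length = p.front.length + 1 := hA.length_eq
  have hsplit : (P ∩ U).card + 1 = P.card := by
    rw [← Finset.card_inter_add_card_sdiff P U, hw, Finset.card_singleton]
  have hpos : 0 < (P ∩ U).card := hne.card_pos
  have horder : q.order + (P ∩ U).card = p.order := by simp only [q, order]; lia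
  refine h.answerable_of_erase hP (q := q) rfl hfront ?_
    (fun Q hQ => (h.rich Q hQ).isRich_spend ?_ ?_ (fun v hv => ?_) (fun u hu v hv huv => ?_)
      fun hQ3 => ?_) ?_
  · rcases hrest with hrest | ⟨hback, -⟩
    · exact h.back.spend_of_lt (by simp only [q]; lia)
    · exact h.back.spend_of_forall_notMem (by simp only [q]; lia) hback
  · lia
  · lia
  · have := (h.rich Q hQ).le_apply v (Finset.mem_of_mem_inter_left hv)
    simp only [q]; lia
  · have := (h.rich Q hQ).le_add u (Finset.mem_of_mem_inter_left hu) v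
      (Finset.mem_of_mem_inter_left hv) huv
    rcases hrest with hrest | ⟨-, hpair⟩
    · lia
    · have := hpair Q hQ u hu v hv huv
      lia
  · have := hmax Q hQ hQ3
    simp only [q] at *; lia
  · simp only [q, hA.mem_iff, hw, Finset.mem_singleton, List.mem_cons]
    tauto

theorem Safe.answerable_of_cons_front (h : p.Safe G f) (hP : P ∈ p.parts)
    (hne : (P ∩ U).Nonempty) {w : α} (hw : P \ U = {w}) (hfront : ∀ a ∈ p.front, a ∉ U)
    (hmax : ∀ Q ∈ p.parts, Q.card = 3 → (Q ∩ U).card ≤ (P ∩ U).card)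
    (hrest : 2 ≤ (P ∩ U).card ∨ (∀ a ∈ p.back, a ∉ U) ∧
      ∀ Q ∈ p.parts, ∀ u ∈ Q ∩ U, ∀ v ∈ Q ∩ U, u ≠ v → p.order < f u + f v) :
    p.Answerable G f U := by
  have hcard : (p.parts.erase P).card + 1 = p.parts.card := Multiset.card_erase_add_one hP
  obtain ⟨hwP, hwU⟩ := Finset.mem_sdiff.1 (hw ▸ Finset.mem_singleton_self w)
  have hfw : p.parts.card ≤ f w := (h.rich P hP).le_apply w hwP
  refine h.answerable_of_insert_front hP hne hw (List.Perm.refl _) ⟨?_, ?_⟩ hmax hrest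
  · rw [spend_of_notMem hwU]; lia
  · exact h.front.spend_of_forall_notMem hcard.le hfront

theorem Safe.answerable_of_subset (h : p.Safe G f) (hP : P ∈ p.parts) (hPU : P ⊆ U) :
    p.Answerable G f U := by
  have htwo : 2 ≤ (P ∩ U).card := by
    rw [Finset.inter_eq_left.2 hPU]; exact (h.card_mem P hP).1
  exact h.answerable_of_append_back hP (Finset.card_pos.1 (by lia))
    (fun v hv hvU => absurd (hPU hv) hvU) (Or.inl htwo)

theorem Safe.card_inter_le_two (h : p.Safe G f) (hns : ∀ P ∈ p.parts, ¬ P ⊆ U) (hP : P ∈ p.parts) :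
    (P ∩ U).card ≤ 2 := by
  have := (h.card_mem P hP).2
  have := card_inter_lt_of_not_subset (hns P hP)
  lia

theorem Safe.exists_sdiff_eq_singleton (h : p.Safe G f) (hns : ∀ P ∈ p.parts, ¬ P ⊆ U)
    (hP : P ∈ p.parts) {u v : α} (hu : u ∈ P ∩ U) (hv : v ∈ P ∩ U) (huv : u ≠ v) :
    P.card = 3 ∧ P ∩ U = {u, v} ∧ ∃ w, P \ U = {w} := by
  have hsub : {u, v} ⊆ P ∩ U := Finset.insert_subset hu (Finset.singleton_subset_iff.2 hv)
  have hpair : ({u, v} : Finset α).card = 2 := Finset.card_pair huv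
  have hge := Finset.card_le_card hsub
  have hlt := card_inter_lt_of_not_subset (hns P hP)
  have hthree := (h.card_mem P hP).2
  have hsplit := Finset.card_inter_add_card_sdiff P U
  exact ⟨by lia, (Finset.eq_of_subset_of_card_le hsub (by lia)).symm,
    Finset.card_eq_one.1 (by lia)⟩

theorem Safe.answerable_of_add_le (h : p.Safe G f) (hns : ∀ P ∈ p.parts, ¬ P ⊆ U)
    (hP : P ∈ p.parts) {u v : α} (hu : u ∈ P ∩ U) (hv : v ∈ P ∩ U) (huv : u ≠ v)
    (htight : f u + f v ≤ p.order) : p.Answerable G f U := by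
  obtain ⟨hthree, hPU, w, hw⟩ := h.exists_sdiff_eq_singleton hns hP hu hv huv
  have htwo : (P ∩ U).card = 2 := by rw [hPU, Finset.card_pair huv]
  have hcard : (p.parts.erase P).card + 1 = p.parts.card := Multiset.card_erase_add_one hP
  have hwU : w ∉ U := (Finset.mem_sdiff.1 (hw ▸ Finset.mem_singleton_self w)).2
  have hsum : ∑ x ∈ P, f x = f u + f v + f w := by
    rw [← Finset.sum_inter_add_sum_sdiff P U f, hPU, hw, Finset.sum_pair huv, Finset.sum_singleton]
  have hfw := (h.rich P hP).le_sum hthree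
  refine h.answerable_of_insert_front hP ⟨u, hu⟩ hw
    (A := p.front ++ [w]) (List.perm_append_singleton w p.front)
    (isStaircase_append.2 ⟨h.front.spend_of_lt (by lia), ?_, trivial⟩)
    (fun Q hQ _ => htwo ▸ h.card_inter_le_two hns hQ) (Or.inl htwo.ge)
  rw [spend_of_notMem hwU]; lia

theorem Safe.answerable_of_le_card (h : p.Safe G f) (hns : ∀ P ∈ p.parts, ¬ P ⊆ U)
    (hadd : ∀ P ∈ p.parts, ∀ u ∈ P ∩ U, ∀ v ∈ P ∩ U, u ≠ v → p.order < f u + f v)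
    (hP : P ∈ p.parts) {v : α} (hv : v ∈ P ∩ U) (htight : f v ≤ p.parts.card) :
    p.Answerable G f U := by
  obtain ⟨hvP, hvU⟩ := Finset.mem_inter.1 hv
  refine h.answerable_of_append_back hP ⟨v, hv⟩ (fun w hw hwU => ?_)
    (Or.inr fun Q hQ => ⟨hns Q hQ, hadd Q hQ⟩)
  have := (h.rich P hP).le_add v hvP w hw (by rintro rfl; exact hwU hvU)
  lia

theorem Unforced.isRich_spend (hU : p.Unforced f U) (h : p.Safe G f) {k N T : ℕ}
    (hk : k ≤ p.parts.card) (hN : N < p.order) (hP : P ∈ p.parts)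
    (htriple : P.card = 3 → T + (P ∩ U).card ≤ p.order + p.parts.card + p.front.length) :
    IsRich (spend f U) k N T P := by
  refine (h.rich P hP).isRich_spend hk hN (fun v hv => hk.trans_lt (hU.lt_apply P hP v hv))
    (fun u hu v hv huv => ?_) htriple
  have := hU.lt_add P hP u hu v hv huv
  lia

theorem Safe.answerable_singleton (h : p.Safe G f) {a : α} (haU : a ∈ U) {A L : List α}
    (hA : ∀ v ≠ a, v ∈ p.front → v ∈ A) (hL : ∀ v ≠ a, v ∈ p.back → v ∈ L)
    (hfront : IsStaircase (spend f U) p.parts.card A)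
    (hback : IsStaircase (spend f U) (excess p.parts + A.length) L)
    (hrich : ∀ P ∈ p.parts, IsRich (spend f U) p.parts.card (order ⟨A, L, p.parts⟩)
      (order ⟨A, L, p.parts⟩ + p.parts.card + A.length) P) :
    p.Answerable G f U := by
  refine ⟨{a}, Finset.singleton_subset_iff.2 haU, by simp, ⟨A, L, p.parts⟩,
    ⟨hfront, hback, h.card_mem, h.indep, hrich⟩, fun v hv => ?_⟩
  rw [Finset.mem_singleton] at hv
  exact Or.imp (hA v hv) (Or.imp_left (hL v hv))

theorem Safe.answerable_of_mem_front (h : p.Safe G f) (hU : p.Unforced f U)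
    (hfront : ∃ a ∈ p.front, a ∈ U) : p.Answerable G f U := by
  obtain ⟨a, ha, haU, hstair⟩ := h.front.exists_erase_spend hfront
  have hlength : (p.front.erase a).length + 1 = p.front.length := List.length_erase_add_one ha
  have horder : order ⟨p.front.erase a, p.back, p.parts⟩ + 1 = p.order := by
    simp only [order]; lia
  refine h.answerable_singleton haU (fun v hv => (List.mem_erase_of_ne hv).2) (fun _ _ => id)
    hstair (h.back.spend_of_lt (by lia)) fun P hP =>
      hU.isRich_spend h le_rfl (by lia) hP fun _ => ?_
  have := h.card_inter_le_two hU.not_subset hP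
  lia

theorem Safe.answerable_of_mem_back (h : p.Safe G f) (hU : p.Unforced f U)
    (hfront : ∀ a ∈ p.front, a ∉ U)
    (hone : ∀ P ∈ p.parts, (P ∩ U).card ≤ 1) (hback : ∃ a ∈ p.back, a ∈ U) :
    p.Answerable G f U := by
  obtain ⟨a, ha, haU, hstair⟩ := h.back.exists_erase_spend hback
  have hlength : (p.back.erase a).length + 1 = p.back.length := List.length_erase_add_one ha
  have horder : order ⟨p.front, p.back.erase a, p.parts⟩ + 1 = p.order := by
    simp only [order]; lia
  refine h.answerable_singleton haU (fun _ _ => id) (fun v hv => (List.mem_erase_of_ne hv).2)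
    (h.front.spend_of_forall_notMem le_rfl hfront) hstair fun P hP =>
      hU.isRich_spend h le_rfl (by lia) hP fun _ => ?_
  have := hone P hP
  lia

theorem excess_cons_sdiff_erase_add_one {D : Multiset (Finset α)} (hP : P ∈ D)
    (hP3 : P.card = 3) (hPU : (P \ U).card = 2) :
    excess ((P \ U) ::ₘ D.erase P) + 1 = excess D := by
  rw [← excess_erase_add hP, excess, excess, Multiset.map_cons, Multiset.sum_cons, hPU, hP3]
  lia

theorem Safe.answerable_of_triple (h : p.Safe G f) (hU : p.Unforced f U)
    (hfront : ∀ a ∈ p.front, a ∉ U)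
    (hone : ∀ P ∈ p.parts, (P ∩ U).card ≤ 1) (hP : P ∈ p.parts) (hP3 : P.card = 3)
    (hPU : (P ∩ U).card = 1) : p.Answerable G f U := by
  let q : Position α := ⟨p.front, p.back, (P \ U) ::ₘ p.parts.erase P⟩
  have hPsdiff : (P \ U).card = 2 := by
    have := Finset.card_inter_add_card_sdiff P U
    lia
  have hcard : q.parts.card = p.parts.card := by
    rw [Multiset.card_cons, Multiset.card_erase_add_one hP]
  have hexcess : excess q.parts + 1 = excess p.parts :=
    excess_cons_sdiff_erase_add_one hP hP3 hPsdiff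
  have horder : q.order + 1 = p.order := by simp only [order, hcard, q] at *; lia
  have hmem : ∀ Q ∈ q.parts, Q = P \ U ∨ Q ∈ p.parts := fun Q hQ =>
    (Multiset.mem_cons.1 hQ).imp_right Multiset.mem_of_mem_erase
  have hsub : P \ U ⊆ P := Finset.sdiff_subset
  refine ⟨P ∩ U, Finset.inter_subset_right,
    (h.indep P hP).mono (Finset.coe_subset.2 Finset.inter_subset_left), q,
    ⟨hcard ▸ h.front.spend_of_forall_notMem le_rfl hfront,
      h.back.spend_of_lt (by simp only [q] at *; lia), fun Q hQ => ?_, fun Q hQ => ?_,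
      fun Q hQ => ?_⟩, fun v hvI => ?_⟩
  · rcases hmem Q hQ with rfl | hQ
    · lia
    · exact h.card_mem Q hQ
  · rcases hmem Q hQ with rfl | hQ
    · exact (h.indep P hP).mono (Finset.coe_subset.2 hsub)
    · exact h.indep Q hQ
  · rcases hmem Q hQ with rfl | hQ
    · exact hcard ▸ (h.rich P hP).isRich_sdiff_spend (by lia) (by lia)
    · refine hU.isRich_spend h hcard.le (by lia) hQ fun _ => ?_
      have := hone Q hQ
      simp only [q] at *; lia
  · refine Or.imp id (Or.imp id fun hv => ?_)
    rcases mem_or_exists_mem_erase P hv with hvP | ⟨Q, hQ, hvQ⟩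
    · exact ⟨P \ U, Multiset.mem_cons_self _ _, Finset.mem_sdiff.2
        ⟨hvP, fun hvU => hvI (Finset.mem_inter.2 ⟨hvP, hvU⟩)⟩⟩
    · exact ⟨Q, Multiset.mem_cons_of_mem hQ, hvQ⟩

theorem Safe.unforced_or_answerable (h : p.Safe G f) (U : Finset α) :
    p.Unforced f U ∨ p.Answerable G f U := by
  by_cases hns : ∀ P ∈ p.parts, ¬ P ⊆ U
  swap
  · push Not at hns
    obtain ⟨P, hP, hPU⟩ := hns
    exact Or.inr (h.answerable_of_subset hP hPU)
  by_cases hadd : ∀ P ∈ p.parts, ∀ u ∈ P ∩ U, ∀ v ∈ P ∩ U, u ≠ v → p.order < f u + f v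
  swap
  · push Not at hadd
    obtain ⟨P, hP, u, hu, v, hv, huv, hle⟩ := hadd
    exact Or.inr (h.answerable_of_add_le hns hP hu hv huv hle)
  by_cases hvertex : ∀ P ∈ p.parts, ∀ v ∈ P ∩ U, p.parts.card < f v
  · exact Or.inl ⟨hns, hvertex, hadd⟩
  · push Not at hvertex
    obtain ⟨P, hP, v, hv, hle⟩ := hvertex
    exact Or.inr (h.answerable_of_le_card hns hadd hP hv hle)

theorem Safe.answerable_of_one_lt_card_inter (h : p.Safe G f) (hU : p.Unforced f U)
    (hfront : ∀ a ∈ p.front, a ∉ U) (hP : P ∈ p.parts) (hPU : 1 < (P ∩ U).card) :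
    p.Answerable G f U := by
  obtain ⟨u, hu, v, hv, huv⟩ := Finset.one_lt_card.1 hPU
  obtain ⟨-, -, w, hw⟩ := h.exists_sdiff_eq_singleton hU.not_subset hP hu hv huv
  exact h.answerable_of_cons_front hP ⟨u, hu⟩ hw hfront
    (fun Q hQ _ => (h.card_inter_le_two hU.not_subset hQ).trans hPU) (Or.inl hPU)

theorem Safe.answerable_of_mem_part (h : p.Safe G f) (hU : p.Unforced f U)
    (hfront : ∀ a ∈ p.front, a ∉ U) (hback : ∀ a ∈ p.back, a ∉ U)
    (hone : ∀ P ∈ p.parts, (P ∩ U).card ≤ 1) (hP : P ∈ p.parts) {v : α} (hv : v ∈ P ∩ U) :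
    p.Answerable G f U := by
  have hPU : (P ∩ U).card = 1 := (hone P hP).antisymm (Finset.card_pos.2 ⟨v, hv⟩)
  have hsplit := Finset.card_inter_add_card_sdiff P U
  obtain hP2 | hP3 : P.card = 2 ∨ P.card = 3 := by have := h.card_mem P hP; lia
  · obtain ⟨w, hw⟩ := Finset.card_eq_one.1 (show (P \ U).card = 1 by lia)
    exact h.answerable_of_cons_front hP ⟨v, hv⟩ hw hfront
      (fun Q hQ _ => hPU.symm ▸ hone Q hQ) (Or.inr ⟨hback, hU.lt_add⟩)
  · exact h.answerable_of_triple hU hfront hone hP hP3 hPU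

theorem Safe.answerable (h : p.Safe G f) (hU : ∃ v ∈ U, p.Covers v) : p.Answerable G f U := by
  obtain hunforced | hanswer := h.unforced_or_answerable U
  swap
  · exact hanswer
  by_cases hfront : ∃ a ∈ p.front, a ∈ U
  · exact h.answerable_of_mem_front hunforced hfront
  by_cases htwo : ∃ P ∈ p.parts, 1 < (P ∩ U).card
  · obtain ⟨P, hP, hPU⟩ := htwo
    exact h.answerable_of_one_lt_card_inter hunforced (by simpa using hfront) hP hPU
  by_cases hback : ∃ a ∈ p.back, a ∈ U
  · push Not at hfront htwo
    exact h.answerable_of_mem_back hunforced hfront htwo hback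
  push Not at hfront htwo hback
  obtain ⟨v, hvU, hv | hv | ⟨P, hP, hv⟩⟩ := hU
  · exact absurd hvU (hfront v hv)
  · exact absurd hvU (hback v hv)
  · exact h.answerable_of_mem_part hunforced hfront hback htwo hP (Finset.mem_inter.2 ⟨hv, hvU⟩)

end Position

end Strategy

/-! ### The starting position -/

section ColorClass

variable {α ι : Type*} [Fintype α] [DecidableEq ι]

/-- The class of the colour `i` in the colouring `c`. -/
def colorClassFinset (c : α → ι) (i : ι) : Finset α := {v | c v = i}

theorem mem_colorClassFinset {c : α → ι} {i : ι} {v : α} :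
    v ∈ colorClassFinset c i ↔ c v = i :=
  Finset.mem_filter_univ v

theorem sum_card_colorClassFinset (c : α → ι) (s : Finset ι) :
    ∑ i ∈ s, (colorClassFinset c i).card = ({v | c v ∈ s} : Finset α).card :=
  Finset.sum_card_fiberwise_eq_card_filter Finset.univ s c

variable [Fintype ι]

/-- The starting position of Painter's strategy: the classes of size one form the front list, the
larger ones are the parts. -/
noncomputable def classPosition (c : α → ι) : Position α where
  front := ({v | (colorClassFinset c (c v)).card = 1} : Finset α).toList
  back := []
  parts := ({i | 2 ≤ (colorClassFinset c i).card} : Finset ι).val.map (colorClassFinset c)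

theorem classPosition_covers (c : α → ι) (v : α) : (classPosition c).Covers v := by
  have hv : v ∈ colorClassFinset c (c v) := mem_colorClassFinset.2 rfl
  have hpos : 0 < (colorClassFinset c (c v)).card := Finset.card_pos.2 ⟨v, hv⟩
  obtain hone | htwo := Nat.eq_or_lt_of_le hpos
  · exact Or.inl (by simpa [classPosition] using hone.symm)
  · exact Or.inr (Or.inr ⟨_, Multiset.mem_map_of_mem _ ((Finset.mem_filter_univ _).2 htwo), hv⟩)

theorem length_front_classPosition (c : α → ι) :
    (classPosition c).front.length = ({i | (colorClassFinset c i).card = 1} : Finset ι).card := by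
  have hsum := sum_card_colorClassFinset c {i | (colorClassFinset c i).card = 1}
  simp only [Finset.mem_filter_univ] at hsum
  rw [classPosition, Finset.length_toList, ← hsum, Finset.card_eq_sum_ones]
  exact Finset.sum_congr rfl fun i hi => by simpa using hi

theorem length_front_add_card_parts_le (c : α → ι) :
    (classPosition c).front.length + (classPosition c).parts.card ≤ Fintype.card ι := by
  have hdisj : Disjoint ({i | (colorClassFinset c i).card = 1} : Finset ι)
      ({i | 2 ≤ (colorClassFinset c i).card} : Finset ι) :=
    Finset.disjoint_filter.2 fun i _ hone htwo => by lia
  rw [length_front_classPosition, classPosition, Multiset.card_map, Finset.card_val,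
    ← Finset.card_union_of_disjoint hdisj]
  exact Finset.card_le_univ _

theorem excess_parts_add_card_parts (c : α → ι) :
    excess (classPosition c).parts + (classPosition c).parts.card =
      ∑ i with 2 ≤ (colorClassFinset c i).card, (colorClassFinset c i).card := by
  rw [excess, classPosition, Multiset.card_map, Finset.card_val, Finset.card_eq_sum_ones,
    Multiset.map_map]
  refine Finset.sum_add_distrib.symm.trans (Finset.sum_congr rfl fun i hi => ?_)
  have := (Finset.mem_filter_univ i).1 hi
  simp only [Function.comp_apply]
  lia

theorem order_classPosition_le (c : α → ι) : (classPosition c).order ≤ Fintype.card α := by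
  classical
  have hdisj : Disjoint ({v | 2 ≤ (colorClassFinset c (c v)).card} : Finset α)
      ({v | (colorClassFinset c (c v)).card = 1} : Finset α) :=
    Finset.disjoint_filter.2 fun v _ htwo hone => by lia
  have hbig := sum_card_colorClassFinset c {i | 2 ≤ (colorClassFinset c i).card}
  simp only [Finset.mem_filter_univ] at hbig
  rw [Position.order, excess_parts_add_card_parts, hbig]
  simp only [classPosition, Finset.length_toList, List.length_nil, Nat.add_zero]
  rw [← Finset.card_union_of_disjoint hdisj]
  exact Finset.card_le_univ _

theorem safe_classPosition {G : SimpleGraph α} (c : G.Coloring ι)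
    (hclass : ∀ i, (colorClassFinset c i).card ≤ 3)
    (hcard : Fintype.card α ≤ 2 * Fintype.card ι) :
    (classPosition c).Safe G fun _ => Fintype.card ι := by
  have hlists := length_front_add_card_parts_le c
  have horder := order_classPosition_le c
  have hparts : ∀ P ∈ (classPosition c).parts, ∃ i, 2 ≤ P.card ∧ colorClassFinset c i = P := by
    intro P hP
    obtain ⟨i, hi, rfl⟩ := Multiset.mem_map.1 hP
    exact ⟨i, (Finset.mem_filter_univ i).1 hi, rfl⟩
  refine ⟨isStaircase_of_forall_le fun _ _ => by lia, trivial, fun P hP => ?_, fun P hP => ?_,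
    fun P _ => ⟨fun _ _ => by lia, fun _ _ _ _ _ => by lia, fun hP3 => ?_⟩⟩
  · obtain ⟨i, htwo, rfl⟩ := hparts P hP
    exact ⟨htwo, hclass i⟩
  · obtain ⟨i, -, rfl⟩ := hparts P hP
    intro u hu v hv _ huv
    exact c.valid huv ((mem_colorClassFinset.1 hu).trans (mem_colorClassFinset.1 hv).symm)
  · rw [Finset.sum_const, hP3, smul_eq_mul]
    lia

end ColorClass

/-! ### Choosability and colourability -/

theorem colorable_succ_induce {α : Type*} {G : SimpleGraph α} {I S : Set α} {k : ℕ}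
    (hI : G.IsIndepSet I) (h : (G.induce (S \ I)).Colorable k) :
    (G.induce S).Colorable (k + 1) := by
  classical
  obtain ⟨c⟩ := h
  let c' (v : S) : Option (Fin k) := if hv : v.1 ∈ I then none else some (c ⟨v, v.2, hv⟩)
  have hc' : ∀ {u v : S}, G.Adj u v → c' u ≠ c' v := by
    intro u v huv
    by_cases hu : u.1 ∈ I <;> by_cases hv : v.1 ∈ I
    · exact absurd huv (hI hu hv huv.ne)
    · simp [c', hu, hv]
    · simp [c', hu, hv]
    · have := c.valid (v := ⟨u, u.2, hu⟩) (w := ⟨v, v.2, hv⟩) huv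
      simpa [c', hu, hv] using this
  simpa using (SimpleGraph.Coloring.mk (G := G.induce S) c' hc').colorable

section Choosability

omit [Fintype V]
variable {G : SimpleGraph V}

theorem onlineChoosableAux_of_safe {n : ℕ} {S : Finset V} {f : V → ℕ} {p : Position V}
    (hp : p.Safe G f) (hS : ∀ v ∈ S, p.Covers v) (hn : ∑ v ∈ S, f v < n) :
    OnlineChoosableAux G n S f := by
  induction n generalizing S f p with
  | zero => lia
  | succ n ih =>
    by_cases hedge : ∃ u ∈ S, ∃ v ∈ S, G.Adj u v
    swap
    · push Not at hedge
      exact Or.inl ⟨hedge, fun v hv => hp.pos (hS v hv)⟩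
    refine Or.inr ⟨hedge, fun U hUS ⟨x, hx⟩ => ?_⟩
    obtain ⟨I, hIU, hI, q, hq, hcovers⟩ := hp.answerable ⟨x, hx, hS x (hUS hx)⟩
    refine ⟨I, hIU, fun u hu v hv huv => hI hu hv huv.ne huv, ih (f := spend f U) hq ?_ ?_⟩
    · intro v hv
      obtain ⟨hvS, hvI⟩ := Finset.mem_sdiff.1 hv
      exact hcovers v hvI (hS v hvS)
    · calc ∑ v ∈ S \ I, spend f U v
        _ ≤ ∑ v ∈ S, spend f U v := Finset.sum_le_sum_of_subset Finset.sdiff_subset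
        _ < ∑ v ∈ S, f v := sum_spend_lt_sum (hUS hx) hx (hp.pos (hS x (hUS hx)))
        _ ≤ n := Nat.le_of_lt_succ hn

theorem onlineChoosable_of_coloring [Fintype V] {ι : Type*} [Fintype ι] [DecidableEq ι]
    (c : G.Coloring ι) (hclass : ∀ i, (colorClassFinset c i).card ≤ 3)
    (hcard : Fintype.card V ≤ 2 * Fintype.card ι) :
    OnlineChoosable G Finset.univ fun _ => Fintype.card ι :=
  ⟨_, onlineChoosableAux_of_safe (safe_classPosition c hclass hcard)
    (fun v _ => classPosition_covers c v) (Nat.lt_succ_self _)⟩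

theorem colorable_induce_of_onlineChoosableAux {n k : ℕ} {S : Finset V} {f : V → ℕ}
    (h : OnlineChoosableAux G n S f) (hf : ∀ v ∈ S, f v ≤ k) :
    (G.induce (S : Set V)).Colorable k := by
  induction n generalizing k S f with
  | zero => exact h.elim
  | succ n ih =>
    obtain ⟨hedgeless, hpos⟩ | ⟨⟨u, hu, v, hv, huv⟩, hreply⟩ := h
    · exact ⟨SimpleGraph.Coloring.mk
        (fun v => ⟨0, (hpos v v.2).trans (hf v v.2)⟩)
        fun {u v} huv => absurd huv (hedgeless u u.2 v v.2)⟩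
    obtain ⟨I, -, hI, hrest⟩ := hreply S subset_rfl ⟨u, hu⟩
    have hcol : (G.induce ((S \ I : Finset V) : Set V)).Colorable (k - 1) := ih hrest fun w hw => by
      have hwS := (Finset.mem_sdiff.1 hw).1
      have := hf w hwS
      simp only [hwS, if_true]
      lia
    obtain rfl | hk := Nat.eq_zero_or_pos k
    · have hempty : ∀ w ∈ S, w ∈ I := fun w hwS => by
        by_contra hwI
        exact (SimpleGraph.colorable_zero_iff.1 hcol).elim ⟨w, by simp [hwS, hwI]⟩
      exact absurd huv (hI u (hempty u hu) v (hempty v hv))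
    · exact Nat.sub_add_cancel hk ▸ colorable_succ_induce (fun u hu v hv _ => hI u hu v hv)
        (Finset.coe_sdiff S I ▸ hcol)

theorem colorable_of_onlineChoosable [Fintype V] {k : ℕ}
    (h : OnlineChoosable G Finset.univ fun _ => k) : G.Colorable k := by
  obtain ⟨n, hn⟩ := h
  have hcol := colorable_induce_of_onlineChoosableAux hn fun _ _ => le_rfl
  rw [Finset.coe_univ] at hcol
  exact hcol.of_hom G.induceUnivIso.symm.toHom

omit [DecidableEq V] in
theorem colorable_chromNum [Finite V] (G : SimpleGraph V) : G.Colorable (chromNum G) := by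
  cases nonempty_fintype V
  exact Nat.sInf_mem (s := {n | G.Colorable n}) ⟨_, G.colorable_of_fintype⟩

theorem chromNum_le_onlineChoiceNumber [Fintype V] {k : ℕ}
    (h : OnlineChoosable G Finset.univ fun _ => k) : chromNum G ≤ onlineChoiceNumber G :=
  Nat.sInf_le (colorable_of_onlineChoosable
    (Nat.sInf_mem (s := {k | OnlineChoosable G Finset.univ fun _ => k}) ⟨k, h⟩))

end Choosability

theorem online_ohba_of_independence_le_three_general (G : SimpleGraph V)
    (hcol : ∃ c : G.Coloring (Fin (chromNum G)), ∀ i, (colorClassFinset c i).card ≤ 3)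
    (hcard : Fintype.card V ≤ 2 * chromNum G) : chromNum G = onlineChoiceNumber G := by
  obtain ⟨c, hclass⟩ := hcol
  have hchoosable : OnlineChoosable G Finset.univ fun _ => chromNum G := by
    simpa using onlineChoosable_of_coloring c hclass (by simpa using hcard)
  exact (chromNum_le_onlineChoiceNumber hchoosable).antisymm (Nat.sInf_le hchoosable)

/-- On-line Ohba for independence number at most 3: if every independent set of `G` has
size at most 3 and `|V(G)| ≤ 2χ(G)`, then the on-line choice number of `G` equals its
chromatic number. -/
theorem online_ohba_of_independence_le_three (G : SimpleGraph V)
    (hInd : ∀ s : Finset V, (∀ u ∈ s, ∀ v ∈ s, ¬ G.Adj u v) → s.card ≤ 3)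
    (hcard : Fintype.card V ≤ 2 * chromNum G) :
    chromNum G = onlineChoiceNumber G := by
  obtain ⟨c⟩ := colorable_chromNum G
  exact online_ohba_of_independence_le_three_general G
    ⟨c, fun i => hInd _ fun u hu v hv huv => c.valid huv
      ((mem_colorClassFinset.1 hu).trans (mem_colorClassFinset.1 hv).symm)⟩ hcard
end

section
/- If G is a finite simple graph with independence number at most 3 and |V(G)| ≤ 2χ(G) + 1, then χ(G) = ch(G), i.e., the choice number of G equals its chromatic number. -/
variable {V : Type} [Fintype V] [DecidableEq V]

/-- `G` is `f`-choosable: for every list assignment `L` with `|L(v)| = f(v)` for all `v`,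
there is a proper colouring of `G` choosing each colour from the corresponding list. -/
def Choosable (G : SimpleGraph V) (f : V → ℕ) : Prop :=
  ∀ L : V → Finset ℕ, (∀ v, (L v).card = f v) →
    ∃ c : V → ℕ, (∀ v, c v ∈ L v) ∧ ∀ u v, G.Adj u v → c u ≠ c v

/-- The choice number: least `k` such that `G` is `k`-choosable. -/
noncomputable def choiceNumber (G : SimpleGraph V) : ℕ :=
  sInf {k | Choosable G fun _ => k}

/-!
Enlarging `G` along an optimal colouring, one may assume that `G` is complete multipartite with
`χ(G)` parts, each of at most three vertices. Following Kostochka, Stiebitz and Woodall, the claim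
is then strengthened to list sizes that vary with the vertex (`Ohba.PartSystem.Ample`), so that it
survives using up a colour. In a minimal counterexample all lists lie in a set of fewer colours
than there are vertices, by Hall's theorem. Deleting a colour together with a set of
vertices coloured by it, or merging two vertices of a part, then forces first that there are no
parts of two vertices, next that there are no single vertices, and finally that the lists on a part
of three vertices are pairwise disjoint, so that they do not all fit into the set of colours.
Lists of uniform size `χ(G)` are ample up to the case where there is exactly one more part of
three vertices than there are single vertices, which is reduced to ample lists in the same way.
-/

namespace Ohba

open Finset

/-! ### Layered sets -/

section Layered

variable {W : Type*} {f g : W → ℕ} {b b' N : ℕ} {A A' : Finset W} {w : W}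

/-- The elements of `A` can be enumerated as `a₁, a₂, …` with `b + i ≤ f aᵢ` for all `i`. The
enumeration is encoded by counting: at most `j` elements have `f`-value at most `b + j`. -/
def Layered (f : W → ℕ) (b : ℕ) (A : Finset W) : Prop :=
  ∀ j, #{a ∈ A | f a ≤ b + j} ≤ j

namespace Layered

theorem mono (h : Layered f b A) (hA : A' ⊆ A) (hfg : ∀ v ∈ A', f v + b' ≤ g v + b) :
    Layered g b' A' := by
  refine fun j => (card_le_card fun v hv => ?_).trans (h j)
  rw [mem_filter] at hv ⊢
  have := hfg v hv.1
  exact ⟨hA hv.1, by omega⟩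

theorem of_forall_add_card_le (h : ∀ v ∈ A, b + #A ≤ f v) : Layered f b A := by
  intro j
  obtain hj | hj := lt_or_ge j #A
  · rw [filter_false_of_mem fun v hv => by have := h v hv; omega, card_empty]
    exact j.zero_le
  · exact (card_filter_le _ _).trans hj

theorem exists_add_card_le (h : Layered f b A) (hA : A.Nonempty) : ∃ a ∈ A, b + #A ≤ f a := by
  by_contra! hlt
  have hpos := hA.card_pos
  have := h (#A - 1)
  rw [filter_true_of_mem fun a ha => by have := hlt a ha; omega] at this
  omega

theorem min_const (h : Layered f b A) (hN : b + #A ≤ N) : Layered (fun v => min (f v) N) b A := by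
  intro j
  obtain hj | hj := le_or_gt N (b + j)
  · exact (card_filter_le _ _).trans (by omega)
  · simpa only [min_le_iff, hj.not_ge, or_false] using h j

variable [DecidableEq W]

theorem insert_of_add_card_lt (h : Layered f b A) (hw : b + #A < f w) :
    Layered f b (insert w A) := by
  intro j
  rw [filter_insert]
  split_ifs with hj
  · exact (card_insert_le _ _).trans ((Nat.succ_le_succ (card_filter_le _ _)).trans (by omega))
  · exact h j

theorem insert_of_lt (h : Layered f (b + 1) A) (hw : b < f w) : Layered f b (insert w A) := by
  intro j
  rw [filter_insert]
  split_ifs with hj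
  · obtain ⟨i, rfl⟩ : ∃ i, j = i + 1 := ⟨j - 1, by omega⟩
    refine (card_insert_le _ _).trans (Nat.succ_le_succ ?_)
    simpa only [add_assoc, add_comm 1] using h i
  · exact (h.mono subset_rfl fun v _ => by omega) j

theorem exists_erase {α : Type*} [DecidableEq α] {L : W → Finset α} {c : α}
    (h : Layered (fun v => #(L v)) b A) (hc : ∃ a ∈ A, c ∈ L a) :
    ∃ a ∈ A, c ∈ L a ∧ Layered (fun v => #((L v).erase c)) b (A.erase a) := by
  obtain ⟨a, ha, hmin⟩ := exists_min_image {a ∈ A | c ∈ L a} (fun v => #(L v))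
    (hc.imp fun a => mem_filter.mpr)
  rw [mem_filter] at ha
  refine ⟨a, ha.1, ha.2, fun j => ?_⟩
  obtain haj | haj := le_or_gt #(L a) (b + (j + 1))
  · have hmem : a ∈ {v ∈ A | #(L v) ≤ b + (j + 1)} := mem_filter.mpr ⟨ha.1, haj⟩
    have hsub : {v ∈ A.erase a | #((L v).erase c) ≤ b + j} ⊆
        {v ∈ A | #(L v) ≤ b + (j + 1)}.erase a := fun v hv => by
      have := pred_card_le_card_erase (s := L v) (a := c)
      simp only [mem_filter, mem_erase] at hv ⊢
      exact ⟨hv.1.1, hv.1.2, by omega⟩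
    have := card_le_card hsub
    rw [card_erase_of_mem hmem] at this
    exact this.trans (Nat.sub_le_of_le_add (h (j + 1)))
  · refine (card_le_card fun v hv => ?_).trans (h j)
    simp only [mem_filter, mem_erase] at hv ⊢
    refine ⟨hv.1.2, ?_⟩
    by_cases hcv : c ∈ L v
    · have := hmin v (mem_filter.mpr ⟨hv.1.2, hcv⟩)
      have := card_erase_add_one hcv
      omega
    · rw [← erase_eq_of_notMem hcv]
      exact hv.2

end Layered

end Layered

/-! ### List colourings of vertex sets -/

section ListColorableOn

variable {W α : Type*} {G : SimpleGraph W} {L : W → Finset α} {U U' S X : Finset W}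

/-- The subgraph of `G` induced on `U` has a proper colouring from the lists `L`. -/
def ListColorableOn (G : SimpleGraph W) (L : W → Finset α) (U : Finset W) : Prop :=
  ∃ c : W → α, (∀ v ∈ U, c v ∈ L v) ∧ ∀ u ∈ U, ∀ v ∈ U, G.Adj u v → c u ≠ c v

theorem ListColorableOn.of_empty [Nonempty α] : ListColorableOn G L ∅ :=
  ⟨fun _ => Classical.arbitrary α, by simp, by simp⟩

/-- Hall's theorem outside a maximal set `S` violating Hall's condition. -/
theorem exists_deficient_subset [DecidableEq W] [DecidableEq α] [Nonempty α] (L : W → Finset α)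
    (U : Finset W) :
    ∃ S ⊆ U, #(S.biUnion L) ≤ #S - 1 ∧
      ∃ g : W → α, Set.InjOn g (U \ S : Finset W) ∧ ∀ v ∈ U \ S, g v ∈ L v \ S.biUnion L := by
  obtain ⟨S, hS, hmax⟩ := exists_max_image {S ∈ U.powerset | #(S.biUnion L) ≤ #S - 1} card
    ⟨∅, by simp⟩
  rw [mem_filter, mem_powerset] at hS
  refine ⟨S, hS.1, hS.2, ?_⟩
  have hall (T : Finset (U \ S : Finset W)) :
      #T ≤ #(T.biUnion fun v => L v \ S.biUnion L) := by
    by_contra! hlt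
    have hTU : T.map (.subtype _) ⊆ U \ S := fun v hv => property_of_mem_map_subtype T hv
    have hdisj : Disjoint S (T.map (.subtype _)) := disjoint_sdiff.mono_right hTU
    have hsub : (S ∪ T.map (.subtype _)).biUnion L ⊆
        S.biUnion L ∪ T.biUnion fun v => L v \ S.biUnion L := by
      intro x
      simp only [mem_biUnion, mem_union, mem_map, mem_sdiff, Function.Embedding.subtype_apply]
      grind
    have hcard := (card_le_card hsub).trans (card_union_le _ _)
    have := hmax (S ∪ T.map (.subtype _))
    rw [mem_filter, mem_powerset, card_union_of_disjoint hdisj, card_map] at this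
    have := this ⟨union_subset hS.1 (hTU.trans sdiff_subset), by omega⟩
    omega
  obtain ⟨g, hg, hgL⟩ := (all_card_le_biUnion_card_iff_exists_injective _).mp hall
  refine ⟨fun v => if hv : v ∈ U \ S then g ⟨v, hv⟩ else Classical.arbitrary α, ?_, fun v hv => ?_⟩
  · intro u hu v hv huv
    rw [mem_coe] at hu hv
    simpa [hu, hv, hg.eq_iff] using huv
  · simpa only [dif_pos hv] using hgL ⟨v, hv⟩

/-- For a maximal set `S` violating Hall's condition, the lists inside `S` cover few colours and the
vertices outside `S` can be coloured injectively by colours that do not occur inside `S`. So only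
the lists inside `S` matter, and the others may be replaced. -/
theorem ListColorableOn.of_small_pot [Infinite α] {n : ℕ} (hn : #U ≤ n + 1)
    (h : ∀ (L' : W → Finset α) (Y : Finset α), (∀ v, #(L' v) = min #(L v) n) → #Y = n →
      (∀ v, L' v ⊆ Y) → ListColorableOn G L' U) : ListColorableOn G L U := by
  classical
  obtain ⟨S, hSU, hS, g, hg, hgL⟩ := exists_deficient_subset L U
  have hSn : #(S.biUnion L) ≤ n := by
    have := card_le_card hSU
    omega
  obtain ⟨Y, hSY, hY⟩ := Infinite.exists_superset_card_eq (S.biUnion L) n hSn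
  choose X hXY hX using fun v =>
    exists_subset_card_eq (hY.symm ▸ min_le_right _ _ : min #(L v) n ≤ #Y)
  have hsub {v : W} (hv : v ∈ S) : L v ⊆ S.biUnion L := subset_biUnion_of_mem L hv
  obtain ⟨c, hc, hadj⟩ := h (fun v => if v ∈ S then L v else X v) Y
    (fun v => by
      split_ifs with hv
      · exact (min_eq_left ((card_le_card (hsub hv)).trans hSn)).symm
      · exact hX v) hY
    (fun v => by
      split_ifs with hv
      · exact (hsub hv).trans hSY
      · exact hXY v)
  have hcS {v : W} (hv : v ∈ S) : c v ∈ L v := by simpa only [if_pos hv] using hc v (hSU hv)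
  have hcg {u v : W} (hu : u ∈ S) (hv : v ∈ U \ S) : c u ≠ g v := fun huv =>
    (mem_sdiff.mp (hgL v hv)).2 (huv ▸ hsub hu (hcS hu))
  refine ⟨fun v => if v ∈ S then c v else g v, fun v hv => ?_, fun u hu v hv huv => ?_⟩
  · dsimp only
    split_ifs with hvS
    · exact hcS hvS
    · exact (mem_sdiff.mp (hgL v (mem_sdiff.mpr ⟨hv, hvS⟩))).1
  · dsimp only
    split_ifs with huS hvS hvS
    · exact hadj u hu v hv huv
    · exact hcg huS (mem_sdiff.mpr ⟨hv, hvS⟩)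
    · exact (hcg hvS (mem_sdiff.mpr ⟨hu, huS⟩)).symm
    · exact hg.ne (mem_sdiff.mpr ⟨hu, huS⟩) (mem_sdiff.mpr ⟨hv, hvS⟩) huv.ne

variable [DecidableEq W]

theorem ListColorableOn.insert_of_card_lt {v : W} (h : ListColorableOn G L U) (hv : #U < #(L v)) :
    ListColorableOn G L (insert v U) := by
  classical
  obtain ⟨c, hc, hadj⟩ := h
  obtain ⟨d, hdL, hd⟩ := exists_mem_notMem_of_card_lt_card
    (card_image_le.trans_lt hv : #(U.image c) < #(L v))
  have hne {u : W} (hu : u ∈ U) : c u ≠ d := fun h => hd (h ▸ mem_image_of_mem c hu)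
  refine ⟨Function.update c v d, fun u hu => ?_, fun u hu w hw huw => ?_⟩
  · obtain rfl | huv := eq_or_ne u v
    · rwa [Function.update_self]
    · rw [Function.update_of_ne huv]
      exact hc u (mem_of_mem_insert_of_ne hu huv)
  · obtain rfl | huv := eq_or_ne u v
    · rw [Function.update_self, Function.update_of_ne huw.ne']
      exact (hne (mem_of_mem_insert_of_ne hw huw.ne')).symm
    · have huU := mem_of_mem_insert_of_ne hu huv
      rw [Function.update_of_ne huv]
      obtain rfl | hwv := eq_or_ne w v
      · rw [Function.update_self]
        exact hne huU
      · rw [Function.update_of_ne hwv]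
        exact hadj u huU w (mem_of_mem_insert_of_ne hw hwv) huw

theorem ListColorableOn.union_of_layered (h : ListColorableOn G L U)
    (hS : Layered (fun v => #(L v)) #U S) : ListColorableOn G L (U ∪ S) := by
  induction hn : #S generalizing S with
  | zero => rwa [card_eq_zero.mp hn, union_empty]
  | succ n ih =>
    obtain ⟨v, hvS, hv⟩ := hS.exists_add_card_le (card_pos.mp (hn ▸ n.succ_pos))
    have hcard := card_erase_of_mem hvS
    have := ih (hS.mono (erase_subset v S) fun _ _ => le_rfl) (by omega)
    rw [← insert_erase hvS, union_insert]
    exact this.insert_of_card_lt ((card_union_le _ _).trans_lt (by omega))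

variable [DecidableEq α]

theorem ListColorableOn.of_erase {c : α} (hX : G.IsIndepSet X) (hc : ∀ v ∈ X, c ∈ L v)
    (hU : U ⊆ U' ∪ X) (h : ListColorableOn G (fun v => (L v).erase c) U') :
    ListColorableOn G L U := by
  obtain ⟨d, hd, hadj⟩ := h
  have hmem {v : W} (hv : v ∈ U) (hvX : v ∉ X) : v ∈ U' := (mem_union.mp (hU hv)).resolve_right hvX
  refine ⟨fun v => if v ∈ X then c else d v, fun v hv => ?_, fun u hu v hv huv => ?_⟩
  · dsimp only
    split_ifs with hvX
    · exact hc v hvX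
    · exact mem_of_mem_erase (hd v (hmem hv hvX))
  · dsimp only
    split_ifs with huX hvX hvX
    · exact absurd huv (hX huX hvX huv.ne)
    · exact (ne_of_mem_erase (hd v (hmem hv hvX))).symm
    · exact ne_of_mem_erase (hd u (hmem hu huX))
    · exact hadj u (hmem hu huX) v (hmem hv hvX) huv

theorem ListColorableOn.of_merge {y z : W} (hG : G.IsCompleteMultipartite) (hyz : ¬ G.Adj y z)
    (h : ListColorableOn G (Function.update L y (L y ∩ L z)) U') (hy : y ∈ U')
    (hU : U ⊆ insert z U') : ListColorableOn G L U := by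
  obtain ⟨c, hc, hadj⟩ := h
  have hcy : c y ∈ L y ∩ L z := by simpa using hc y hy
  have hmem {v : W} (hv : v ∈ U) (hvz : v ≠ z) : v ∈ U' :=
    (mem_insert.mp (hU hv)).resolve_left hvz
  have hne {v : W} (hv : v ∈ U') (hzv : G.Adj z v) : c y ≠ c v := by
    refine hadj y hy v hv (not_not.mp fun hyv => ?_)
    exact hG.trans z y v (fun hzy => hyz hzy.symm) hyv hzv
  refine ⟨Function.update c z (c y), fun v hv => ?_, fun u hu v hv huv => ?_⟩
  · obtain rfl | hvz := eq_or_ne v z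
    · rw [Function.update_self]
      exact (mem_inter.mp hcy).2
    · rw [Function.update_of_ne hvz]
      obtain rfl | hvy := eq_or_ne v y
      · exact (mem_inter.mp hcy).1
      · simpa only [Function.update_of_ne hvy] using hc v (hmem hv hvz)
  · obtain rfl | huz := eq_or_ne u z
    · rw [Function.update_self, Function.update_of_ne huv.ne']
      exact hne (hmem hv huv.ne') huv
    · rw [Function.update_of_ne huz]
      obtain rfl | hvz := eq_or_ne v z
      · rw [Function.update_self]
        exact (hne (hmem hu huz) huv.symm).symm
      · rw [Function.update_of_ne hvz]
        exact hadj u (hmem hu huz) v (hmem hv hvz) huv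

end ListColorableOn

section SizeThree

variable {W : Type*} {f g : W → ℕ} {p : Finset W} {u v w : W}

theorem sum_le_sum_add_card (h : ∀ v ∈ p, f v ≤ g v + 1) :
    ∑ v ∈ p, f v ≤ ∑ v ∈ p, g v + #p := by
  simpa only [sum_add_distrib, card_eq_sum_ones] using sum_le_sum h

theorem card_le_card_erase_add_one [DecidableEq W] (p : Finset W) (v : W) :
    #p ≤ #(p.erase v) + 1 :=
  Nat.le_add_of_sub_le pred_card_le_card_erase

theorem sum_card_erase_add {α : Type*} [DecidableEq α] (L : W → Finset α) (c : α) (p : Finset W) :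
    ∑ v ∈ p, #((L v).erase c) + #{v ∈ p | c ∈ L v} = ∑ v ∈ p, #(L v) := by
  rw [card_filter, ← sum_add_distrib]
  refine sum_congr rfl fun v _ => ?_
  split_ifs with hv
  · exact card_erase_add_one hv
  · rw [erase_eq_of_notMem hv, add_zero]

theorem sum_card_lt_of_not_forall_mem {α : Type*} [DecidableEq α] {L : W → Finset α} {c : α}
    (h : ¬ ∀ v ∈ p, c ∈ L v) : ∑ v ∈ p, #(L v) < ∑ v ∈ p, #((L v).erase c) + #p := by
  rw [← sum_card_erase_add L c p, add_lt_add_iff_left]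
  exact card_lt_card (filter_ssubset.mpr (by simpa using h))

theorem sum_card_le_card_of_pairwiseDisjoint {α : Type*} {L : W → Finset α}
    {Y : Finset α} (h : (p : Set W).PairwiseDisjoint L) (hY : ∀ v ∈ p, L v ⊆ Y) :
    ∑ v ∈ p, #(L v) ≤ #Y := by
  classical
  rw [← card_biUnion h]
  exact card_le_card (biUnion_subset.mpr hY)

variable [DecidableEq W]

theorem exists_eq_insert_insert_of_card_eq_three {p : Finset W} {u v : W} (hp : #p = 3) (hu : u ∈ p)
    (hv : v ∈ p) (huv : u ≠ v) : ∃ w, u ≠ w ∧ v ≠ w ∧ p = {u, v, w} := by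
  obtain ⟨w, hw⟩ : ∃ w, (p.erase u).erase v = {w} := by
    rw [← card_eq_one, card_erase_of_mem (mem_erase.mpr ⟨huv.symm, hv⟩), card_erase_of_mem hu, hp]
  have hmem : w ∈ (p.erase u).erase v := hw ▸ mem_singleton_self w
  simp only [mem_erase] at hmem
  refine ⟨w, hmem.2.1.symm, hmem.1.symm, ?_⟩
  rw [← hw, insert_erase (mem_erase.mpr ⟨huv.symm, hv⟩), insert_erase hu]

theorem sum_triple (huv : u ≠ v) (huw : u ≠ w) (hvw : v ≠ w) :
    ∑ x ∈ {u, v, w}, f x = f u + f v + f w := by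
  rw [sum_insert (by simp [huv, huw]), sum_pair hvw, add_assoc]

end SizeThree

/-! ### Systems of parts -/

section PartSystem

variable {W : Type*} {G : SimpleGraph W}

/-- A family of independent sets of `G` of size at most three, to be coloured from lists. The
vertices forming parts of size one are divided into two kinds, `singles` and `late`, which obey
different conditions in `PartSystem.Ample`: `late` vertices are coloured greedily at the end. -/
structure PartSystem (G : SimpleGraph W) where
  singles : Finset W
  late : Finset W
  doubles : Finset (Finset W)
  triples : Finset (Finset W)
  card_double : ∀ p ∈ doubles, #p = 2
  card_triple : ∀ p ∈ triples, #p = 3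
  indep_double : ∀ p ∈ doubles, G.IsIndepSet (p : Set W)
  indep_triple : ∀ p ∈ triples, G.IsIndepSet (p : Set W)
  disjoint_triples : ∀ p ∈ triples, ∀ q ∈ triples, p ≠ q → Disjoint p q
  disjoint_singles : ∀ p ∈ triples, Disjoint p singles
  disjoint_late : ∀ p ∈ triples, Disjoint p late

namespace PartSystem

variable (P : PartSystem G) {f g : W → ℕ} {p : Finset W} {a v w : W}

/-- The number of parts with at least two vertices. -/
def bigCount : ℕ := #P.doubles + #P.triples

/-- The number of vertices, counted with multiplicity over the parts. -/
def order : ℕ := #P.singles + #P.late + 2 * #P.doubles + 3 * #P.triples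

/-- The lower bounds on the list sizes `f` under which every list colouring problem on the parts
of `P` turns out to be solvable when `G` is complete multipartite. -/
structure Ample (f : W → ℕ) : Prop where
  singles : Layered f P.bigCount P.singles
  double : ∀ p ∈ P.doubles, ∀ v ∈ p, P.bigCount ≤ f v
  double_sum : ∀ p ∈ P.doubles, P.order ≤ ∑ v ∈ p, f v
  triple : ∀ p ∈ P.triples, ∀ v ∈ p, P.bigCount ≤ f v
  triple_pair : ∀ p ∈ P.triples, ∀ u ∈ p, ∀ v ∈ p, u ≠ v →
    2 * P.bigCount + #P.singles ≤ f u + f v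
  triple_sum : ∀ p ∈ P.triples, P.order + P.bigCount + #P.singles ≤ ∑ v ∈ p, f v + 1
  late : Layered f (2 * P.bigCount + #P.singles) P.late

theorem Ample.of_bigCount_lt {P P' : PartSystem G} (h : P.Ample f) (hfg : ∀ v, f v ≤ g v + 1)
    (hs : P'.singles ⊆ P.singles) (hd : P'.doubles ⊆ P.doubles) (ht : P'.triples ⊆ P.triples)
    (hk : P'.bigCount < P.bigCount) (hn : P'.order + 2 ≤ P.order)
    (hl : Layered g (2 * P'.bigCount + #P'.singles) P'.late) : P'.Ample g where
  singles := h.singles.mono hs fun v _ => by have := hfg v; omega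
  double p hp v hv := by
    have := h.double p (hd hp) v hv
    have := hfg v
    omega
  double_sum p hp := by
    have := h.double_sum p (hd hp)
    have := P.card_double p (hd hp) ▸ sum_le_sum_add_card (p := p) fun v _ => hfg v
    omega
  triple p hp v hv := by
    have := h.triple p (ht hp) v hv
    have := hfg v
    omega
  triple_pair p hp u hu v hv huv := by
    have := h.triple_pair p (ht hp) u hu v hv huv
    have := card_le_card hs
    have := hfg u
    have := hfg v
    omega
  triple_sum p hp := by
    have := h.triple_sum p (ht hp)
    have := P.card_triple p (ht hp) ▸ sum_le_sum_add_card (p := p) fun v _ => hfg v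
    have := card_le_card hs
    omega
  late := hl

/-- Remove all vertices of `late`. -/
@[simps]
def dropLate : PartSystem G where
  __ := P
  late := ∅
  disjoint_late _ _ := disjoint_empty_right _

theorem order_dropLate : P.dropLate.order + #P.late = P.order := by
  simp only [order, dropLate_singles, dropLate_late, dropLate_doubles, dropLate_triples, card_empty]
  omega

theorem Ample.dropLate {P : PartSystem G} (h : P.Ample f) : P.dropLate.Ample f where
  singles := h.singles
  double := h.double
  double_sum p hp := (Nat.le_of_add_right_le P.order_dropLate.le).trans (h.double_sum p hp)
  triple := h.triple
  triple_pair := h.triple_pair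
  triple_sum p hp := by
    have := h.triple_sum p hp
    have := P.order_dropLate
    change P.dropLate.order + P.bigCount + #P.singles ≤ _
    omega
  late := fun j => by simp

theorem Ample.layered_late_min {P : PartSystem G} {N : ℕ} (h : P.Ample f) (hN : P.order = N + 1)
    (hP : P.triples.Nonempty ∨ P.late = ∅) :
    Layered (fun v => min (f v) N) (2 * P.bigCount + #P.singles) P.late := by
  obtain ht | hl := hP
  · refine h.late.min_const ?_
    have := ht.card_pos
    unfold order at hN
    unfold bigCount
    omega
  · intro j
    simp [hl]

theorem Ample.min_const {P : PartSystem G} {N : ℕ} (h : P.Ample f) (hN : P.order = N + 1)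
    (hP : P.triples.Nonempty ∨ P.late = ∅ ∧ P.doubles.Nonempty) :
    P.Ample (fun v => min (f v) N) := by
  classical
  have hk : P.bigCount + #P.singles ≤ N ∧ 0 < P.bigCount := by
    unfold order at hN
    unfold bigCount
    obtain h | ⟨-, h⟩ := hP <;> have := h.card_pos <;> omega
  refine ⟨h.singles.min_const hk.1, fun p hp v hv => ?_, fun p hp => ?_, fun p hp v hv => ?_,
    fun p hp u hu v hv huv => ?_, fun p hp => ?_, ?_⟩
  · have := h.double p hp v hv
    omega
  · have hsum := h.double_sum p hp
    have hle := h.double p hp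
    obtain ⟨u, v, huv, rfl⟩ := card_eq_two.mp (P.card_double p hp)
    have := hle u (by simp)
    have := hle v (by simp)
    rw [sum_pair huv] at hsum ⊢
    omega
  · have := h.triple p hp v hv
    omega
  · have := h.triple_pair p hp u hu v hv huv
    have := h.triple p hp u hu
    have := h.triple p hp v hv
    omega
  · have hsum := h.triple_sum p hp
    have hpair := h.triple_pair p hp
    obtain ⟨u, v, w, huv, huw, hvw, rfl⟩ := card_eq_three.mp (P.card_triple p hp)
    have := hpair u (by simp) v (by simp) huv
    have := hpair u (by simp) w (by simp) huw
    have := hpair v (by simp) w (by simp) hvw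
    have := h.triple _ hp u (by simp)
    have := h.triple _ hp v (by simp)
    have := h.triple _ hp w (by simp)
    rw [sum_triple huv huw hvw] at hsum ⊢
    omega
  · exact h.layered_late_min hN (hP.imp_right And.left)

variable [DecidableEq W]

/-- The set of all vertices lying in a part. -/
def support : Finset W :=
  P.singles ∪ P.late ∪ P.doubles.biUnion id ∪ P.triples.biUnion id

theorem mem_support : v ∈ P.support ↔
    v ∈ P.singles ∨ v ∈ P.late ∨ (∃ p ∈ P.doubles, v ∈ p) ∨ ∃ p ∈ P.triples, v ∈ p := by
  simp only [support, mem_union, mem_biUnion, id, or_assoc]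

theorem card_support_le : #P.support ≤ P.order := by
  have hd : #(P.doubles.biUnion id) ≤ #P.doubles * 2 :=
    card_biUnion_le_card_mul _ _ _ fun p hp => (P.card_double p hp).le
  have ht : #(P.triples.biUnion id) ≤ #P.triples * 3 :=
    card_biUnion_le_card_mul _ _ _ fun p hp => (P.card_triple p hp).le
  have := card_union_le (P.singles ∪ P.late ∪ P.doubles.biUnion id) (P.triples.biUnion id)
  have := card_union_le (P.singles ∪ P.late) (P.doubles.biUnion id)
  have := card_union_le P.singles P.late
  unfold support order
  omega

/-- Remove a part of size three. -/
@[simps]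
def eraseTriple (p : Finset W) : PartSystem G where
  singles := P.singles
  late := P.late
  doubles := P.doubles
  triples := P.triples.erase p
  card_double := P.card_double
  card_triple q hq := P.card_triple q (mem_of_mem_erase hq)
  indep_double := P.indep_double
  indep_triple q hq := P.indep_triple q (mem_of_mem_erase hq)
  disjoint_triples q hq r hr := P.disjoint_triples q (mem_of_mem_erase hq) r (mem_of_mem_erase hr)
  disjoint_singles q hq := P.disjoint_singles q (mem_of_mem_erase hq)
  disjoint_late q hq := P.disjoint_late q (mem_of_mem_erase hq)

/-- Remove a part of size two. -/
@[simps]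
def eraseDouble (p : Finset W) : PartSystem G where
  __ := P
  doubles := P.doubles.erase p
  card_double q hq := P.card_double q (mem_of_mem_erase hq)
  indep_double q hq := P.indep_double q (mem_of_mem_erase hq)

/-- Remove a vertex from `singles`. -/
@[simps]
def eraseSingle (a : W) : PartSystem G where
  __ := P
  singles := P.singles.erase a
  disjoint_singles p hp := (P.disjoint_singles p hp).mono_right (erase_subset a _)

theorem disjoint_insert_of_mem_erase {P : PartSystem G} (hp : p ∈ P.triples) (hw : w ∈ p)
    {q S : Finset W} (hq : q ∈ P.triples.erase p) (hS : Disjoint q S) :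
    Disjoint q (insert w S) := by
  rw [mem_erase] at hq
  exact disjoint_insert_right.mpr
    ⟨disjoint_right.mp (P.disjoint_triples q hq.2 p hp hq.1) hw, hS⟩

/-- Replace the part `p` of size three by its vertex `w`, as a member of `singles`. -/
@[simps]
def tripleToSingle (hp : p ∈ P.triples) (hw : w ∈ p) : PartSystem G where
  __ := P.eraseTriple p
  singles := insert w P.singles
  disjoint_singles _ hq := disjoint_insert_of_mem_erase hp hw hq
    (P.disjoint_singles _ (mem_of_mem_erase hq))

/-- Replace the part `p` of size three by its vertex `w`, as a member of `late`. -/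
@[simps]
def tripleToLate (hp : p ∈ P.triples) (hw : w ∈ p) : PartSystem G where
  __ := P.eraseTriple p
  late := insert w P.late
  disjoint_late _ hq := disjoint_insert_of_mem_erase hp hw hq
    (P.disjoint_late _ (mem_of_mem_erase hq))

variable {P}

theorem bigCount_eraseTriple (hp : p ∈ P.triples) :
    (P.eraseTriple p).bigCount + 1 = P.bigCount := by
  rw [bigCount, bigCount, add_assoc]
  exact congrArg (#P.doubles + ·) (card_erase_add_one hp)

theorem order_eraseTriple (hp : p ∈ P.triples) : (P.eraseTriple p).order + 3 = P.order := by
  have := card_erase_add_one hp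
  simp only [order, eraseTriple_singles, eraseTriple_late, eraseTriple_doubles, eraseTriple_triples]
  omega

theorem support_subset_eraseTriple : P.support ⊆ (P.eraseTriple p).support ∪ p := by
  intro v
  simp only [mem_union, mem_support, eraseTriple_singles, eraseTriple_late, eraseTriple_doubles,
    eraseTriple_triples, mem_erase]
  grind

theorem bigCount_eraseDouble (hp : p ∈ P.doubles) :
    (P.eraseDouble p).bigCount + 1 = P.bigCount := by
  have := card_erase_add_one hp
  simp only [bigCount, eraseDouble_doubles, eraseDouble_triples]
  omega

theorem order_eraseDouble (hp : p ∈ P.doubles) : (P.eraseDouble p).order + 2 = P.order := by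
  have := card_erase_add_one hp
  simp only [order, eraseDouble_singles, eraseDouble_late, eraseDouble_doubles, eraseDouble_triples]
  omega

theorem support_subset_eraseDouble : P.support ⊆ (P.eraseDouble p).support ∪ p := by
  intro v
  simp only [mem_union, mem_support, eraseDouble_singles, eraseDouble_late, eraseDouble_doubles,
    eraseDouble_triples, mem_erase]
  grind

theorem order_eraseSingle (ha : a ∈ P.singles) : (P.eraseSingle a).order + 1 = P.order := by
  have := card_erase_add_one ha
  simp only [order, eraseSingle_singles, eraseSingle_late, eraseSingle_doubles, eraseSingle_triples]
  omega

theorem support_subset_eraseSingle : P.support ⊆ (P.eraseSingle a).support ∪ {a} := by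
  intro v
  simp only [mem_union, mem_support, eraseSingle_singles, eraseSingle_late, eraseSingle_doubles,
    eraseSingle_triples, mem_erase, mem_singleton]
  grind

theorem support_eq_dropLate : P.support = P.dropLate.support ∪ P.late := by
  ext v
  simp only [mem_union, mem_support, dropLate_singles, dropLate_late, dropLate_doubles,
    dropLate_triples, notMem_empty]
  grind

theorem card_singles_tripleToSingle (hp : p ∈ P.triples) (hw : w ∈ p) :
    #(P.tripleToSingle hp hw).singles = #P.singles + 1 :=
  card_insert_of_notMem (disjoint_left.mp (P.disjoint_singles p hp) hw)

theorem bigCount_tripleToSingle (hp : p ∈ P.triples) (hw : w ∈ p) :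
    (P.tripleToSingle hp hw).bigCount + 1 = P.bigCount :=
  bigCount_eraseTriple hp

theorem order_tripleToSingle (hp : p ∈ P.triples) (hw : w ∈ p) :
    (P.tripleToSingle hp hw).order + 2 = P.order := by
  have hs := card_singles_tripleToSingle hp hw
  have := card_erase_add_one hp
  simp only [order, tripleToSingle_late, tripleToSingle_doubles, tripleToSingle_triples,
    eraseTriple_late, eraseTriple_doubles, eraseTriple_triples, hs]
  omega

theorem support_subset_tripleToSingle (hp : p ∈ P.triples) (hw : w ∈ p) :
    P.support ⊆ (P.tripleToSingle hp hw).support ∪ p.erase w := by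
  intro v
  simp only [mem_union, mem_support, tripleToSingle_singles, tripleToSingle_late,
    tripleToSingle_doubles, tripleToSingle_triples, eraseTriple_late, eraseTriple_doubles,
    eraseTriple_triples, mem_insert, mem_erase]
  grind

theorem bigCount_tripleToLate (hp : p ∈ P.triples) (hw : w ∈ p) :
    (P.tripleToLate hp hw).bigCount + 1 = P.bigCount :=
  bigCount_eraseTriple hp

theorem order_tripleToLate (hp : p ∈ P.triples) (hw : w ∈ p) :
    (P.tripleToLate hp hw).order + 2 = P.order := by
  have hl := card_insert_of_notMem (disjoint_left.mp (P.disjoint_late p hp) hw)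
  have := card_erase_add_one hp
  simp only [order, tripleToLate_late, tripleToLate_singles, tripleToLate_doubles,
    tripleToLate_triples, eraseTriple_singles, eraseTriple_doubles, eraseTriple_triples, hl]
  omega

theorem support_subset_tripleToLate (hp : p ∈ P.triples) (hw : w ∈ p) :
    P.support ⊆ (P.tripleToLate hp hw).support ∪ p.erase w := by
  intro v
  simp only [mem_union, mem_support, tripleToLate_singles, tripleToLate_late,
    tripleToLate_doubles, tripleToLate_triples, eraseTriple_singles, eraseTriple_doubles,
    eraseTriple_triples, mem_insert, mem_erase]
  grind

namespace Ample

theorem eraseTriple (h : P.Ample f) (hfg : ∀ v, f v ≤ g v + 1) (hp : p ∈ P.triples) :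
    (P.eraseTriple p).Ample g := by
  have hk := bigCount_eraseTriple hp
  have hn := order_eraseTriple hp
  refine h.of_bigCount_lt hfg subset_rfl subset_rfl (erase_subset p _) (by omega) (by omega) ?_
  refine h.late.mono subset_rfl fun v _ => ?_
  have := hfg v
  rw [eraseTriple_singles]
  omega

theorem eraseDouble (h : P.Ample f) (hfg : ∀ v, f v ≤ g v + 1) (hp : p ∈ P.doubles) :
    (P.eraseDouble p).Ample g := by
  have hk := bigCount_eraseDouble hp
  have hn := order_eraseDouble hp
  refine h.of_bigCount_lt hfg subset_rfl (erase_subset p _) subset_rfl (by omega) (by omega) ?_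
  refine h.late.mono subset_rfl fun v _ => ?_
  have := hfg v
  rw [eraseDouble_singles]
  omega

theorem tripleToLate (h : P.Ample f) (hfg : ∀ v, f v ≤ g v + 1) (hp : p ∈ P.triples) (hw : w ∈ p)
    (hgw : 2 * P.bigCount + #P.singles ≤ g w + 1) : (P.tripleToLate hp hw).Ample g := by
  have hk := bigCount_tripleToLate hp hw
  have hn := order_tripleToLate hp hw
  refine h.of_bigCount_lt hfg subset_rfl subset_rfl (erase_subset p _) (by omega) (by omega) ?_
  rw [tripleToLate_singles, eraseTriple_singles, tripleToLate_late]
  refine (h.late.mono subset_rfl fun v _ => ?_).insert_of_lt (by omega)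
  have := hfg v
  omega

end Ample

end PartSystem
end PartSystem

/-! ### Minimal counterexamples -/

section MinCounterexample

variable {W α : Type*} [DecidableEq W] {G : SimpleGraph W} {P : PartSystem G}
  {L : W → Finset α} {Y : Finset α} {p : Finset W} {u v w : W} {c : α}

/-- `L` assigns lists of ample sizes from which `P` cannot be coloured, and `P` has the least
possible order for this. -/
structure IsMinCounterexample (P : PartSystem G) (L : W → Finset α) : Prop where
  ample : P.Ample fun v => #(L v)
  not_colorable : ¬ ListColorableOn G L P.support
  colorable_of_lt : ∀ (P' : PartSystem G) (L' : W → Finset α), P'.order < P.order →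
    P'.Ample (fun v => #(L' v)) → ListColorableOn G L' P'.support

namespace IsMinCounterexample

theorem not_forall_mem_triple (h : IsMinCounterexample P L) (hp : p ∈ P.triples) :
    ¬ ∀ v ∈ p, c ∈ L v := by
  classical
  intro hc
  have hn := PartSystem.order_eraseTriple hp
  exact h.not_colorable <| .of_erase (P.indep_triple p hp) hc P.support_subset_eraseTriple <|
    h.colorable_of_lt _ _ (by omega) <|
      h.ample.eraseTriple (fun v => card_le_card_erase_add_one (L v) c) hp

theorem not_forall_mem_double (h : IsMinCounterexample P L) (hp : p ∈ P.doubles) :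
    ¬ ∀ v ∈ p, c ∈ L v := by
  classical
  intro hc
  have hn := PartSystem.order_eraseDouble hp
  exact h.not_colorable <| .of_erase (P.indep_double p hp) hc P.support_subset_eraseDouble <|
    h.colorable_of_lt _ _ (by omega) <|
      h.ample.eraseDouble (fun v => card_le_card_erase_add_one (L v) c) hp

theorem late_eq_empty (h : IsMinCounterexample P L) (ht : P.triples = ∅) : P.late = ∅ := by
  by_contra hl
  have hn := P.order_dropLate
  have hpos := card_pos.mpr (nonempty_iff_ne_empty.mpr hl)
  have hcard : #P.dropLate.support ≤ 2 * P.bigCount + #P.singles := by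
    refine P.dropLate.card_support_le.trans (le_of_eq ?_)
    simp only [PartSystem.order, PartSystem.bigCount, PartSystem.dropLate_singles,
      PartSystem.dropLate_late, PartSystem.dropLate_doubles, PartSystem.dropLate_triples, ht,
      card_empty]
    omega
  refine h.not_colorable ?_
  rw [PartSystem.support_eq_dropLate]
  exact (h.colorable_of_lt _ _ (by omega) h.ample.dropLate).union_of_layered
    (h.ample.late.mono subset_rfl fun v _ => by omega)

theorem triples_nonempty_or_doubles_nonempty [Nonempty α] (h : IsMinCounterexample P L) :
    P.triples.Nonempty ∨ P.late = ∅ ∧ P.doubles.Nonempty := by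
  obtain ht | ht := P.triples.eq_empty_or_nonempty
  swap
  · exact Or.inl ht
  refine Or.inr ⟨h.late_eq_empty ht, nonempty_iff_ne_empty.mpr fun hd => h.not_colorable ?_⟩
  have hsupp : P.support = ∅ ∪ P.singles := by
    simp [PartSystem.support, h.late_eq_empty ht, ht, hd]
  rw [hsupp]
  exact ListColorableOn.of_empty.union_of_layered
    (h.ample.singles.mono subset_rfl fun v _ => by simp)

theorem exists_small_pot [Infinite α] (h : IsMinCounterexample P L) :
    ∃ (L' : W → Finset α) (Y : Finset α), IsMinCounterexample P L' ∧ (∀ v, L' v ⊆ Y) ∧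
      #Y < P.order := by
  have hP := h.triples_nonempty_or_doubles_nonempty
  obtain ⟨N, hN⟩ : ∃ N, P.order = N + 1 := by
    refine Nat.exists_eq_add_one.mpr ?_
    unfold PartSystem.order
    obtain ht | ⟨-, hd⟩ := hP
    · have := ht.card_pos
      omega
    · have := hd.card_pos
      omega
  by_contra! hcon
  refine h.not_colorable (.of_small_pot (hN ▸ P.card_support_le) fun L' Y hL' hY hsub => ?_)
  by_contra hnc
  have := hcon L' Y ⟨?_, hnc, h.colorable_of_lt⟩ hsub
  · omega
  · simpa only [hL'] using h.ample.min_const hN hP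

theorem doubles_eq_empty (h : IsMinCounterexample P L) (hL : ∀ v, L v ⊆ Y) (hY : #Y < P.order) :
    P.doubles = ∅ := by
  classical
  refine eq_empty_of_forall_notMem fun p hp => ?_
  have hsum := h.ample.double_sum p hp
  obtain ⟨u, v, huv, rfl⟩ := card_eq_two.mp (P.card_double p hp)
  rw [sum_pair huv] at hsum
  obtain ⟨c, hc⟩ := inter_nonempty_of_card_lt_card_add_card (hL u) (hL v) (hY.trans_le hsum)
  rw [mem_inter] at hc
  exact h.not_forall_mem_double (c := c) hp (by simpa using hc)

theorem lt_card_add_card (h : IsMinCounterexample P L) (hd : P.doubles = ∅) (hp : p ∈ P.triples)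
    (hu : u ∈ p) (hv : v ∈ p) (huv : u ≠ v) (hcu : c ∈ L u) (hcv : c ∈ L v) :
    2 * P.bigCount + #P.singles < #(L u) + #(L v) := by
  classical
  by_contra! hle
  obtain ⟨w, huw, hvw, rfl⟩ :=
    exists_eq_insert_insert_of_card_eq_three (P.card_triple p hp) hu hv huv
  have hw : w ∈ ({u, v, w} : Finset W) := by simp
  have hcw : c ∉ L w := fun hcw => h.not_forall_mem_triple (c := c) hp (by simp [hcu, hcv, hcw])
  have hsum := h.ample.triple_sum _ hp
  rw [sum_triple huv huw hvw] at hsum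
  have hn : 3 * P.bigCount + #P.singles ≤ P.order := by
    simp only [PartSystem.bigCount, PartSystem.order, hd, card_empty]
    omega
  have hn' := PartSystem.order_tripleToLate hp hw
  refine h.not_colorable <| .of_erase (c := c) ?_ ?_
    (PartSystem.support_subset_tripleToLate hp hw) <| h.colorable_of_lt _ _ (by omega) <|
      h.ample.tripleToLate (fun v => card_le_card_erase_add_one (L v) c) hp hw ?_
  · exact (P.indep_triple _ hp).mono (coe_subset.mpr (erase_subset w _))
  · grind
  · rw [erase_eq_of_notMem hcw]
    omega

theorem le_card_erase_add_card_erase [DecidableEq α] (h : IsMinCounterexample P L)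
    (hd : P.doubles = ∅) (hp : p ∈ P.triples) (hu : u ∈ p) (hv : v ∈ p) (huv : u ≠ v) (c : α) :
    2 * P.bigCount + #P.singles ≤ #((L u).erase c) + #((L v).erase c) + 1 := by
  have hpair := h.ample.triple_pair p hp u hu v hv huv
  have hu' := card_le_card_erase_add_one (L u) c
  have hv' := card_le_card_erase_add_one (L v) c
  by_cases hcu : c ∈ L u
  · by_cases hcv : c ∈ L v
    · have := h.lt_card_add_card hd hp hu hv huv hcu hcv
      omega
    · rw [erase_eq_of_notMem hcv]
      omega
  · rw [erase_eq_of_notMem hcu]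
    omega

theorem le_sum_card_erase [DecidableEq α] (h : IsMinCounterexample P L) (hp : p ∈ P.triples)
    (c : α) :
    P.order + P.bigCount + #P.singles ≤ ∑ v ∈ p, #((L v).erase c) + 3 := by
  have hsum := h.ample.triple_sum p hp
  have hlt := sum_card_lt_of_not_forall_mem (h.not_forall_mem_triple (c := c) hp)
  rw [P.card_triple p hp] at hlt
  omega

theorem ample_tripleToSingle [DecidableEq α] (h : IsMinCounterexample P L) (hd : P.doubles = ∅)
    (hp : p ∈ P.triples) (hw : w ∈ p) {M : W → Finset α} (hM : ∀ v ≠ w, M v = (L v).erase c)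
    (hMw : P.bigCount + #P.singles ≤ #(M w)) :
    (P.tripleToSingle hp hw).Ample fun v => #(M v) := by
  have hk := PartSystem.bigCount_tripleToSingle hp hw
  have hn := PartSystem.order_tripleToSingle hp hw
  have ha := PartSystem.card_singles_tripleToSingle hp hw
  have hMv {v : W} (hv : v ≠ w) : #(L v) ≤ #(M v) + 1 :=
    hM v hv ▸ card_le_card_erase_add_one (L v) c
  have hne {S : Finset W} (hS : Disjoint p S) {v : W} (hv : v ∈ S) : v ≠ w :=
    fun hvw => disjoint_left.mp hS hw (hvw ▸ hv)
  have hdisj {q : Finset W} (hq : q ∈ (P.tripleToSingle hp hw).triples) : Disjoint p q := by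
    obtain ⟨hqp, hq⟩ := mem_erase.mp hq
    exact P.disjoint_triples p hp q hq hqp.symm
  refine ⟨?_, by simp [hd], by simp [hd], fun q hq v hv => ?_, fun q hq u hu v hv huv => ?_,
    fun q hq => ?_, ?_⟩
  · refine (h.ample.singles.mono subset_rfl fun v hv => ?_).insert_of_add_card_lt ?_
    · have := hMv (hne (P.disjoint_singles p hp) hv)
      omega
    · exact hMw.trans_lt' (by omega)
  · have := h.ample.triple q (mem_of_mem_erase hq) v hv
    have := hMv (hne (hdisj hq) hv)
    omega
  · have := h.le_card_erase_add_card_erase hd (mem_of_mem_erase hq) hu hv huv c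
    rw [hM u (hne (hdisj hq) hu), hM v (hne (hdisj hq) hv)]
    omega
  · have := h.le_sum_card_erase (mem_of_mem_erase hq) c
    rw [sum_congr rfl fun v hv => congrArg card (hM v (hne (hdisj hq) hv))]
    omega
  · refine h.ample.late.mono subset_rfl fun v hv => ?_
    have := hMv (hne (P.disjoint_late p hp) hv)
    omega

theorem card_lt_of_mem_of_mem (h : IsMinCounterexample P L) (hd : P.doubles = ∅)
    (hp : {u, v, w} ∈ P.triples) (hcu : c ∈ L u) (hcv : c ∈ L v) :
    #(L w) < P.bigCount + #P.singles := by
  classical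
  by_contra! hle
  have hw : w ∈ ({u, v, w} : Finset W) := by simp
  have hcw : c ∉ L w := fun hcw => h.not_forall_mem_triple (c := c) hp (by simp [hcu, hcv, hcw])
  have hn := PartSystem.order_tripleToSingle hp hw
  refine h.not_colorable <| .of_erase (c := c) ?_ ?_
    (PartSystem.support_subset_tripleToSingle hp hw) <| h.colorable_of_lt _ _ (by omega) <|
      h.ample_tripleToSingle hd hp hw (fun _ _ => rfl) ?_
  · exact (P.indep_triple _ hp).mono (coe_subset.mpr (erase_subset w _))
  · grind
  · rwa [erase_eq_of_notMem hcw]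

theorem card_inter_lt [DecidableEq α] (h : IsMinCounterexample P L) (hG : G.IsCompleteMultipartite)
    (hd : P.doubles = ∅) (hvw : v ≠ w) (hp : {u, v, w} ∈ P.triples) (hcu : c ∈ L u)
    (hcv : c ∉ L v) (hcw : c ∉ L w) :
    #(L v ∩ L w) < P.bigCount + #P.singles := by
  by_contra! hle
  have hv : v ∈ ({u, v, w} : Finset W) := by simp
  have hw : w ∈ ({u, v, w} : Finset W) := by simp
  let M := Function.update (fun x => (L x).erase c) v ((L v).erase c ∩ (L w).erase c)
  have hMv : M v = L v ∩ L w := by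
    simp only [M, Function.update_self, erase_eq_of_notMem hcv, erase_eq_of_notMem hcw]
  have hn := PartSystem.order_tripleToSingle hp hv
  have hM : ListColorableOn G M (P.tripleToSingle hp hv).support :=
    h.colorable_of_lt _ _ (by omega) <| h.ample_tripleToSingle hd hp hv
      (fun x hx => Function.update_of_ne hx _ _) (hMv ▸ hle)
  have hvS : v ∈ (P.tripleToSingle hp hv).support :=
    (PartSystem.mem_support _).mpr (Or.inl (mem_insert_self v _))
  refine h.not_colorable <| .of_erase (X := {u}) (by simp) (by simpa using hcu) ?_ <|
    .of_merge hG (P.indep_triple _ hp hv hw hvw) hM hvS subset_rfl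
  refine (PartSystem.support_subset_tripleToSingle hp hv).trans ?_
  grind

theorem bigCount_lt_card (h : IsMinCounterexample P L) (hG : G.IsCompleteMultipartite)
    (hd : P.doubles = ∅) (hL : ∀ v, L v ⊆ Y) (hY : #Y < P.order) (hp : p ∈ P.triples)
    (hu : u ∈ p) : P.bigCount < #(L u) := by
  classical
  by_contra! hle
  obtain ⟨v, hv, hvu⟩ := exists_mem_ne (P.card_triple p hp ▸ by norm_num : 1 < #p) u
  obtain ⟨w, huw, hvw, rfl⟩ :=
    exists_eq_insert_insert_of_card_eq_three (P.card_triple p hp) hu hv hvu.symm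
  have huv := hvu.symm
  have hw : w ∈ ({u, v, w} : Finset W) := by simp
  have hule := h.ample.triple _ hp u hu
  have huv_sum := h.ample.triple_pair _ hp u hu v hv huv
  have huw_sum := h.ample.triple_pair _ hp u hu w hw huw
  have hdisj : Disjoint (L u) (L v ∪ L w) := by
    rw [disjoint_left]
    intro c hcu hc
    obtain hcv | hcw := mem_union.mp hc
    · have := h.card_lt_of_mem_of_mem hd hp hcu hcv
      omega
    · have := h.card_lt_of_mem_of_mem hd (pair_comm v w ▸ hp) hcu hcw
      omega
  have hpos : 0 < P.bigCount := (card_pos.mpr ⟨_, hp⟩).trans_le (Nat.le_add_left _ _)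
  obtain ⟨c, hcu⟩ := card_pos.mp (hpos.trans_le hule)
  have hc := disjoint_left.mp hdisj hcu
  rw [notMem_union] at hc
  have hinter := h.card_inter_lt hG hd hvw hp hcu hc.1 hc.2
  have hsum := h.ample.triple_sum _ hp
  rw [sum_triple huv huw hvw] at hsum
  have hpot := card_le_card (union_subset (hL u) (union_subset (hL v) (hL w)))
  rw [card_union_of_disjoint hdisj] at hpot
  have := card_union_add_card_inter (L v) (L w)
  omega

theorem singles_eq_empty (h : IsMinCounterexample P L) (hd : P.doubles = ∅)
    (hk : ∀ p ∈ P.triples, ∀ v ∈ p, P.bigCount < #(L v)) : P.singles = ∅ := by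
  classical
  by_contra hs
  obtain ⟨b, hb, hbL⟩ := h.ample.singles.exists_add_card_le (nonempty_iff_ne_empty.mpr hs)
  obtain ⟨c, hcb⟩ := card_pos.mp ((card_pos.mpr ⟨b, hb⟩).trans_le (le_of_add_le_right hbL))
  obtain ⟨a, ha, hca, hlay⟩ := h.ample.singles.exists_erase ⟨b, hb, hcb⟩
  have hn := PartSystem.order_eraseSingle ha
  have hcard : #(P.eraseSingle a).singles + 1 = #P.singles := card_erase_add_one ha
  have hbig : (P.eraseSingle a).bigCount = P.bigCount := rfl
  refine h.not_colorable <| .of_erase (X := {a}) (by simp) (by simpa using hca)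
    P.support_subset_eraseSingle <| h.colorable_of_lt _ _ (by omega)
    ⟨hlay, by simp [hd], by simp [hd], fun p hp v hv => ?_, fun p hp u hu v hv huv => ?_,
      fun p hp => ?_, ?_⟩
  · have := hk p hp v hv
    have := card_le_card_erase_add_one (L v) c
    omega
  · have := h.le_card_erase_add_card_erase hd hp hu hv huv c
    omega
  · have := h.le_sum_card_erase hp c
    omega
  · refine h.ample.late.mono subset_rfl fun v _ => ?_
    have := card_le_card_erase_add_one (L v) c
    omega

theorem false_of_small_pot [Nonempty α] (h : IsMinCounterexample P L)
    (hG : G.IsCompleteMultipartite) (hL : ∀ v, L v ⊆ Y) (hY : #Y < P.order) : False := by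
  have hd := h.doubles_eq_empty hL hY
  have hs := h.singles_eq_empty hd fun p hp v hv => h.bigCount_lt_card hG hd hL hY hp hv
  obtain ⟨p, hp⟩ : P.triples.Nonempty :=
    h.triples_nonempty_or_doubles_nonempty.resolve_right fun hne => hne.2.ne_empty hd
  have hdisj : (p : Set W).PairwiseDisjoint L := by
    refine fun u hu v hv huv => disjoint_left.mpr fun c hcu hcv => ?_
    obtain ⟨w, -, -, rfl⟩ :=
      exists_eq_insert_insert_of_card_eq_three (P.card_triple p hp) hu hv huv
    have hlt := h.card_lt_of_mem_of_mem hd hp hcu hcv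
    have hle := h.ample.triple _ hp w (by simp)
    rw [hs, card_empty] at hlt
    omega
  have hpot := sum_card_le_card_of_pairwiseDisjoint hdisj fun v _ => hL v
  have hsum := h.ample.triple_sum _ hp
  have hpos : 0 < P.bigCount := (card_pos.mpr ⟨_, hp⟩).trans_le (Nat.le_add_left _ _)
  omega

end IsMinCounterexample

theorem PartSystem.Ample.listColorableOn [Infinite α] (hG : G.IsCompleteMultipartite)
    (h : P.Ample fun v => #(L v)) : ListColorableOn G L P.support := by
  induction hn : P.order using Nat.strong_induction_on generalizing P L with
  | _ n ih =>
    by_contra hnc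
    have hmin : IsMinCounterexample P L :=
      ⟨h, hnc, fun P' L' hlt h' => ih _ (hn ▸ hlt) h' rfl⟩
    obtain ⟨L', Y, hmin', hL', hY⟩ := hmin.exists_small_pot
    exact hmin'.false_of_small_pot hG hL' hY

end MinCounterexample

/-! ### Lists of uniform size -/

section Uniform

variable {W α : Type*} {G : SimpleGraph W} {P : PartSystem G} {p : Finset W} {w : W}

namespace PartSystem

theorem ample_of_forall_le {f : W → ℕ} (hl : P.late = ∅) (ht : #P.triples ≤ #P.singles + 1)
    (hd : P.doubles = ∅ ∨ #P.triples ≤ #P.singles) (hf : ∀ v, #P.singles + P.bigCount ≤ f v) :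
    P.Ample f := by
  have hsum (p : Finset W) : #p * (#P.singles + P.bigCount) ≤ ∑ v ∈ p, f v :=
    card_nsmul_le_sum p f _ fun v _ => hf v
  have hn : P.order = #P.singles + 2 * #P.doubles + 3 * #P.triples := by simp [order, hl]
  have hk : P.bigCount = #P.doubles + #P.triples := rfl
  refine ⟨.of_forall_add_card_le fun v _ => ?_, fun p _ v _ => ?_, fun p hp => ?_,
    fun p _ v _ => ?_, fun p _ u _ v _ _ => ?_, fun p hp => ?_, fun j => by simp [hl]⟩
  · have := hf v
    omega
  · have := hf v
    omega
  · have := hsum p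
    have := hd.resolve_left (ne_empty_of_mem hp)
    rw [P.card_double p hp] at *
    omega
  · have := hf v
    omega
  · have := hf u
    have := hf v
    omega
  · have := hsum p
    rw [P.card_triple p hp] at this
    omega

variable [DecidableEq W] {L : W → Finset α} {c : α}

theorem ample_tripleToSingle_of_forall_le [DecidableEq α] (hl : P.late = ∅)
    (ht : #P.triples = #P.singles + 1) (hL : ∀ v, #P.singles + P.bigCount ≤ #(L v))
    (hcd : ∀ p ∈ P.doubles, ¬ ∀ v ∈ p, c ∈ L v) (hct : ∀ p ∈ P.triples, ¬ ∀ v ∈ p, c ∈ L v)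
    (hp : p ∈ P.triples) (hw : w ∈ p) (hcw : c ∉ L w) :
    (P.tripleToSingle hp hw).Ample fun v => #((L v).erase c) := by
  have hk' := bigCount_tripleToSingle hp hw
  have hn' := order_tripleToSingle hp hw
  have ha' := card_singles_tripleToSingle hp hw
  have hn : P.order = #P.singles + 2 * #P.doubles + 3 * #P.triples := by simp [order, hl]
  have hk : P.bigCount = #P.doubles + #P.triples := rfl
  have hLc (v : W) : #P.singles + P.bigCount ≤ #((L v).erase c) + 1 :=
    (hL v).trans (card_le_card_erase_add_one (L v) c)
  have hsum {q : Finset W} (hq : ¬ ∀ v ∈ q, c ∈ L v) :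
      #q * (#P.singles + P.bigCount) < ∑ v ∈ q, #((L v).erase c) + #q :=
    (card_nsmul_le_sum q _ _ fun v _ => hL v).trans_lt (sum_card_lt_of_not_forall_mem hq)
  refine ⟨?_, fun q _ v _ => ?_, fun q hq => ?_, fun q _ v _ => ?_, fun q hq u _ v _ _ => ?_,
    fun q hq => ?_, fun j => by simp [hl]⟩
  · refine Layered.insert_of_add_card_lt (.of_forall_add_card_le fun v _ => ?_) ?_
    · have := hLc v
      omega
    · have := hL w
      rw [erase_eq_of_notMem hcw]
      exact this.trans_lt' (by omega)
  · have := hLc v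
    omega
  · have := hsum (hcd q hq)
    rw [P.card_double q hq] at this
    omega
  · have := hLc v
    omega
  · have := hLc u
    have := hLc v
    have : 1 < #P.triples :=
      one_lt_card.mpr ⟨q, mem_of_mem_erase hq, p, hp, ne_of_mem_erase hq⟩
    omega
  · have := hsum (hct q (mem_of_mem_erase hq))
    rw [P.card_triple q (mem_of_mem_erase hq)] at this
    omega

variable [Infinite α]

theorem pairwiseDisjoint_of_forall_le (hG : G.IsCompleteMultipartite)
    (hl : P.late = ∅) (ht : #P.triples = #P.singles + 1)
    (hL : ∀ v, #P.singles + P.bigCount ≤ #(L v))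
    (hcd : ∀ c, ∀ p ∈ P.doubles, ¬ ∀ v ∈ p, c ∈ L v)
    (hct : ∀ c, ∀ p ∈ P.triples, ¬ ∀ v ∈ p, c ∈ L v)
    (hnc : ¬ ListColorableOn G L P.support) (hp : p ∈ P.triples) :
    (p : Set W).PairwiseDisjoint L := by
  classical
  refine fun u hu v hv huv => disjoint_left.mpr fun c hcu hcv => hnc ?_
  obtain ⟨w, -, -, rfl⟩ := exists_eq_insert_insert_of_card_eq_three (P.card_triple p hp) hu hv huv
  have hw : w ∈ ({u, v, w} : Finset W) := by simp
  have hcw : c ∉ L w := fun hcw => hct c _ hp (by simp [hcu, hcv, hcw])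
  refine .of_erase (c := c) ?_ (by grind) (support_subset_tripleToSingle hp hw)
    ((ample_tripleToSingle_of_forall_le hl ht hL (hcd c) (hct c) hp hw hcw).listColorableOn hG)
  exact (P.indep_triple _ hp).mono (coe_subset.mpr (erase_subset w _))

theorem listColorableOn_of_forall_mem_triple (hG : G.IsCompleteMultipartite) (hl : P.late = ∅)
    (ht : #P.triples ≤ #P.singles + 1) (hL : ∀ v, #P.singles + P.bigCount ≤ #(L v))
    (hp : p ∈ P.triples) (hc : ∀ v ∈ p, c ∈ L v) : ListColorableOn G L P.support := by
  classical
  have hk' := bigCount_eraseTriple hp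
  have ht' := card_erase_add_one hp
  refine .of_erase (P.indep_triple p hp) hc P.support_subset_eraseTriple
    ((ample_of_forall_le (P := P.eraseTriple p) hl ?_ (Or.inr ?_) fun v => ?_).listColorableOn hG)
  · rw [eraseTriple_triples, eraseTriple_singles]
    omega
  · rw [eraseTriple_triples, eraseTriple_singles]
    omega
  · have := hL v
    have := card_le_card_erase_add_one (L v) c
    rw [eraseTriple_singles]
    omega

theorem listColorableOn_of_forall_le (hG : G.IsCompleteMultipartite) (hl : P.late = ∅)
    (ht : #P.triples ≤ #P.singles + 1) (hL : ∀ v, #P.singles + P.bigCount ≤ #(L v)) :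
    ListColorableOn G L P.support := by
  classical
  induction hb : #P.doubles generalizing P L with
  | zero => exact (ample_of_forall_le hl ht (Or.inl (card_eq_zero.mp hb)) hL).listColorableOn hG
  | succ b ih =>
    obtain hta | hta := Nat.le_or_eq_of_le_succ ht
    · exact (ample_of_forall_le hl ht (Or.inr hta) hL).listColorableOn hG
    have hk : P.bigCount = #P.doubles + #P.triples := rfl
    have hn : P.order = 2 * (#P.singles + P.bigCount) + 1 := by
      simp only [order, hl, card_empty]
      omega
    refine .of_small_pot (hn ▸ P.card_support_le) fun L' Y hL' hY hsub => ?_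
    replace hL (v : W) : #P.singles + P.bigCount ≤ #(L' v) := by
      have := hL v
      rw [hL']
      omega
    by_contra hnc
    have hcd (c : α) (p) (hp : p ∈ P.doubles) : ¬ ∀ v ∈ p, c ∈ L' v := fun hc => by
      have hk' := bigCount_eraseDouble hp
      have hb' := card_erase_add_one hp
      refine hnc (.of_erase (P.indep_double p hp) hc P.support_subset_eraseDouble ?_)
      refine ih (P := P.eraseDouble p) hl ht (fun v => ?_) (by rw [eraseDouble_doubles]; omega)
      have := hL v
      have := card_le_card_erase_add_one (L' v) c
      rw [eraseDouble_singles]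
      omega
    have hct (c : α) (p) (hp : p ∈ P.triples) : ¬ ∀ v ∈ p, c ∈ L' v := fun hc =>
      hnc (listColorableOn_of_forall_mem_triple hG hl ht hL hp hc)
    obtain ⟨p, hp⟩ := card_pos.mp (hta ▸ Nat.succ_pos _ : 0 < #P.triples)
    have hpot := sum_card_le_card_of_pairwiseDisjoint
      (pairwiseDisjoint_of_forall_le hG hl hta hL hcd hct hnc hp) fun v _ => hsub v
    have hsum := card_nsmul_le_sum p (fun v => #(L' v)) _ fun v _ => hL v
    rw [P.card_triple p hp, smul_eq_mul] at hsum
    omega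

end PartSystem

end Uniform

/-! ### Choosability and the chromatic number -/

section Finpartition

variable {W α : Type*} [DecidableEq W] {G : SimpleGraph W} {U : Finset W}

namespace PartSystem

/-- The system of the parts of a partition of `U` into independent sets. Parts of more than three
vertices are ignored. -/
@[simps]
def ofFinpartition (Q : Finpartition U) (hQ : ∀ p ∈ Q.parts, G.IsIndepSet (p : Set W)) :
    PartSystem G where
  singles := {v ∈ U | {v} ∈ Q.parts}
  late := ∅
  doubles := {p ∈ Q.parts | #p = 2}
  triples := {p ∈ Q.parts | #p = 3}
  card_double _ hp := (mem_filter.mp hp).2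
  card_triple _ hp := (mem_filter.mp hp).2
  indep_double _ hp := hQ _ (mem_filter.mp hp).1
  indep_triple _ hp := hQ _ (mem_filter.mp hp).1
  disjoint_triples _ hp _ hq := Q.disjoint (mem_filter.mp hp).1 (mem_filter.mp hq).1
  disjoint_singles p hp := disjoint_right.mpr fun v hv hvp => by
    rw [mem_filter] at hp hv
    have := Q.eq_of_mem_parts hp.1 hv.2 hvp (mem_singleton_self v)
    simp [this] at hp
  disjoint_late _ _ := disjoint_empty_right _

variable {Q : Finpartition U} (hQ : ∀ p ∈ Q.parts, G.IsIndepSet (p : Set W))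

theorem card_singles_ofFinpartition :
    #(ofFinpartition Q hQ).singles = #{p ∈ Q.parts | #p = 1} := by
  refine card_nbij (fun v => {v}) (fun v hv => ?_) singleton_injective.injOn fun p hp => ?_
  · simpa using (mem_filter.mp hv).2
  · rw [mem_coe, mem_filter, card_eq_one] at hp
    obtain ⟨hp, v, rfl⟩ := hp
    exact ⟨v, mem_filter.mpr ⟨Q.le hp (mem_singleton_self v), hp⟩, rfl⟩

theorem card_singles_add_bigCount_ofFinpartition (hcard : ∀ p ∈ Q.parts, #p ≤ 3) :
    #(ofFinpartition Q hQ).singles + (ofFinpartition Q hQ).bigCount = #Q.parts := by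
  rw [card_singles_ofFinpartition, bigCount, ofFinpartition_doubles, ofFinpartition_triples,
    card_filter, card_filter, card_filter, ← sum_add_distrib, ← sum_add_distrib, card_eq_sum_ones]
  refine sum_congr rfl fun p hp => ?_
  have := hcard p hp
  have := (Q.nonempty_of_mem_parts hp).card_pos
  grind

theorem order_ofFinpartition (hcard : ∀ p ∈ Q.parts, #p ≤ 3) :
    (ofFinpartition Q hQ).order = #U := by
  rw [order, card_singles_ofFinpartition, ofFinpartition_late, ofFinpartition_doubles,
    ofFinpartition_triples, card_empty, add_zero, card_filter, card_filter, card_filter, mul_sum,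
    mul_sum, ← sum_add_distrib, ← sum_add_distrib, ← Q.sum_card_parts]
  refine sum_congr rfl fun p hp => ?_
  have := hcard p hp
  have := (Q.nonempty_of_mem_parts hp).card_pos
  grind

theorem support_ofFinpartition (hcard : ∀ p ∈ Q.parts, #p ≤ 3) :
    (ofFinpartition Q hQ).support = U := by
  refine subset_antisymm (fun v hv => ?_) fun v hv => ?_
  · simp only [mem_support, ofFinpartition_singles, ofFinpartition_late, ofFinpartition_doubles,
      ofFinpartition_triples, mem_filter, notMem_empty, false_or] at hv
    obtain hv | ⟨p, hp, hv⟩ | ⟨p, hp, hv⟩ := hv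
    exacts [hv.1, Q.le hp.1 hv, Q.le hp.1 hv]
  · obtain ⟨p, hp, hvp⟩ := Q.exists_mem hv
    have := hcard p hp
    have := (Q.nonempty_of_mem_parts hp).card_pos
    rw [mem_support, ofFinpartition_singles, ofFinpartition_doubles, ofFinpartition_triples]
    obtain h | h | h : #p = 1 ∨ #p = 2 ∨ #p = 3 := by omega
    · obtain ⟨u, rfl⟩ := card_eq_one.mp h
      obtain rfl := mem_singleton.mp hvp
      exact Or.inl (mem_filter.mpr ⟨hv, hp⟩)
    · exact Or.inr (Or.inr (Or.inl ⟨p, mem_filter.mpr ⟨hp, h⟩, hvp⟩))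
    · exact Or.inr (Or.inr (Or.inr ⟨p, mem_filter.mpr ⟨hp, h⟩, hvp⟩))

end PartSystem

theorem listColorableOn_of_finpartition [Infinite α] {L : W → Finset α}
    (hG : G.IsCompleteMultipartite) (Q : Finpartition U)
    (hQ : ∀ p ∈ Q.parts, G.IsIndepSet (p : Set W)) (hcard : ∀ p ∈ Q.parts, #p ≤ 3)
    (hU : #U ≤ 2 * #Q.parts + 1) (hL : ∀ v, #Q.parts ≤ #(L v)) : ListColorableOn G L U := by
  have hparts := PartSystem.card_singles_add_bigCount_ofFinpartition hQ hcard
  have horder := PartSystem.order_ofFinpartition hQ hcard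
  rw [← PartSystem.support_ofFinpartition hQ hcard]
  refine PartSystem.listColorableOn_of_forall_le hG rfl ?_ (hparts ▸ hL)
  rw [PartSystem.order, PartSystem.ofFinpartition_late, card_empty] at horder
  rw [PartSystem.bigCount] at hparts
  omega

end Finpartition

section Coloring

variable {W α β : Type*} [Fintype W] [Fintype β] [DecidableEq β]
  {G : SimpleGraph W}

theorem parts_ofSetoid_ker [DecidableEq W] {f : W → β} (hf : f.Surjective) :
    (Finpartition.ofSetoid (Setoid.ker f)).parts =
      univ.image fun i => ({v | f v = i} : Finset W) := by
  rw [Finpartition.ofSetoid, Finpartition.ofSetSetoid_parts, ← image_univ_of_surjective hf,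
    image_image]
  refine image_congr fun v _ => ?_
  ext w
  simp [Setoid.ker_def, eq_comm]

theorem card_parts_ofSetoid_ker [DecidableEq W] {f : W → β} (hf : f.Surjective) :
    #(Finpartition.ofSetoid (Setoid.ker f)).parts = Fintype.card β := by
  rw [parts_ofSetoid_ker hf]
  refine card_image_of_injective univ fun i j hij => ?_
  obtain ⟨v, rfl⟩ := hf i
  simpa using Finset.ext_iff.mp hij v

theorem listColorableOn_univ_of_coloring [Infinite α] {L : W → Finset α}
    (K : G.Coloring β) (hK : Function.Surjective K) (hcard : ∀ i, #{v | K v = i} ≤ 3)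
    (hW : Fintype.card W ≤ 2 * Fintype.card β + 1) (hL : ∀ v, Fintype.card β ≤ #(L v)) :
    ListColorableOn G L univ := by
  classical
  have hmulti : ((⊤ : SimpleGraph β).comap K).IsCompleteMultipartite :=
    ⟨fun u v w => by simpa using Eq.trans⟩
  have hparts {p : Finset W} (hp : p ∈ (Finpartition.ofSetoid (Setoid.ker K)).parts) :
      ∃ i, ({v | K v = i} : Finset W) = p := by
    simpa only [parts_ofSetoid_ker hK, mem_image_univ_iff_mem_range, Set.mem_range] using hp
  rw [← card_parts_ofSetoid_ker hK] at hW hL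
  have hindep : ∀ p ∈ (Finpartition.ofSetoid (Setoid.ker K)).parts,
      ((⊤ : SimpleGraph β).comap K).IsIndepSet (p : Set W) := fun p hp => by
    obtain ⟨i, rfl⟩ := hparts hp
    simp +contextual [SimpleGraph.isIndepSet_iff, Set.Pairwise]
  have hle : ∀ p ∈ (Finpartition.ofSetoid (Setoid.ker K)).parts, #p ≤ 3 := fun p hp => by
    obtain ⟨i, rfl⟩ := hparts hp
    exact hcard i
  obtain ⟨c, hc, hadj⟩ := listColorableOn_of_finpartition hmulti _ hindep hle hW hL
  exact ⟨c, hc, fun u hu v hv huv => hadj u hu v hv (K.valid huv)⟩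

end Coloring

section Choosable

variable {W : Type} {G : SimpleGraph W} {k : ℕ}

theorem surjective_of_coloring_chromNum (K : G.Coloring (Fin (chromNum G))) :
    Function.Surjective K :=
  SimpleGraph.le_chromaticNumber_iff_forall_surjective.mp
    (SimpleGraph.Colorable.chromaticNumber_eq_sInf ⟨K⟩).ge K

theorem colorable_of_choosable (h : Choosable G fun _ => k) : G.Colorable k := by
  obtain ⟨c, hc, hadj⟩ := h (fun _ => range k) fun _ => card_range k
  exact ⟨.mk (fun v => ⟨c v, mem_range.mp (hc v)⟩) fun huv h => hadj _ _ huv (congrArg Fin.val h)⟩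

theorem chromNum_eq_choiceNumber_of_choosable (h : Choosable G fun _ => chromNum G) :
    chromNum G = choiceNumber G := by
  have hch : Choosable G fun _ => choiceNumber G :=
    Nat.sInf_mem (s := {k | Choosable G fun _ => k}) ⟨_, h⟩
  exact (Nat.sInf_le (colorable_of_choosable hch)).antisymm (Nat.sInf_le h)

end Choosable

end Ohba

/-- Ohba's conjecture for independence number at most 3: if every independent set of `G`
has size at most 3 and `|V(G)| ≤ 2χ(G) + 1`, then the choice number of `G` equals its
chromatic number. -/
theorem ohba_of_independence_le_three (G : SimpleGraph V)
    (hInd : ∀ s : Finset V, (∀ u ∈ s, ∀ v ∈ s, ¬ G.Adj u v) → s.card ≤ 3)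
    (hcard : Fintype.card V ≤ 2 * chromNum G + 1) :
    chromNum G = choiceNumber G := by
  refine Ohba.chromNum_eq_choiceNumber_of_choosable fun L hL => ?_
  obtain ⟨K⟩ : G.Colorable (chromNum G) :=
    Nat.sInf_mem (s := {n | G.Colorable n}) ⟨_, G.colorable_of_fintype⟩
  have hclass (i : Fin (chromNum G)) : Finset.card {v | K v = i} ≤ 3 := by
    refine hInd _ fun u hu v hv huv => K.valid huv ?_
    rw [Finset.mem_filter] at hu hv
    exact hu.2.trans hv.2.symm
  obtain ⟨c, hc, hadj⟩ := Ohba.listColorableOn_univ_of_coloring (L := L) K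
    (Ohba.surjective_of_coloring_chromNum K) hclass (by rwa [Fintype.card_fin])
    fun v => by rw [Fintype.card_fin, hL]
  exact ⟨c, fun v => hc v (Finset.mem_univ v),
    fun u v => hadj u (Finset.mem_univ u) v (Finset.mem_univ v)⟩
end

section
/- Let G be a complete multipartite graph with every part of size 1 or 3. Let the set of parts of G be partitioned into three classes 𝒜, 𝒮, 𝒞 such that 𝒜 and 𝒮 contain only parts of size 1 and 𝒞 contains all parts of size 3; let k₁ = |𝒜|, s = |𝒮|, k₃ = |𝒞|, and fix orderings 𝒜 = (A₁, …, A_{k₁}) and 𝒮 = (S₁, …, S_s). Suppose f : V(G) → ℕ satisfies: (1) f(v) ≥ k₃ + i for all 1 ≤ i ≤ k₁ and v ∈ A_i; (1') f(v) ≥ 2k₃ + k₁ + i for all 1 ≤ i ≤ s and v ∈ S_i; (3.1) f(v) ≥ k₃ for all v in any C ∈ 𝒞; (3.2) f(u) + f(v) ≥ 2k₃ + k₁ for all distinct u, v in any C ∈ 𝒞; (3.3) Σ_{v∈C} f(v) ≥ 4k₃ + 2k₁ + s − 1 for all C ∈ 𝒞. Then G is f-choosable. -/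
variable {V : Type} [Fintype V] [DecidableEq V]

/-!
If the three lists of a triple share a colour, or two of them share a colour and the third list is
large, spend that colour on the vertices having it and move the remaining vertex to the end of
`𝒮` or `𝒜`: the conditions survive with one triple fewer. Once no such step is possible, any two
intersecting lists of a triple leave a third list of size less than `k₃ + k₁`. Then every triple
either has a large union of lists, and is cut into singletons, or by averaging has a pair that can
be merged into one vertex whose list is the intersection. The singletons and merged pairs have
a system of distinct representatives by Hall's theorem.
-/

section

open Finset

variable {W α β κ : Type*}

/-- An order-free form of "the elements of `A` can be listed as `v₁, …, vₘ` with `b + i ≤ f vᵢ`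
for all `i`". -/
def Staircase (f : W → ℕ) (b : ℕ) (A : Finset W) : Prop :=
  ∀ X ⊆ A, X.Nonempty → ∃ v ∈ X, b + #X ≤ f v

namespace Staircase

theorem of_shift {f f' : W → ℕ} {b b' : ℕ} {A : Finset W} (h : Staircase f b A)
    (hf : ∀ v ∈ A, b' + f v ≤ b + f' v) : Staircase f' b' A := by
  intro X hXA hX
  obtain ⟨v, hv, hle⟩ := h X hXA hX
  exact ⟨v, hv, by have := hf v (hXA hv); omega⟩

theorem insert [DecidableEq W] {f : W → ℕ} {b : ℕ} {A : Finset W} (h : Staircase f b A) {z : W}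
    (hz : b + (#A + 1) ≤ f z) : Staircase f b (insert z A) := by
  intro X hXA hX
  by_cases hzX : z ∈ X
  · have : #X ≤ #A + 1 := (card_le_card hXA).trans (card_insert_le z A)
    exact ⟨z, hzX, by omega⟩
  · exact h X ((subset_insert_iff_of_notMem hzX).1 hXA) hX

theorem map {f : W → ℕ} {b : ℕ} {A : Finset W} {g : β → ℕ} (h : Staircase f b A) (e : W ↪ β)
    (hg : ∀ v ∈ A, f v ≤ g (e v)) : Staircase g b (A.map e) := by
  intro X hXA hX
  obtain ⟨Y, hYA, rfl⟩ := subset_map_iff.1 hXA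
  obtain ⟨v, hv, hle⟩ := h Y hYA (map_nonempty.1 hX)
  exact ⟨e v, mem_map_of_mem e hv, by rw [card_map]; exact hle.trans (hg v (hYA hv))⟩

theorem biUnion_fin [DecidableEq W] {n : ℕ} {B : Fin n → Finset W} {f : W → ℕ} {b : ℕ}
    (hB : ∀ i, #(B i) ≤ 1) (hf : ∀ i, ∀ v ∈ B i, b + (i + 1) ≤ f v) :
    Staircase f b (univ.biUnion B) := by
  intro X hXB hX
  have : Nonempty (Fin n) := ⟨(mem_biUnion.1 (hXB hX.choose_spec)).choose⟩
  choose! r hr using fun v (hv : v ∈ univ.biUnion B) => mem_biUnion.1 hv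
  obtain ⟨v, hv, hmax⟩ := X.exists_max_image r hX
  have hX_sub : X ⊆ (Iic (r v)).biUnion B := fun u hu =>
    mem_biUnion.2 ⟨r u, mem_Iic.2 (hmax u hu), (hr u (hXB hu)).2⟩
  have hX_card : #X ≤ r v + 1 := by
    simpa using (card_le_card hX_sub).trans (card_biUnion_le_card_mul _ _ 1 fun i _ => hB i)
  exact ⟨v, hv, by have := hf (r v) v (hr v (hXB hv)).2; omega⟩

theorem inter_eq_empty [DecidableEq β] [DecidableEq α] {T : β → Finset α} {b : ℕ}
    {A X : Finset β} (h : Staircase (fun B => #(T B)) b A)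
    (hlt : #(X.biUnion T) < b + #(X ∩ A)) : X ∩ A = ∅ := by
  by_contra hne
  obtain ⟨B, hB, (hle : b + #(X ∩ A) ≤ #(T B))⟩ :=
    h _ inter_subset_right (nonempty_iff_ne_empty.2 hne)
  have := card_le_card (subset_biUnion_of_mem T (mem_inter.1 hB).1)
  omega

end Staircase

/-- `D` is a family of indices whose sets under `T` have size at least `m`, and whose pairwise
unions have size at least `m + b`. -/
structure PairwiseBound [DecidableEq α] (T : β → Finset α) (m b : ℕ) (D : Finset β) : Prop where
  le_card : ∀ B ∈ D, m ≤ #(T B)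
  le_card_union : ∀ B ∈ D, ∀ B' ∈ D, B ≠ B' → m + b ≤ #(T B ∪ T B')

namespace PairwiseBound

variable [DecidableEq β] [DecidableEq α] {T : β → Finset α} {m b : ℕ} {D X : Finset β}

theorem card_inter_le_zero (h : PairwiseBound T m b D) (hlt : #(X.biUnion T) < m) :
    #(X ∩ D) ≤ 0 := by
  by_contra! hpos
  obtain ⟨B, hB⟩ := card_pos.1 hpos
  rw [mem_inter] at hB
  have := h.le_card B hB.2
  have := card_le_card (subset_biUnion_of_mem T hB.1)
  omega

theorem card_inter_le_one (h : PairwiseBound T m b D) (hlt : #(X.biUnion T) < m + b) :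
    #(X ∩ D) ≤ 1 := by
  by_contra! htwo
  obtain ⟨B, hB, B', hB', hne⟩ := one_lt_card.1 htwo
  rw [mem_inter] at hB hB'
  have := h.le_card_union B hB.2 B' hB'.2 hne
  have := card_le_card
    (union_subset (subset_biUnion_of_mem T hB.1) (subset_biUnion_of_mem T hB'.1))
  omega

end PairwiseBound

theorem card_le_of_card_inter_le [DecidableEq β] {A S X : Finset β}
    {𝒞 U : Finset κ} {D : κ → Finset β} (hX : X ⊆ A ∪ S ∪ 𝒞.biUnion D) (hU : U ⊆ 𝒞) (m : ℕ)
    (h_mem : ∀ C ∈ U, #(X ∩ D C) ≤ m + 1) (h_notMem : ∀ C ∈ 𝒞, C ∉ U → #(X ∩ D C) ≤ m) :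
    #X ≤ #(X ∩ A) + #(X ∩ S) + (#𝒞 * m + #U) := by
  classical
  have h_cover : X = X ∩ A ∪ X ∩ S ∪ 𝒞.biUnion fun C => X ∩ D C := by
    rw [← inter_biUnion, ← inter_union_distrib_left, ← inter_union_distrib_left,
      inter_eq_left.2 hX]
  calc #X ≤ #(X ∩ A) + #(X ∩ S) + ∑ C ∈ 𝒞, #(X ∩ D C) := by
        conv_lhs => rw [h_cover]
        exact (card_union_le _ _).trans (add_le_add (card_union_le _ _) card_biUnion_le)
    _ ≤ #(X ∩ A) + #(X ∩ S) + ∑ C ∈ 𝒞, (m + if C ∈ U then 1 else 0) := by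
        gcongr with C hC
        split_ifs with hCU
        exacts [h_mem C hCU, h_notMem C hC hCU]
    _ = #(X ∩ A) + #(X ∩ S) + (#𝒞 * m + #U) := by
        rw [sum_add_distrib, sum_const, smul_eq_mul, sum_boole, filter_mem_eq_inter,
          inter_eq_right.2 hU, Nat.cast_id]

theorem card_inter_le_two_of_lt [DecidableEq α] [DecidableEq β] {T : β → Finset α}
    {A S X : Finset β} {𝒞 U : Finset κ} {D : κ → Finset β} (hX : X ⊆ A ∪ S ∪ 𝒞.biUnion D)
    (hU : U ⊆ 𝒞) (h_three : ∀ C ∈ U, #(D C) ≤ 3)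
    (h_union : ∀ C ∈ U, #(X ∩ A) + #(X ∩ S) + (#𝒞 * 2 + #U) ≤ #((D C).biUnion T))
    (h_two : ∀ C ∈ 𝒞, C ∉ U → #(D C) ≤ 2) (hlt : #(X.biUnion T) < #X) :
    ∀ C ∈ 𝒞, #(X ∩ D C) ≤ 2 := by
  have hX3 := card_le_of_card_inter_le hX hU 2
    (fun C hC => (card_le_card inter_subset_right).trans (h_three C hC))
    (fun C hC hCU => (card_le_card inter_subset_right).trans (h_two C hC hCU))
  intro C hC
  by_cases hCU : C ∈ U
  · by_contra! h_gt
    have hDX : D C ⊆ X := inter_eq_right.1 <|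
      eq_of_subset_of_card_le inter_subset_right ((h_three C hCU).trans h_gt)
    have := card_le_card (biUnion_subset_biUnion_of_subset_left T hDX)
    have := h_union C hCU
    omega
  · exact (card_le_card inter_subset_right).trans (h_two C hC hCU)

theorem card_le_card_biUnion_of_bounds [DecidableEq α] [DecidableEq β]
    {T : β → Finset α} {A S X : Finset β} {𝒞 U H : Finset κ} {D : κ → Finset β}
    (hA : Staircase (fun B => #(T B)) #𝒞 A)
    (hS : Staircase (fun B => #(T B)) (2 * #𝒞 + #A) S)
    (hU : U ⊆ 𝒞) (hH : H ⊆ 𝒞)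
    (h_three : ∀ C ∈ U, #(D C) ≤ 3)
    (h_union : ∀ C ∈ U, 2 * #𝒞 + #A + #S + #U ≤ #((D C).biUnion T))
    (h_two : ∀ C ∈ 𝒞, C ∉ U → #(D C) ≤ 2)
    (h_bound : ∀ C ∈ 𝒞, C ∉ H → PairwiseBound T #𝒞 (#𝒞 + #A) (D C))
    (h_boundH : ∀ C ∈ H, PairwiseBound T #H (#𝒞 + #A) (D C))
    (hX : X ⊆ A ∪ S ∪ 𝒞.biUnion D) :
    #X ≤ #(X.biUnion T) := by
  -- Each lower bound on `#(X.biUnion T)` limits how `X` meets some groups; this lowers the upper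
  -- bound on `#X` far enough for the next lower bound to apply, until `X` is empty.
  classical
  by_contra! hlt
  have hXA : #(X ∩ A) ≤ #A := card_le_card inter_subset_right
  have hXS : #(X ∩ S) ≤ #S := card_le_card inter_subset_right
  have h_le_two := card_inter_le_two_of_lt hX hU h_three (fun C hC => by
    have := h_union C hC
    omega) h_two hlt
  have hX2 := card_le_of_card_inter_le hX (empty_subset 𝒞) 2 (by simp) fun C hC _ => h_le_two C hC
  rw [card_empty] at hX2
  have hS0 : #(X ∩ S) = 0 := card_eq_zero.2 (hS.inter_eq_empty (by omega))
  have h_le_one : ∀ C ∈ 𝒞, C ∉ H → #(X ∩ D C) ≤ 1 := fun C hC hCH =>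
    (h_bound C hC hCH).card_inter_le_one (by omega)
  have hX2H := card_le_of_card_inter_le hX hH 1 (fun C hC => h_le_two C (hH hC)) h_le_one
  have h_le_oneH : ∀ C ∈ H, #(X ∩ D C) ≤ 1 := fun C hC =>
    (h_boundH C hC).card_inter_le_one (by omega)
  have hX1 := card_le_of_card_inter_le hX (empty_subset 𝒞) 1 (by simp) fun C hC _ =>
    if hCH : C ∈ H then h_le_oneH C hCH else h_le_one C hC hCH
  rw [card_empty] at hX1
  have hA0 : #(X ∩ A) = 0 := card_eq_zero.2 (hA.inter_eq_empty (by omega))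
  have h_le_zero : ∀ C ∈ 𝒞, C ∉ H → #(X ∩ D C) ≤ 0 := fun C hC hCH =>
    (h_bound C hC hCH).card_inter_le_zero (by omega)
  have hX1H := card_le_of_card_inter_le hX hH 0 h_le_oneH h_le_zero
  have hX0 := card_le_of_card_inter_le hX (empty_subset 𝒞) 0 (by simp) fun C hC _ =>
    if hCH : C ∈ H then (h_boundH C hCH).card_inter_le_zero (by omega) else h_le_zero C hC hCH
  rw [card_empty] at hX0
  omega

theorem exists_subset_threshold (N : Finset κ) (u : κ → ℕ) (b : ℕ) :
    ∃ U ⊆ N, (∀ C ∈ U, b + #U ≤ u C) ∧ ∀ C ∈ N, C ∉ U → u C ≤ b + #U := by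
  have h_ex : ∃ q, #{C ∈ N | b + q < u C} ≤ q := ⟨#N, card_filter_le _ _⟩
  classical
  set q := Nat.find h_ex
  have h_above : #{C ∈ N | b + q < u C} ≤ q := Nat.find_spec h_ex
  have h_from : q ≤ #{C ∈ N | b + q ≤ u C} := by
    cases hq' : q with
    | zero => exact Nat.zero_le _
    | succ p =>
      have := Nat.find_min h_ex (show p < Nat.find h_ex by omega)
      simpa only [not_le, Nat.succ_le_iff, ← add_assoc] using this
  obtain ⟨U, hU_above, hU_from, hU_card⟩ := exists_subsuperset_card_eq
    (monotone_filter_right N fun C _ (h : b + q < u C) => h.le) h_above h_from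
  rw [← hU_card] at hU_above hU_from
  refine ⟨U, fun C hC => (mem_filter.1 (hU_from hC)).1,
    fun C hC => (mem_filter.1 (hU_from hC)).2, fun C hC hCU => ?_⟩
  by_contra! h
  exact hCU (hU_above (mem_filter.2 ⟨hC, h⟩))

/-- A proper partial colouring of `G` on the vertex set `Y` with colours from the lists `L`
exists. Colours are assigned to all vertices, but constrained only on `Y`. -/
def ListColourableOn (G : SimpleGraph W) (L : W → Finset α) (Y : Finset W) : Prop :=
  ∃ c : W → α, (∀ v ∈ Y, c v ∈ L v) ∧ ∀ u ∈ Y, ∀ v ∈ Y, G.Adj u v → c u ≠ c v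

theorem ListColourableOn.of_erase [DecidableEq W] [DecidableEq α] {G : SimpleGraph W}
    {L : W → Finset α} {D Y Y' : Finset W} {x : α}
    (h : ListColourableOn G (fun v => (L v).erase x) Y') (hD : G.IsIndepSet (D : Set W))
    (hx : ∀ v ∈ D, x ∈ L v) (hY : Y ⊆ D ∪ Y') : ListColourableOn G L Y := by
  obtain ⟨c, hc_mem, hc_adj⟩ := h
  have h_rest : ∀ v ∈ Y, v ∉ D → v ∈ Y' := fun v hv hvD =>
    (mem_union.1 (hY hv)).resolve_left hvD
  refine ⟨fun v => if v ∈ D then x else c v, fun v hv => ?_, fun u hu v hv huv => ?_⟩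
  · by_cases hvD : v ∈ D
    · simpa only [hvD, if_true] using hx v hvD
    · simpa only [hvD, if_false] using mem_of_mem_erase (hc_mem v (h_rest v hv hvD))
  · by_cases huD : u ∈ D <;> by_cases hvD : v ∈ D <;> simp only [huD, hvD, if_true, if_false]
    · exact absurd huv (hD huD hvD huv.ne)
    · exact (ne_of_mem_erase (hc_mem v (h_rest v hv hvD))).symm
    · exact ne_of_mem_erase (hc_mem u (h_rest u hu huD))
    · exact hc_adj u (h_rest u hu huD) v (h_rest v hv hvD) huv

/-- The colours available to all vertices of `B`; empty for `B = ∅`. -/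
def commonColours [DecidableEq α] (L : W → Finset α) (B : Finset W) : Finset α :=
  {x ∈ B.biUnion L | ∀ v ∈ B, x ∈ L v}

section commonColours

variable [DecidableEq α] (L : W → Finset α)

theorem commonColours_subset {B : Finset W} {v : W} (hv : v ∈ B) : commonColours L B ⊆ L v :=
  fun _ hx => (mem_filter.1 hx).2 v hv

@[simp]
theorem commonColours_singleton (v : W) : commonColours L {v} = L v := by
  ext x
  simp [commonColours]

@[simp]
theorem commonColours_pair [DecidableEq W] (u v : W) :
    commonColours L {u, v} = L u ∩ L v := by
  ext x
  simp only [commonColours, mem_filter, mem_biUnion, mem_insert, mem_singleton, mem_inter,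
    forall_eq_or_imp, forall_eq, exists_eq_or_imp, exists_eq_left]
  tauto

end commonColours

/-- Each block of the family is given a single colour, so overlapping blocks do no harm. -/
theorem listColourableOn_of_hall [Nonempty α] [DecidableEq α] {G : SimpleGraph W}
    {L : W → Finset α} {Y : Finset W} {𝓑 : Finset (Finset W)}
    (h_indep : ∀ B ∈ 𝓑, G.IsIndepSet (B : Set W)) (h_cover : ∀ v ∈ Y, ∃ B ∈ 𝓑, v ∈ B)
    (h_hall : ∀ X ⊆ 𝓑, #X ≤ #(X.biUnion (commonColours L))) : ListColourableOn G L Y := by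
  classical
  obtain ⟨g, hg_inj, hg_mem⟩ := (all_card_le_biUnion_card_iff_exists_injective
    fun B : 𝓑 => commonColours L B).1 fun X => by
      have := h_hall (X.image Subtype.val) (image_subset_iff.2 fun B _ => B.2)
      rwa [card_image_of_injective X Subtype.val_injective, image_biUnion] at this
  choose! block h_block h_mem using h_cover
  refine ⟨fun v => if hv : v ∈ Y then g ⟨block v, h_block v hv⟩ else Classical.arbitrary α,
    fun v hv => ?_, fun u hu v hv huv => ?_⟩
  · simp only [dif_pos hv]
    exact commonColours_subset L (h_mem v hv) (hg_mem ⟨block v, h_block v hv⟩)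
  · simp only [dif_pos hu, dif_pos hv]
    intro h_eq
    have h_same : block u = block v := congrArg Subtype.val (hg_inj h_eq)
    exact h_indep _ (h_block v hv) (h_same ▸ h_mem u hu) (h_mem v hv) huv.ne huv

/-- `x, y, z` is an enumeration of the three-element set `C`. -/
structure IsTriple [DecidableEq W] (C : Finset W) (x y z : W) : Prop where
  ne₁₂ : x ≠ y
  ne₁₃ : x ≠ z
  ne₂₃ : y ≠ z
  eq : C = {x, y, z}

section IsTriple

variable [DecidableEq W] {C : Finset W} {x y z : W}

theorem IsTriple.swap (h : IsTriple C x y z) : IsTriple C y x z := by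
  obtain ⟨hxy, hxz, hyz, rfl⟩ := h
  exact ⟨hxy.symm, hyz, hxz, insert_comm x y {z}⟩

theorem IsTriple.rotate (h : IsTriple C x y z) : IsTriple C y z x := by
  obtain ⟨hxy, hxz, hyz, rfl⟩ := h
  exact ⟨hyz, hxy.symm, hxz.symm, by rw [insert_comm, pair_comm x z]⟩

theorem IsTriple.sum_eq (h : IsTriple C x y z) (f : W → ℕ) :
    ∑ v ∈ C, f v = f x + f y + f z := by
  obtain ⟨hxy, hxz, hyz, rfl⟩ := h
  rw [sum_insert (by simp [hxy, hxz]), sum_pair hyz, add_assoc]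

theorem exists_isTriple (hC : #C = 3) (hx : x ∈ C) (hy : y ∈ C) (hxy : x ≠ y) :
    ∃ z, IsTriple C x y z := by
  obtain ⟨z, hz, hz_notMem⟩ := exists_mem_notMem_of_card_lt_card
    (show #{x, y} < #C by rw [hC, card_pair hxy]; norm_num)
  simp only [mem_insert, mem_singleton, not_or] at hz_notMem
  have hxz := Ne.symm hz_notMem.1
  have hyz := Ne.symm hz_notMem.2
  refine ⟨z, hxy, hxz, hyz, (eq_of_subset_of_card_le ?_ ?_).symm⟩
  · simp [insert_subset_iff, hx, hy, hz]
  · rw [hC, card_eq_three.2 ⟨x, y, z, hxy, hxz, hyz, rfl⟩]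

end IsTriple

/-- The conditions (3.1)–(3.3) on a triple `C`, for `k` triples and classes of sizes `a` and
`s`. -/
structure TripleBound (f : W → ℕ) (k a s : ℕ) (C : Finset W) : Prop where
  le : ∀ v ∈ C, k ≤ f v
  le_add : ∀ u ∈ C, ∀ v ∈ C, u ≠ v → 2 * k + a ≤ f u + f v
  le_sum : 4 * k + 2 * a + s ≤ ∑ v ∈ C, f v + 1

theorem TripleBound.mono {f : W → ℕ} {k k' a a' s s' : ℕ} {C : Finset W}
    (h : TripleBound f k a s C) (hk : k' ≤ k) (ha : a' ≤ a) (hs : s' ≤ s) :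
    TripleBound f k' a' s' C where
  le v hv := hk.trans (h.le v hv)
  le_add u hu v hv huv := by have := h.le_add u hu v hv huv; omega
  le_sum := by have := h.le_sum; omega

/-- The conditions (1), (1'), (3.1)–(3.3) on `f`, for the classes of singletons `A` and `S` and the
class `𝒞` of triples. The orderings of `A` and `S` are hidden in `Staircase`, and the sets
need not be disjoint. -/
structure Feasible (f : W → ℕ) (A S : Finset W) (𝒞 : Finset (Finset W)) : Prop where
  staircase_A : Staircase f #𝒞 A
  staircase_S : Staircase f (2 * #𝒞 + #A) S
  card_eq_three : ∀ C ∈ 𝒞, #C = 3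
  tripleBound : ∀ C ∈ 𝒞, TripleBound f #𝒞 #A #S C

namespace Feasible

variable {f f' : W → ℕ} {A S : Finset W} {𝒞 : Finset (Finset W)} {C : Finset W} {z : W}

theorem sum_le_sum_add_three (h : Feasible f A S 𝒞) (hC : C ∈ 𝒞) (hf : ∀ v, f v ≤ f' v + 1) :
    ∑ v ∈ C, f v ≤ ∑ v ∈ C, f' v + 3 := by
  calc ∑ v ∈ C, f v ≤ ∑ v ∈ C, (f' v + 1) := sum_le_sum fun v _ => hf v
    _ = ∑ v ∈ C, f' v + 3 := by rw [sum_add_distrib, sum_const, h.card_eq_three C hC, smul_eq_mul]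

variable [DecidableEq W]

theorem erase (h : Feasible f A S 𝒞) (hC : C ∈ 𝒞) (hf : ∀ v, f v ≤ f' v + 1) :
    Feasible f' A S (𝒞.erase C) := by
  have hk := card_erase_add_one hC
  refine ⟨h.staircase_A.of_shift fun v _ => ?_, h.staircase_S.of_shift fun v _ => ?_,
    fun C' hC' => h.card_eq_three C' (mem_of_mem_erase hC'), fun C' hC' => ?_⟩
  · have := hf v; omega
  · have := hf v; omega
  have hC'_mem := mem_of_mem_erase hC'
  have hb := h.tripleBound C' hC'_mem
  refine ⟨fun v hv => ?_, fun u hu v hv huv => ?_, ?_⟩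
  · have := hb.le v hv; have := hf v; omega
  · have := hb.le_add u hu v hv huv; have := hf u; have := hf v; omega
  · have := hb.le_sum; have := h.sum_le_sum_add_three hC'_mem hf; omega

theorem move_S (h : Feasible f A S 𝒞) (hC : C ∈ 𝒞) (hf : ∀ v, f v ≤ f' v + 1)
    (hz : 2 * #𝒞 + #A + #S ≤ f' z + 1) : Feasible f' A (insert z S) (𝒞.erase C) := by
  have hk := card_erase_add_one hC
  have he := h.erase hC hf
  refine ⟨he.staircase_A, he.staircase_S.insert (by omega), he.card_eq_three, fun C' hC' => ?_⟩
  have hb := he.tripleBound C' hC'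
  have hC'_mem := mem_of_mem_erase hC'
  refine ⟨hb.le, hb.le_add, ?_⟩
  have := (h.tripleBound C' hC'_mem).le_sum
  have := h.sum_le_sum_add_three hC'_mem hf
  have := card_insert_le z S
  omega

theorem move_A (h : Feasible f A S 𝒞) (hC : C ∈ 𝒞) (hf : ∀ v, f v ≤ f' v + 1)
    (hz : #𝒞 + #A ≤ f' z)
    (h_add : ∀ C' ∈ 𝒞, ∀ u ∈ C', ∀ v ∈ C', u ≠ v → 2 * #𝒞 + #A ≤ f' u + f' v + 1)
    (h_sum : ∀ C' ∈ 𝒞, ∑ v ∈ C', f v ≤ ∑ v ∈ C', f' v + 2) :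
    Feasible f' (insert z A) S (𝒞.erase C) := by
  have hk := card_erase_add_one hC
  have ha := card_insert_le z A
  have he := h.erase hC hf
  refine ⟨he.staircase_A.insert (by omega), h.staircase_S.of_shift fun v _ => ?_,
    he.card_eq_three, fun C' hC' => ?_⟩
  · have := hf v; omega
  have hC'_mem := mem_of_mem_erase hC'
  refine ⟨(he.tripleBound C' hC').le, fun u hu v hv huv => ?_, ?_⟩
  · have := h_add C' hC'_mem u hu v hv huv; omega
  · have := (h.tripleBound C' hC'_mem).le_sum; have := h_sum C' hC'_mem; omega

end Feasible

theorem card_union_three_add_card_inter [DecidableEq α] {X Y Z : Finset α}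
    (h : Disjoint (X ∩ Y) Z) :
    #(X ∪ (Y ∪ Z)) + (#(X ∩ Y) + #(X ∩ Z) + #(Y ∩ Z)) = #X + #Y + #Z := by
  have h_disj : Disjoint (X ∩ Y) (X ∩ Z) := h.mono_right inter_subset_right
  have h_inter : #(X ∩ (Y ∪ Z)) = #(X ∩ Y) + #(X ∩ Z) := by
    rw [inter_union_distrib_left, card_union_of_disjoint h_disj]
  have := card_union_add_card_inter X (Y ∪ Z)
  have := card_union_add_card_inter Y Z
  omega

theorem card_le_card_erase_add_one [DecidableEq α] (s : Finset α) (c : α) :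
    #s ≤ #(s.erase c) + 1 :=
  Nat.sub_le_iff_le_add.1 pred_card_le_card_erase

theorem sum_card_le_sum_card_erase_add_two [DecidableEq α] {L : W → Finset α} {C : Finset W}
    {c : α} (hC : #C = 3) (hc : ∃ v ∈ C, c ∉ L v) :
    ∑ v ∈ C, #(L v) ≤ ∑ v ∈ C, #((L v).erase c) + 2 := by
  classical
  obtain ⟨v, hv, hcv⟩ := hc
  calc ∑ u ∈ C, #(L u) = ∑ u ∈ C.erase v, #(L u) + #(L v) := (sum_erase_add _ _ hv).symm
    _ ≤ ∑ u ∈ C.erase v, (#((L u).erase c) + 1) + #((L v).erase c) := by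
        rw [erase_eq_of_notMem hcv]
        gcongr
        exact card_le_card_erase_add_one _ c
    _ = ∑ u ∈ C, #((L u).erase c) + 2 := by
        rw [sum_add_distrib, ← sum_erase_add C _ hv, sum_const, card_erase_of_mem hv, hC,
          smul_eq_mul, add_right_comm]

/-- The lists of `C` admit none of the three reductions: no colour is common to all of them, and
two lists intersect only if the remaining one is smaller than `b`. -/
structure IsIrreducibleTriple [DecidableEq W] [DecidableEq α] (L : W → Finset α) (b : ℕ)
    (C : Finset W) : Prop where
  exists_notMem : ∀ x, ∃ v ∈ C, x ∉ L v
  card_lt : ∀ x y z, IsTriple C x y z → (L x ∩ L y).Nonempty → #(L z) < b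

/-- The triple `C` can be coloured in two blocks, a pair and a singleton, whose lists of available
colours satisfy `PairwiseBound`. -/
def Mergeable [DecidableEq W] [DecidableEq α] (L : W → Finset α) (m b : ℕ)
    (C : Finset W) : Prop :=
  ∃ x y z, IsTriple C x y z ∧ m ≤ #(L x ∩ L y) ∧ m ≤ #(L z) ∧ m + b ≤ #((L x ∩ L y) ∪ L z)

section Triples

variable [DecidableEq W] [DecidableEq α] {L : W → Finset α} {b m k a s q : ℕ} {C : Finset W}
  {x y z : W}

theorem disjoint_of_forall_exists_notMem (h : ∀ c, ∃ v ∈ C, c ∉ L v) (ht : IsTriple C x y z) :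
    Disjoint (L x ∩ L y) (L z) := by
  refine disjoint_left.2 fun c hxy hz => ?_
  obtain ⟨v, hv, hcv⟩ := h c
  rw [mem_inter] at hxy
  rw [ht.eq] at hv
  simp only [mem_insert, mem_singleton] at hv
  rcases hv with rfl | rfl | rfl
  exacts [hcv hxy.1, hcv hxy.2, hcv hz]

theorem IsIrreducibleTriple.mergeable (h : IsIrreducibleTriple L b C) (ht : IsTriple C x y z)
    (hne : (L x ∩ L y).Nonempty) (hz : m ≤ #(L z)) (h_sum : m + b ≤ #(L x ∩ L y) + #(L z)) :
    Mergeable L m b C := by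
  have := h.card_lt x y z ht hne
  have h_disj := disjoint_of_forall_exists_notMem h.exists_notMem ht
  exact ⟨x, y, z, ht, by omega, hz, by rwa [card_union_of_disjoint h_disj]⟩

theorem IsIrreducibleTriple.card_biUnion_add (h : IsIrreducibleTriple L b C)
    (ht : IsTriple C x y z) :
    #(C.biUnion L) + (#(L x ∩ L y) + #(L x ∩ L z) + #(L y ∩ L z)) =
      #(L x) + #(L y) + #(L z) := by
  rw [ht.eq, biUnion_insert, biUnion_insert, singleton_biUnion]
  exact card_union_three_add_card_inter (disjoint_of_forall_exists_notMem h.exists_notMem ht)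

theorem IsIrreducibleTriple.le_card_union_of_not_mergeable (h : IsIrreducibleTriple L (k + a) C)
    (hb : TripleBound (fun v => #(L v)) k a s C) (hC : #C = 3) (hm : ¬ Mergeable L k (k + a) C)
    (hx : x ∈ C) (hy : y ∈ C) (hxy : x ≠ y) : k + (k + a) ≤ #(L x ∪ L y) := by
  obtain ⟨z, ht⟩ := exists_isTriple hC hx hy hxy
  have h_sum := hb.le_sum
  have h_add := hb.le_add x hx y hy hxy
  rw [ht.sum_eq] at h_sum
  have h_union := card_union_add_card_inter (L x) (L y)
  rcases (L x ∩ L y).eq_empty_or_nonempty with h_empty | hne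
  · rw [h_empty, card_empty] at h_union
    omega
  · have : #(L x ∩ L y) + #(L z) < k + (k + a) := by
      by_contra! h_ge
      exact hm (h.mergeable ht hne (hb.le z (by simp [ht.eq])) h_ge)
    omega

/-- Averaging: the pairs with a common colour cannot all fall short of the required bound. -/
theorem IsIrreducibleTriple.mergeable_of_card_biUnion_le (h : IsIrreducibleTriple L (k + a) C)
    (hb : TripleBound (fun v => #(L v)) k a s C) (hC : #C = 3) (hm : 0 < m) (hq : q + m ≤ k)
    (hu : #(C.biUnion L) ≤ 2 * k + a + s + q) : Mergeable L m (k + a) C := by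
  by_contra h_not
  have h_short : ∀ x y z, IsTriple C x y z → 0 < #(L x ∩ L y) →
      #(L z) < k + a ∧ #(L x ∩ L y) + #(L z) < m + (k + a) := by
    intro x y z ht h_pos
    have hz := hb.le z (by simp [ht.eq])
    refine ⟨h.card_lt x y z ht (card_pos.1 h_pos), ?_⟩
    by_contra! h_ge
    exact h_not (h.mergeable ht (card_pos.1 h_pos) (by omega) h_ge)
  obtain ⟨x, y, z, hxy, hxz, hyz, hC_eq⟩ := card_eq_three.1 hC
  have ht : IsTriple C x y z := ⟨hxy, hxz, hyz, hC_eq⟩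
  have hx : x ∈ C := by simp [hC_eq]
  have hy : y ∈ C := by simp [hC_eq]
  have hz : z ∈ C := by simp [hC_eq]
  have h_xy := h_short x y z ht
  have h_xz := h_short x z y ht.swap.rotate
  have h_yz := h_short y z x ht.rotate
  have h_incl_excl := h.card_biUnion_add ht
  have h_sum := hb.le_sum
  rw [ht.sum_eq] at h_sum
  have := hb.le x hx
  have := hb.le y hy
  have := hb.le z hz
  have := hb.le_add x hx y hy hxy
  have := hb.le_add x hx z hz hxz
  have := hb.le_add y hy z hz hyz
  omega

end Triples

/-- The set `C` cut into blocks of size one. -/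
def singletons (C : Finset W) : Finset (Finset W) :=
  C.map ⟨singleton, singleton_injective⟩

@[simp]
theorem mem_singletons {C B : Finset W} : B ∈ singletons C ↔ ∃ v ∈ C, {v} = B := by
  simp [singletons]

@[simp]
theorem card_singletons (C : Finset W) : #(singletons C) = #C :=
  card_map _

/-- `D` is a family of subsets of `C` that covers `C`. -/
structure IsBlockCover (C : Finset W) (D : Finset (Finset W)) : Prop where
  subset : ∀ B ∈ D, B ⊆ C
  exists_mem : ∀ v ∈ C, ∃ B ∈ D, v ∈ B

theorem isBlockCover_singletons (C : Finset W) : IsBlockCover C (singletons C) where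
  subset B hB := by
    obtain ⟨v, hv, rfl⟩ := mem_singletons.1 hB
    exact singleton_subset_iff.2 hv
  exists_mem v hv := ⟨{v}, mem_singletons.2 ⟨v, hv, rfl⟩, mem_singleton_self v⟩

section Blocks

variable [DecidableEq α] {L : W → Finset α} {m b : ℕ} {C A : Finset W}

theorem biUnion_commonColours_singletons :
    (singletons C).biUnion (commonColours L) = C.biUnion L := by
  ext x
  simp

theorem pairwiseBound_singletons (h_le : ∀ v ∈ C, m ≤ #(L v))
    (h_union : ∀ u ∈ C, ∀ v ∈ C, u ≠ v → m + b ≤ #(L u ∪ L v)) :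
    PairwiseBound (commonColours L) m b (singletons C) where
  le_card B hB := by
    obtain ⟨v, hv, rfl⟩ := mem_singletons.1 hB
    rw [commonColours_singleton]
    exact h_le v hv
  le_card_union B hB B' hB' hne := by
    obtain ⟨u, hu, rfl⟩ := mem_singletons.1 hB
    obtain ⟨v, hv, rfl⟩ := mem_singletons.1 hB'
    rw [commonColours_singleton, commonColours_singleton]
    exact h_union u hu v hv (ne_of_apply_ne singleton hne)

theorem Staircase.singletons (h : Staircase (fun v => #(L v)) b A) :
    Staircase (fun B => #(commonColours L B)) b (singletons A) :=
  h.map _ fun v _ => by simp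

theorem Mergeable.exists_isBlockCover [DecidableEq W] (h : Mergeable L m b C) :
    ∃ D, IsBlockCover C D ∧ #D ≤ 2 ∧ PairwiseBound (commonColours L) m b D := by
  obtain ⟨x, y, z, ⟨-, -, -, rfl⟩, hxy, hz, h_union⟩ := h
  refine ⟨{{x, y}, {z}}, ⟨?_, ?_⟩, card_le_two, ⟨?_, ?_⟩⟩
  · simp [insert_subset_iff]
  · simp
  · simp [hxy, hz]
  · have h_union' := h_union
    rw [union_comm] at h_union'
    simp [h_union, h_union']

end Blocks

section Colouring

variable [DecidableEq W] [DecidableEq α] {G : SimpleGraph W} {L : W → Finset α} {A S : Finset W}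
  {𝒞 : Finset (Finset W)} {C : Finset W} {x y z : W}

theorem exists_mergeable_families (hf : Feasible (fun v => #(L v)) A S 𝒞)
    (h_irr : ∀ C ∈ 𝒞, IsIrreducibleTriple L (#𝒞 + #A) C) :
    ∃ U ⊆ 𝒞, ∃ H ⊆ 𝒞, Disjoint U H ∧
      (∀ C ∈ U, ¬ Mergeable L #𝒞 (#𝒞 + #A) C ∧ 2 * #𝒞 + #A + #S + #U ≤ #(C.biUnion L)) ∧
      (∀ C ∈ H, Mergeable L #H (#𝒞 + #A) C) ∧
      ∀ C ∈ 𝒞, C ∉ U → C ∉ H → Mergeable L #𝒞 (#𝒞 + #A) C := by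
  classical
  set N : Finset (Finset W) := {C ∈ 𝒞 | ¬ Mergeable L #𝒞 (#𝒞 + #A) C}
  have hN : N ⊆ 𝒞 := filter_subset _ _
  obtain ⟨U, hUN, hU_large, hU_small⟩ :=
    exists_subset_threshold N (fun C => #(C.biUnion L)) (2 * #𝒞 + #A + #S)
  have h_card : #U + #(N \ U) ≤ #𝒞 := by
    rw [add_comm, card_sdiff_add_card_eq_card hUN]
    exact card_le_card hN
  refine ⟨U, hUN.trans hN, N \ U, sdiff_subset.trans hN, disjoint_sdiff,
    fun C hC => ⟨(mem_filter.1 (hUN hC)).2, hU_large C hC⟩, fun C hCH => ?_,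
    fun C hC hCU hCH => ?_⟩
  · obtain ⟨hCN, hCU⟩ := mem_sdiff.1 hCH
    exact (h_irr C (hN hCN)).mergeable_of_card_biUnion_le (hf.tripleBound C (hN hCN))
      (hf.card_eq_three C (hN hCN)) (card_pos.2 ⟨C, hCH⟩) h_card (hU_small C hCN hCU)
  · by_contra h_not
    exact hCH (mem_sdiff.2 ⟨mem_filter.2 ⟨hC, h_not⟩, hCU⟩)

theorem exists_block_families (hf : Feasible (fun v => #(L v)) A S 𝒞)
    (h_irr : ∀ C ∈ 𝒞, IsIrreducibleTriple L (#𝒞 + #A) C) :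
    ∃ U ⊆ 𝒞, ∃ H ⊆ 𝒞, ∃ D : Finset W → Finset (Finset W),
      (∀ C ∈ 𝒞, IsBlockCover C (D C)) ∧
      (∀ C ∈ U, #(D C) ≤ 3 ∧ 2 * #𝒞 + #A + #S + #U ≤ #((D C).biUnion (commonColours L))) ∧
      (∀ C ∈ 𝒞, C ∉ U → #(D C) ≤ 2) ∧
      (∀ C ∈ 𝒞, C ∉ H → PairwiseBound (commonColours L) #𝒞 (#𝒞 + #A) (D C)) ∧
      ∀ C ∈ H, PairwiseBound (commonColours L) #H (#𝒞 + #A) (D C) := by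
  obtain ⟨U, hU, H, hH, h_disj, hU_large, hH_merge, h_merge⟩ := exists_mergeable_families hf h_irr
  have h_split : ∀ C ∈ 𝒞, C ∉ U → ∃ D, IsBlockCover C D ∧ #D ≤ 2 ∧
      PairwiseBound (commonColours L) (if C ∈ H then #H else #𝒞) (#𝒞 + #A) D := by
    intro C hC hCU
    split_ifs with hCH
    exacts [(hH_merge C hCH).exists_isBlockCover, (h_merge C hC hCU hCH).exists_isBlockCover]
  choose! M hM_cover hM_card hM_bound using h_split
  refine ⟨U, hU, H, hH, fun C => if C ∈ U then singletons C else M C, fun C hC => ?_,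
    fun C hCU => ?_, fun C hC hCU => ?_, fun C hC hCH => ?_, fun C hCH => ?_⟩ <;> beta_reduce
  · split_ifs with hCU
    exacts [isBlockCover_singletons C, hM_cover C hC hCU]
  · rw [if_pos hCU, biUnion_commonColours_singletons, card_singletons]
    exact ⟨(hf.card_eq_three C (hU hCU)).le, (hU_large C hCU).2⟩
  · rw [if_neg hCU]
    exact hM_card C hC hCU
  · split_ifs with hCU
    · exact pairwiseBound_singletons (hf.tripleBound C hC).le fun u hu v hv huv =>
        (h_irr C hC).le_card_union_of_not_mergeable (hf.tripleBound C hC)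
          (hf.card_eq_three C hC) (hU_large C hCU).1 hu hv huv
    · simpa only [hCH, if_false] using hM_bound C hC hCU
  · have hCU : C ∉ U := disjoint_right.1 h_disj hCH
    rw [if_neg hCU]
    simpa only [hCH, if_true] using hM_bound C (hH hCH) hCU

theorem listColourableOn_of_irreducible [Nonempty α] (hf : Feasible (fun v => #(L v)) A S 𝒞)
    (h_irr : ∀ C ∈ 𝒞, IsIrreducibleTriple L (#𝒞 + #A) C)
    (h_indep : ∀ C ∈ 𝒞, G.IsIndepSet (C : Set W)) :
    ListColourableOn G L (A ∪ S ∪ 𝒞.biUnion id) := by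
  obtain ⟨U, hU, H, hH, D, hD_cover, hD_U, hD_two, hD_bound, hD_boundH⟩ :=
    exists_block_families hf h_irr
  refine listColourableOn_of_hall (𝓑 := singletons A ∪ singletons S ∪ 𝒞.biUnion D) ?_ ?_ ?_
  · intro B hB
    rw [mem_union, mem_union, mem_biUnion, mem_singletons, mem_singletons] at hB
    rcases hB with (⟨v, -, rfl⟩ | ⟨v, -, rfl⟩) | ⟨C, hC, hBD⟩
    · simp
    · simp
    · exact (h_indep C hC).mono (coe_subset.2 ((hD_cover C hC).subset B hBD))
  · intro v hv
    rw [mem_union, mem_union, mem_biUnion] at hv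
    rcases hv with (hv | hv) | ⟨C, hC, hv⟩
    · exact ⟨{v}, by simp [hv], mem_singleton_self v⟩
    · exact ⟨{v}, by simp [hv], mem_singleton_self v⟩
    · obtain ⟨B, hB, hvB⟩ := (hD_cover C hC).exists_mem v hv
      exact ⟨B, mem_union_right _ (mem_biUnion.2 ⟨C, hC, hB⟩), hvB⟩
  · intro X hX
    have hS := hf.staircase_S.singletons
    rw [← card_singletons A] at hS hD_bound hD_boundH
    simp only [← card_singletons A, ← card_singletons S] at hD_U
    exact card_le_card_biUnion_of_bounds hf.staircase_A.singletons hS hU hH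
      (fun C hC => (hD_U C hC).1) (fun C hC => (hD_U C hC).2) hD_two hD_bound hD_boundH hX

/-- Some colour `c` can be given to a set `D` of vertices of a triple `C ∈ 𝒞` such that, after
moving the rest of `C` to `A` or `S`, the conditions hold again for the remaining lists. -/
def Reducible (L : W → Finset α) (A S : Finset W) (𝒞 : Finset (Finset W)) : Prop :=
  ∃ C ∈ 𝒞, ∃ c, ∃ D ⊆ C, (∀ v ∈ D, c ∈ L v) ∧ ∃ A' S' : Finset W,
    A ∪ S ∪ C ⊆ D ∪ (A' ∪ S') ∧ Feasible (fun v => #((L v).erase c)) A' S' (𝒞.erase C)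

theorem Feasible.reducible_of_forall_mem (hf : Feasible (fun v => #(L v)) A S 𝒞) {c : α}
    (hC : C ∈ 𝒞) (hc : ∀ v ∈ C, c ∈ L v) : Reducible L A S 𝒞 :=
  ⟨C, hC, c, C, Subset.rfl, hc, A, S, (union_comm _ _).subset,
    hf.erase hC fun _ => card_le_card_erase_add_one _ c⟩

theorem Feasible.reducible_of_le_card (hf : Feasible (fun v => #(L v)) A S 𝒞)
    (h_free : ∀ c, ∃ v ∈ C, c ∉ L v) (hC : C ∈ 𝒞) (ht : IsTriple C x y z)
    (hne : (L x ∩ L y).Nonempty) (hz : 2 * #𝒞 + #A + #S ≤ #(L z) + 1) :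
    Reducible L A S 𝒞 := by
  obtain ⟨c, hc⟩ := hne
  have hcz := disjoint_left.1 (disjoint_of_forall_exists_notMem h_free ht) hc
  rw [mem_inter] at hc
  refine ⟨C, hC, c, {x, y}, by simp [ht.eq, insert_subset_iff], by simp [hc], A, insert z S, ?_,
    hf.move_S hC (fun _ => card_le_card_erase_add_one _ c) (by rwa [erase_eq_of_notMem hcz])⟩
  rw [ht.eq]
  grind

theorem Feasible.reducible_of_forall_card_lt (hf : Feasible (fun v => #(L v)) A S 𝒞)
    (h_free : ∀ C ∈ 𝒞, ∀ c, ∃ v ∈ C, c ∉ L v)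
    (h_lt : ∀ C ∈ 𝒞, ∀ x y z, IsTriple C x y z → (L x ∩ L y).Nonempty →
      #(L z) + 1 < 2 * #𝒞 + #A + #S)
    (hC : C ∈ 𝒞) (ht : IsTriple C x y z) (hne : (L x ∩ L y).Nonempty)
    (hz : #𝒞 + #A ≤ #(L z)) : Reducible L A S 𝒞 := by
  obtain ⟨c, hc⟩ := hne
  have hcz := disjoint_left.1 (disjoint_of_forall_exists_notMem (h_free C hC) ht) hc
  rw [mem_inter] at hc
  have h_erase : ∀ v, #(L v) ≤ #((L v).erase c) + 1 := fun v => card_le_card_erase_add_one _ c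
  have h_add : ∀ C' ∈ 𝒞, ∀ u ∈ C', ∀ v ∈ C', u ≠ v →
      2 * #𝒞 + #A ≤ #((L u).erase c) + #((L v).erase c) + 1 := by
    intro C' hC' u hu v hv huv
    have h_pair := (hf.tripleBound C' hC').le_add u hu v hv huv
    by_cases hcu : c ∈ L u
    · by_cases hcv : c ∈ L v
      · obtain ⟨w, ht'⟩ := exists_isTriple (hf.card_eq_three C' hC') hu hv huv
        have h_sum := (hf.tripleBound C' hC').le_sum
        rw [ht'.sum_eq] at h_sum
        have := h_lt C' hC' u v w ht' ⟨c, mem_inter.2 ⟨hcu, hcv⟩⟩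
        have := h_erase u
        have := h_erase v
        omega
      · rw [erase_eq_of_notMem hcv]
        have := h_erase u
        omega
    · rw [erase_eq_of_notMem hcu]
      have := h_erase v
      omega
  refine ⟨C, hC, c, {x, y}, by simp [ht.eq, insert_subset_iff], by simp [hc], insert z A, S, ?_,
    hf.move_A hC h_erase (by rwa [erase_eq_of_notMem hcz]) h_add fun C' hC' =>
      sum_card_le_sum_card_erase_add_two (hf.card_eq_three C' hC') (h_free C' hC' c)⟩
  rw [ht.eq]
  grind

theorem Feasible.reducible_or_isIrreducibleTriple (hf : Feasible (fun v => #(L v)) A S 𝒞) :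
    Reducible L A S 𝒞 ∨ ∀ C ∈ 𝒞, IsIrreducibleTriple L (#𝒞 + #A) C := by
  by_contra! ⟨h_not, h_irr⟩
  have h_free : ∀ C ∈ 𝒞, ∀ c, ∃ v ∈ C, c ∉ L v := by
    intro C hC c
    by_contra! h_mem
    exact h_not (hf.reducible_of_forall_mem hC h_mem)
  have h_lt : ∀ C ∈ 𝒞, ∀ x y z, IsTriple C x y z → (L x ∩ L y).Nonempty →
      #(L z) + 1 < 2 * #𝒞 + #A + #S := by
    intro C hC x y z ht hne
    by_contra! hz
    exact h_not (hf.reducible_of_le_card (h_free C hC) hC ht hne hz)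
  obtain ⟨C, hC, hC_not⟩ := h_irr
  refine hC_not ⟨h_free C hC, fun x y z ht hne => ?_⟩
  by_contra! hz
  exact h_not (hf.reducible_of_forall_card_lt h_free h_lt hC ht hne hz)

end Colouring

theorem Feasible.listColourableOn [DecidableEq W] [Nonempty α] {G : SimpleGraph W}
    {L : W → Finset α} {A S : Finset W} {𝒞 : Finset (Finset W)}
    (hf : Feasible (fun v => #(L v)) A S 𝒞)
    (h_indep : ∀ C ∈ 𝒞, G.IsIndepSet (C : Set W)) :
    ListColourableOn G L (A ∪ S ∪ 𝒞.biUnion id) := by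
  classical
  induction 𝒞 using Finset.strongInduction generalizing L A S with
  | H 𝒞 ih =>
  rcases hf.reducible_or_isIrreducibleTriple with h_red | h_irr
  · obtain ⟨C, hC, c, D, hDC, hcD, A', S', h_cover, hf'⟩ := h_red
    have h_rest := ih _ (erase_ssubset hC) hf' fun C' hC' => h_indep C' (mem_of_mem_erase hC')
    refine h_rest.of_erase ((h_indep C hC).mono (coe_subset.2 hDC)) hcD ?_
    calc A ∪ S ∪ 𝒞.biUnion id = A ∪ S ∪ C ∪ (𝒞.erase C).biUnion id := by
          rw [← insert_erase hC, biUnion_insert, id, erase_insert_eq_erase, union_assoc _ C]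
          simp
      _ ⊆ D ∪ (A' ∪ S' ∪ (𝒞.erase C).biUnion id) := by
          rw [← union_assoc]
          exact union_subset_union_left h_cover
  · exact listColourableOn_of_irreducible hf h_irr h_indep

theorem Feasible.choosable {V' : Type} [DecidableEq V'] {G : SimpleGraph V'} {f : V' → ℕ}
    {A S : Finset V'} {𝒞 : Finset (Finset V')} (hf : Feasible f A S 𝒞)
    (h_indep : ∀ C ∈ 𝒞, G.IsIndepSet (C : Set V'))
    (h_cover : ∀ v, v ∈ A ∪ S ∪ 𝒞.biUnion id) : Choosable G f := by
  intro L hL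
  obtain rfl : (fun v => #(L v)) = f := funext hL
  obtain ⟨c, hc_mem, hc_adj⟩ := hf.listColourableOn h_indep
  exact ⟨c, fun v => hc_mem v (h_cover v), fun u v => hc_adj u (h_cover u) v (h_cover v)⟩

theorem feasible_of_indexed_parts [DecidableEq W] {k₁ s k₃ : ℕ} {f : W → ℕ}
    {A : Fin k₁ → Finset W} {S : Fin s → Finset W} {C : Fin k₃ → Finset W}
    (hA : ∀ i, #(A i) ≤ 1) (hS : ∀ i, #(S i) ≤ 1) (hC : ∀ i, #(C i) = 3)
    (hfA : ∀ i, ∀ v ∈ A i, k₃ + (i + 1) ≤ f v)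
    (hfS : ∀ i, ∀ v ∈ S i, 2 * k₃ + k₁ + (i + 1) ≤ f v)
    (hfC : ∀ i, TripleBound f k₃ k₁ s (C i)) :
    Feasible f (univ.biUnion A) (univ.biUnion S) (univ.image C) := by
  have h_card : ∀ {n : ℕ} (B : Fin n → Finset W), (∀ i, #(B i) ≤ 1) → #(univ.biUnion B) ≤ n :=
    fun {n} B hB => by simpa using card_biUnion_le_card_mul univ B 1 fun i _ => hB i
  have hk₁ := h_card A hA
  have hs := h_card S hS
  have hk₃ : #(univ.image C) ≤ k₃ := by simpa using card_image_le (s := univ) (f := C)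
  refine ⟨(Staircase.biUnion_fin hA hfA).of_shift fun v _ => by omega,
    (Staircase.biUnion_fin hS hfS).of_shift fun v _ => by omega, fun D hD => ?_, fun D hD => ?_⟩
  all_goals obtain ⟨i, -, rfl⟩ := mem_image.1 hD
  exacts [hC i, (hfC i).mono hk₃ hk₁ hs]

theorem choosable_of_technical_conditions_general {V' : Type} {k₁ s k₃ : ℕ}
    {G : SimpleGraph V'} {f : V' → ℕ}
    {A : Fin k₁ → Finset V'} {S : Fin s → Finset V'} {C : Fin k₃ → Finset V'}
    (h_cover : ∀ v, (∃ i, v ∈ A i) ∨ (∃ i, v ∈ S i) ∨ ∃ i, v ∈ C i)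
    (hA : ∀ i, #(A i) ≤ 1) (hS : ∀ i, #(S i) ≤ 1) (hC : ∀ i, #(C i) = 3)
    (h_indep : ∀ i, G.IsIndepSet (C i : Set V'))
    (hfA : ∀ i, ∀ v ∈ A i, k₃ + (i + 1) ≤ f v)
    (hfS : ∀ i, ∀ v ∈ S i, 2 * k₃ + k₁ + (i + 1) ≤ f v)
    (hfC : ∀ i, TripleBound f k₃ k₁ s (C i)) : Choosable G f := by
  classical
  refine (feasible_of_indexed_parts hA hS hC hfA hfS hfC).choosable ?_ fun v => ?_
  · simpa using h_indep
  · simpa [or_assoc] using h_cover v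

end

open Finset in
/-- The off-line technical lemma.  `G` is a complete multipartite graph whose parts are
the fibres of `P`, labelled by `Fin k₁ ⊕ Fin s ⊕ Fin k₃`: the ordered classes
`𝒜 = (A₁,…,A_{k₁})` and `𝒮 = (S₁,…,S_s)` consist of parts of size 1 and `𝒞` consists of
all parts of size 3.  (`Fin` is 0-indexed, so the `i`-th part of the 1-indexed statement
corresponds to the index `i` with value `(i : ℕ) + 1`.)  Under conditions (1), (1'),
(3.1), (3.2), (3.3) on `f`, the graph `G` is `f`-choosable. -/
theorem choosable_of_technical_conditions
    (k₁ s k₃ : ℕ)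
    (P : V → Fin k₁ ⊕ Fin s ⊕ Fin k₃)
    (G : SimpleGraph V)
    (hAdj : ∀ u v, G.Adj u v ↔ P u ≠ P v)
    (hA : ∀ i : Fin k₁, (univ.filter fun v => P v = Sum.inl i).card = 1)
    (hS : ∀ i : Fin s, (univ.filter fun v => P v = Sum.inr (Sum.inl i)).card = 1)
    (hC : ∀ i : Fin k₃, (univ.filter fun v => P v = Sum.inr (Sum.inr i)).card = 3)
    (f : V → ℕ)
    (h1 : ∀ i : Fin k₁, ∀ v, P v = Sum.inl i → k₃ + ((i : ℕ) + 1) ≤ f v)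
    (h1' : ∀ i : Fin s, ∀ v, P v = Sum.inr (Sum.inl i) →
      2 * k₃ + k₁ + ((i : ℕ) + 1) ≤ f v)
    (h31 : ∀ i : Fin k₃, ∀ v, P v = Sum.inr (Sum.inr i) → k₃ ≤ f v)
    (h32 : ∀ i : Fin k₃, ∀ u v, P u = Sum.inr (Sum.inr i) → P v = Sum.inr (Sum.inr i) →
      u ≠ v → 2 * k₃ + k₁ ≤ f u + f v)
    (h33 : ∀ i : Fin k₃,
      4 * k₃ + 2 * k₁ + s - 1 ≤ ∑ v ∈ univ.filter (fun v => P v = Sum.inr (Sum.inr i)), f v) :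
    Choosable G f := by
  refine choosable_of_technical_conditions_general
    (fun v => by rcases h : P v with i | i | i <;> simp [h]) (fun i => (hA i).le)
    (fun i => (hS i).le) hC (fun i u hu v hv _ huv => ?_) (by simpa using h1)
    (by simpa using h1') fun i => ⟨by simpa using h31 i, fun u hu v hv => ?_, ?_⟩
  · exact (hAdj u v).1 huv ((mem_filter.1 hu).2.trans (mem_filter.1 hv).2.symm)
  · exact h32 i u v (mem_filter.1 hu).2 (mem_filter.1 hv).2
  · exact Nat.sub_le_iff_le_add.1 (h33 i)
end
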